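/- Let p be a prime with p ≡ 1, 7, 17, or 23 (mod 24). If p ≡ 1 or 7 (mod 24), then there are integers x, y with p = x^2 + 6y^2, and for any such x, Σ_{n=0}^{p-1} A_n · (-8)^{-n} ≡ 4x^2 (mod p). If p ≡ 17 or 23 (mod 24), then Σ_{n=0}^{p-1} A_n · (-8)^{-n} ≡ 0 (mod p). -/

import Mathlib

open Finset

/-- `A n = ∑_{k=0}^{n} C(2k,k)·C(2n-2k,n-k)·C(n,k)^2`. -/
def A (n : ℕ) : ℕ :=
  ∑ k ∈ Finset.range (n + 1),
    Nat.choose (2 * k) k * Nat.choose (2 * n - 2 * k) (n - k) * Nat.choose n k ^ 2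

namespace DS
open Polynomial

/-- homogeneous forms of the addition/subtraction map on x-coordinates -/
def T0 {R : Type*} [CommRing R] (a b c d : R) : R := (a * d - b * c) ^ 2
def T1 {R : Type*} [CommRing R] (A B a b c d : R) : R :=
  2 * ((a * c + A * (b * d)) * (a * d + b * c) + 2 * B * (b ^ 2 * d ^ 2))
def T2 {R : Type*} [CommRing R] (A B a b c d : R) : R :=
  (a * c - A * (b * d)) ^ 2 - 4 * B * (b * d) * (a * d + b * c)

theorem T_ne {F : Type*} [Field F] (A B a b c d : F) (h2 : (2 : F) ≠ 0)
    (hD : 4 * A ^ 3 + 27 * B ^ 2 ≠ 0)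
    (hab : ¬ (a = 0 ∧ b = 0)) (hcd : ¬ (c = 0 ∧ d = 0))
    (h0 : T0 a b c d = 0) (h1 : T1 A B a b c d = 0) (h3 : T2 A B a b c d = 0) : False := by
  unfold T0 at h0
  unfold T1 at h1
  unfold T2 at h3
  have h0' : a * d = b * c := by
    have := pow_eq_zero_iff (two_ne_zero) |>.1 h0
    linear_combination this
  by_cases hb : b = 0
  · subst hb
    have ha : a ≠ 0 := fun h => hab ⟨h, rfl⟩
    have hd : d = 0 := by
      have : a * d = 0 := by rw [h0']; ring
      exact (mul_eq_zero.1 this).resolve_left ha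
    subst hd
    have hc : c ≠ 0 := fun h => hcd ⟨h, rfl⟩
    apply mul_ne_zero ha hc
    have : (a * c) ^ 2 = 0 := by linear_combination h3
    exact pow_eq_zero_iff (two_ne_zero) |>.1 this
  by_cases hd : d = 0
  · subst hd
    have hc : c ≠ 0 := fun h => hcd ⟨h, rfl⟩
    have : b * c = 0 := by rw [← h0']; ring
    exact (mul_ne_zero hb hc) this
  obtain ⟨x, rfl⟩ : ∃ x, a = x * b := ⟨a / b, by field_simp⟩
  have hc : c = x * d := by
    apply mul_left_cancel₀ hb
    rw [← h0']; ring
  subst hc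
  have e1 : 4 * (b ^ 2 * d ^ 2) * (x ^ 3 + A * x + B) = 0 := by linear_combination h1
  have e2 : (b ^ 2 * d ^ 2) * ((x ^ 2 - A) ^ 2 - 8 * B * x) = 0 := by linear_combination h3
  have h4 : (4 : F) ≠ 0 := by
    have : (4 : F) = 2 * 2 := by norm_num
    rw [this]; exact mul_ne_zero h2 h2
  have hbd : b ^ 2 * d ^ 2 ≠ 0 := mul_ne_zero (pow_ne_zero _ hb) (pow_ne_zero _ hd)
  have f1 : x ^ 3 + A * x + B = 0 := (mul_eq_zero.1 e1).resolve_left (mul_ne_zero h4 hbd)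
  have f2 := (mul_eq_zero.1 e2).resolve_left hbd
  have f3 : (3 * x ^ 2 + A) ^ 2 = 0 := by linear_combination f2 + 8 * x * f1
  have f4 : 3 * x ^ 2 + A = 0 := pow_eq_zero_iff (two_ne_zero) |>.1 f3
  apply hD
  have hA : A = -3 * x ^ 2 := by linear_combination f4
  have hB : B = 2 * x ^ 3 := by linear_combination f1 - x * hA
  rw [hA, hB]; ring

theorem S_ne {F : Type*} [Field F] (u v w z : F)
    (huv : ¬ (u = 0 ∧ v = 0)) (hwz : ¬ (w = 0 ∧ z = 0))
    (h0 : v * z = 0) (h1 : u * z + v * w = 0) (h2 : u * w = 0) : False := by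
  rcases mul_eq_zero.1 h0 with h | h <;> rcases mul_eq_zero.1 h2 with h' | h' <;> simp_all

/-- degree bound together with the coefficient in that degree -/
def HC {k : Type*} [Field k] (P : k[X]) (n : ℕ) (c : k) : Prop := P.natDegree ≤ n ∧ P.coeff n = c

section HC
variable {k : Type*} [Field k] {P Q : k[X]} {n m : ℕ} {c d : k}
theorem HC.add (h : HC P n c) (h' : HC Q n d) : HC (P + Q) n (c + d) :=
  ⟨natDegree_add_le_of_degree_le h.1 h'.1, by rw [coeff_add, h.2, h'.2]⟩
theorem HC.sub (h : HC P n c) (h' : HC Q n d) : HC (P - Q) n (c - d) :=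
  ⟨natDegree_sub_le_of_le h.1 h'.1 |>.trans (by simp), by rw [coeff_sub, h.2, h'.2]⟩
theorem HC.mul (h : HC P n c) (h' : HC Q m d) : HC (P * Q) (n + m) (c * d) :=
  ⟨natDegree_mul_le_of_le h.1 h'.1, by rw [coeff_mul_add_eq_of_natDegree_le h.1 h'.1, h.2, h'.2]⟩
theorem HC.const (a : k) : HC (C a) 0 a := ⟨by simp, by simp⟩
theorem HC.sq (h : HC P n c) : HC (P ^ 2) (2 * n) (c ^ 2) := by
  have := h.mul h
  rw [← two_mul, ← pow_two, ← pow_two] at this; exact this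
theorem HC.cmul (a : k) (h : HC P n c) : HC (C a * P) n (a * c) := by
  have := (HC.const a).mul h
  rwa [zero_add] at this
theorem HC.self (P Q : k[X]) : HC P (max P.natDegree Q.natDegree)
    (P.coeff (max P.natDegree Q.natDegree)) := ⟨le_max_left _ _, rfl⟩
theorem HC.self' (P Q : k[X]) : HC Q (max P.natDegree Q.natDegree)
    (Q.coeff (max P.natDegree Q.natDegree)) := ⟨le_max_right _ _, rfl⟩
theorem lead_ne (h : IsCoprime P Q) : ¬ (P.coeff (max P.natDegree Q.natDegree) = 0 ∧
    Q.coeff (max P.natDegree Q.natDegree) = 0) := by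
  rintro ⟨h1, h2⟩
  have : P = 0 ∧ Q = 0 := by
    rcases le_total P.natDegree Q.natDegree with hl | hl
    · rw [max_eq_right hl] at h1 h2
      have hQ : Q = 0 := leadingCoeff_eq_zero.1 h2
      subst hQ
      simp only [natDegree_zero, nonpos_iff_eq_zero] at hl h1
      refine ⟨?_, rfl⟩
      rw [eq_C_of_natDegree_eq_zero hl, h1, C_0]
    · rw [max_eq_left hl] at h1 h2
      have hQ : P = 0 := leadingCoeff_eq_zero.1 h1
      subst hQ
      simp only [natDegree_zero, nonpos_iff_eq_zero] at hl h2
      refine ⟨rfl, ?_⟩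
      rw [eq_C_of_natDegree_eq_zero hl, h2, C_0]
  obtain ⟨rfl, rfl⟩ := this
  exact not_isCoprime_zero_zero h

theorem HC.T0 {a b c d : k[X]} {a' b' c' d' : k} (ha : HC a n a') (hb : HC b n b')
    (hc : HC c m c') (hd : HC d m d') :
    HC (T0 a b c d) (2 * (n + m)) (DS.T0 a' b' c' d') := by
  unfold DS.T0
  exact ((ha.mul hd).sub (hb.mul hc)).sq
theorem HC.T1 {a b c d : k[X]} {a' b' c' d' A B : k} (ha : HC a n a') (hb : HC b n b')
    (hc : HC c m c') (hd : HC d m d') :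
    HC (T1 (C A) (C B) a b c d) (2 * (n + m)) (DS.T1 A B a' b' c' d') := by
  unfold DS.T1
  have h1 := ((ha.mul hc).add ((hb.mul hd).cmul A)).mul ((ha.mul hd).add (hb.mul hc))
  have h2 := (hb.sq.mul hd.sq).cmul (2 * B)
  have e : 2 * n + 2 * m = 2 * (n + m) := by ring
  have e' : n + m + (n + m) = 2 * (n + m) := by ring
  rw [e] at h2
  rw [e'] at h1
  have := (h1.add h2).cmul 2
  simpa only [map_mul, map_ofNat] using this
theorem HC.T2 {a b c d : k[X]} {a' b' c' d' A B : k} (ha : HC a n a') (hb : HC b n b')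
    (hc : HC c m c') (hd : HC d m d') :
    HC (T2 (C A) (C B) a b c d) (2 * (n + m)) (DS.T2 A B a' b' c' d') := by
  unfold DS.T2
  have h1 := ((ha.mul hc).sub ((hb.mul hd).cmul A)).sq
  have h2 := ((hb.mul hd).cmul (4 * B)).mul ((ha.mul hd).add (hb.mul hc))
  have e' : n + m + (n + m) = 2 * (n + m) := by ring
  rw [e'] at h2
  have := (h1.sub h2)
  simpa only [map_mul, map_ofNat] using this
end HC

/-- unimodularity via residue fields -/
theorem exists_bezout {R : Type*} [CommRing R] (x y z : R)
    (h : ∀ m : Ideal R, m.IsMaximal → ¬ (x ∈ m ∧ y ∈ m ∧ z ∈ m)) :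
    ∃ p q r, p * x + q * y + r * z = 1 := by
  by_contra hc
  have hne : Ideal.span {x, y, z} ≠ (⊤ : Ideal R) := by
    intro ht
    apply hc
    have : (1 : R) ∈ Ideal.span {x, y, z} := by rw [ht]; trivial
    rw [Ideal.mem_span_insert] at this
    obtain ⟨p, w, hw, e⟩ := this
    rw [Ideal.mem_span_pair] at hw
    obtain ⟨q, r, e'⟩ := hw
    exact ⟨p, q, r, by rw [e, ← e']; ring⟩
  obtain ⟨m, hm, hle⟩ := Ideal.exists_le_maximal _ hne
  refine h m hm ⟨hle ?_, hle ?_, hle ?_⟩ <;> apply Ideal.subset_span <;> simp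

theorem coprime_quot {R : Type*} [CommRing R] {u v : R} (h : IsCoprime u v) (m : Ideal R)
    (hm : m.IsMaximal) : ¬ (Ideal.Quotient.mk m u = 0 ∧ Ideal.Quotient.mk m v = 0) := by
  rintro ⟨h1, h2⟩
  obtain ⟨a, b, e⟩ := h
  rw [Ideal.Quotient.eq_zero_iff_mem] at h1 h2
  apply hm.ne_top
  rw [Ideal.eq_top_iff_one, ← e]
  exact m.add_mem (m.mul_mem_left _ h1) (m.mul_mem_left _ h2)

theorem T_bezout {k : Type*} [Field k] (A B : k) (h2 : (2 : k) ≠ 0)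
    (hD : 4 * A ^ 3 + 27 * B ^ 2 ≠ 0) {a b c d : k[X]} (hab : IsCoprime a b) (hcd : IsCoprime c d) :
    ∃ p q r, p * T0 a b c d + q * T1 (C A) (C B) a b c d + r * T2 (C A) (C B) a b c d = 1 := by
  apply exists_bezout
  rintro m hm ⟨h0, h1, h3⟩
  let _ : Field (k[X] ⧸ m) := Ideal.Quotient.field m
  let φ : k →+* (k[X] ⧸ m) := (Ideal.Quotient.mk m).comp C
  rw [← Ideal.Quotient.eq_zero_iff_mem] at h0 h1 h3
  refine T_ne (φ A) (φ B) (Ideal.Quotient.mk m a) (Ideal.Quotient.mk m b)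
    (Ideal.Quotient.mk m c) (Ideal.Quotient.mk m d) ?_ ?_ (coprime_quot hab m hm)
    (coprime_quot hcd m hm) ?_ ?_ ?_
  · have := (map_ne_zero φ).2 h2
    rwa [map_ofNat] at this
  · have := (map_ne_zero φ).2 hD
    rwa [map_add, map_mul, map_mul, map_pow, map_pow, map_ofNat, map_ofNat] at this
  · rw [← h0]; simp [T0]
  · rw [← h1]; simp only [T1, φ, map_add, map_mul, map_pow, map_ofNat, RingHom.comp_apply]
  · rw [← h3]; simp only [T2, φ, map_add, map_sub, map_mul, map_pow, map_ofNat, RingHom.comp_apply]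

theorem S_bezout {k : Type*} [Field k] {u v w z : k[X]} (huv : IsCoprime u v) (hwz : IsCoprime w z) :
    ∃ p q r, p * (v * z) + q * (u * z + v * w) + r * (u * w) = 1 := by
  apply exists_bezout
  rintro m hm ⟨h0, h1, h3⟩
  let _ : Field (k[X] ⧸ m) := Ideal.Quotient.field m
  rw [← Ideal.Quotient.eq_zero_iff_mem] at h0 h1 h3
  exact S_ne (Ideal.Quotient.mk m u) (Ideal.Quotient.mk m v)
    (Ideal.Quotient.mk m w) (Ideal.Quotient.mk m z) (coprime_quot huv m hm)
    (coprime_quot hwz m hm) (by simpa using h0) (by simpa using h1) (by simpa using h3)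

/-- The core degree statement -/
theorem core {k : Type*} [Field k] (A B : k) (h2 : (2 : k) ≠ 0)
    (hD : 4 * A ^ 3 + 27 * B ^ 2 ≠ 0) {a b c d u v w z : k[X]}
    (hab : IsCoprime a b) (hcd : IsCoprime c d) (huv : IsCoprime u v) (hwz : IsCoprime w z)
    {K : Type*} [Field K] [Algebra k[X] K] [IsFractionRing k[X] K] (κ : K)
    (h0 : algebraMap k[X] K (T0 a b c d) = κ * algebraMap k[X] K (v * z))
    (h1 : algebraMap k[X] K (T1 (C A) (C B) a b c d) = κ * algebraMap k[X] K (u * z + v * w))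
    (h3 : algebraMap k[X] K (T2 (C A) (C B) a b c d) = κ * algebraMap k[X] K (u * w)) :
    max u.natDegree v.natDegree + max w.natDegree z.natDegree =
      2 * max a.natDegree b.natDegree + 2 * max c.natDegree d.natDegree ∧
    (b.coeff (max a.natDegree b.natDegree) = 0 → d.coeff (max c.natDegree d.natDegree) = 0 →
      v.coeff (max u.natDegree v.natDegree) = 0 ∧ z.coeff (max w.natDegree z.natDegree) = 0) := by
  have inj : Function.Injective (algebraMap k[X] K) := IsFractionRing.injective _ _
  obtain ⟨p, q, r, e⟩ := S_bezout huv hwz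
  obtain ⟨p', q', r', e'⟩ := T_bezout A B h2 hD hab hcd
  obtain ⟨g, hg⟩ : ∃ g : k[X], algebraMap k[X] K g = κ := by
    refine ⟨p * T0 a b c d + q * T1 (C A) (C B) a b c d + r * T2 (C A) (C B) a b c d, ?_⟩
    have := congrArg (fun x => κ * algebraMap k[X] K x) e
    simp only [map_add, map_mul, map_one, mul_one] at this h0 h1 h3 ⊢
    rw [h0, h1, h3]; linear_combination this
  subst hg
  rw [← map_mul] at h0 h1 h3
  have h0 := inj h0
  have h1 := inj h1
  have h3 := inj h3
  have hu : IsUnit g := by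
    apply IsUnit.of_mul_eq_one (p' * (v * z) + q' * (u * z + v * w) + r' * (u * w))
    rw [← e', h0, h1, h3]; ring
  obtain ⟨ε, hε, rfl⟩ := Polynomial.isUnit_iff.1 hu
  have hε : ε ≠ 0 := hε.ne_zero
  set M := max a.natDegree b.natDegree with hM
  set N := max c.natDegree d.natDegree with hN
  set M' := max u.natDegree v.natDegree with hM'
  set N' := max w.natDegree z.natDegree with hN'
  have ha := HC.self a b
  have hb := HC.self' a b
  have hc := HC.self c d
  have hd := HC.self' c d
  have hu := HC.self u v
  have hv := HC.self' u v
  have hw := HC.self w z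
  have hz := HC.self' w z
  rw [← hM] at ha hb
  rw [← hN] at hc hd
  rw [← hM'] at hu hv
  rw [← hN'] at hw hz
  have t0 := HC.T0 ha hb hc hd
  have t1 := HC.T1 (A := A) (B := B) ha hb hc hd
  have t2 := HC.T2 (A := A) (B := B) ha hb hc hd
  have s0 := (hv.mul hz).cmul ε
  have s1 := ((hu.mul hz).add (hv.mul hw)).cmul ε
  have s2 := (hu.mul hw).cmul ε
  have nT := T_ne A B _ _ _ _ h2 hD (lead_ne hab) (lead_ne hcd)
  have nS := S_ne _ _ _ _ (lead_ne huv) (lead_ne hwz)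
  rw [← h0] at s0
  rw [← h1] at s1
  rw [← h3] at s2
  have hdeg : M' + N' = 2 * (M + N) := by
    rcases lt_trichotomy (M' + N') (2 * (M + N)) with hl | hl | hl
    · exfalso
      apply nT
      · rw [← t0.2]; exact coeff_eq_zero_of_natDegree_lt (s0.1.trans_lt hl)
      · rw [← t1.2]; exact coeff_eq_zero_of_natDegree_lt (s1.1.trans_lt hl)
      · rw [← t2.2]; exact coeff_eq_zero_of_natDegree_lt (s2.1.trans_lt hl)
    · exact hl
    · exfalso
      have z0 := s0.2.symm.trans (coeff_eq_zero_of_natDegree_lt (t0.1.trans_lt hl))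
      have z1 := s1.2.symm.trans (coeff_eq_zero_of_natDegree_lt (t1.1.trans_lt hl))
      have z2 := s2.2.symm.trans (coeff_eq_zero_of_natDegree_lt (t2.1.trans_lt hl))
      exact nS ((mul_eq_zero.1 z0).resolve_left hε) ((mul_eq_zero.1 z1).resolve_left hε)
        ((mul_eq_zero.1 z2).resolve_left hε)
  refine ⟨by rw [hdeg]; ring, ?_⟩
  intro b0 d0
  rw [hdeg] at s0 s1 s2
  have z0 := s0.2.symm.trans t0.2
  have z1 := s1.2.symm.trans t1.2
  have z2 := s2.2.symm.trans t2.2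
  have la := lead_ne hab
  have lc := lead_ne hcd
  have lu := lead_ne huv
  have lw := lead_ne hwz
  rw [← hM, b0] at la
  rw [← hN, d0] at lc
  rw [← hM'] at lu
  rw [← hN'] at lw
  have la : a.coeff M ≠ 0 := fun h => la ⟨h, rfl⟩
  have lc : c.coeff N ≠ 0 := fun h => lc ⟨h, rfl⟩
  simp only [T0, T1, T2, b0, d0] at z0 z1 z2
  have y0 : v.coeff M' * z.coeff N' = 0 :=
    (mul_eq_zero.1 (z0.trans (by ring))).resolve_left hε
  have y1 : u.coeff M' * z.coeff N' + v.coeff M' * w.coeff N' = 0 :=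
    (mul_eq_zero.1 (z1.trans (by ring))).resolve_left hε
  have y2 : u.coeff M' * w.coeff N' ≠ 0 := by
    intro h
    rw [h] at z2
    have : (a.coeff M * c.coeff N) ^ 2 = 0 := by linear_combination -z2
    exact mul_ne_zero la lc (pow_eq_zero_iff two_ne_zero |>.1 this)
  have yu := left_ne_zero_of_mul y2
  have yw := right_ne_zero_of_mul y2
  have yv : v.coeff M' = 0 := by
    rcases mul_eq_zero.1 y0 with h | h
    · exact h
    · rw [h, mul_zero, zero_add] at y1
      exact (mul_eq_zero.1 y1).resolve_right yw
  have yz : z.coeff N' = 0 := by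
    rw [yv, zero_mul, add_zero] at y1
    exact (mul_eq_zero.1 y1).resolve_left yu
  exact ⟨yv, yz⟩
end DS

namespace DS
open Polynomial WeierstrassCurve

/-- short Weierstrass curve -/
def Wc {F : Type*} [Field F] (a b : F) : WeierstrassCurve.Affine F := ⟨0, 0, 0, a, b⟩

section
variable {F : Type*} [Field F] [DecidableEq F] {a b : F}

theorem Wc_eqn {x y : F} (h : (Wc a b).Nonsingular x y) : y ^ 2 = x ^ 3 + a * x + b := by
  have := h.1
  rw [Affine.equation_iff] at this
  simp only [Wc] at this
  linear_combination this

theorem Wc_negY (x y : F) : (Wc a b).negY x y = -y := by simp [Affine.negY, Wc]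

theorem Wc_neg {x y : F} (h : (Wc a b).Nonsingular x y) :
    ∃ h', -(Affine.Point.some x y h) = Affine.Point.some x (-y) h' := by
  rw [Affine.Point.neg_some]
  have := Wc_negY (a := a) (b := b) x y
  refine ⟨?_, ?_⟩
  · rw [← this]; exact (Affine.nonsingular_neg ..).2 h
  · congr

theorem Wc_add {x₁ y₁ x₂ y₂ : F} (h₁ : (Wc a b).Nonsingular x₁ y₁)
    (h₂ : (Wc a b).Nonsingular x₂ y₂) (hx : x₁ ≠ x₂) :
    ∃ h', (Affine.Point.some x₁ y₁ h₁) + (Affine.Point.some x₂ y₂ h₂) =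
      Affine.Point.some (((y₁ - y₂) / (x₁ - x₂)) ^ 2 - x₁ - x₂)
        (-(((y₁ - y₂) / (x₁ - x₂)) * ((((y₁ - y₂) / (x₁ - x₂)) ^ 2 - x₁ - x₂) - x₁) + y₁)) h' := by
  have hs := Affine.slope_of_X_ne (W := Wc a b) (y₁ := y₁) (y₂ := y₂) hx
  have e := Affine.Point.add_of_X_ne (h₁ := h₁) (h₂ := h₂) hx
  have e1 : (Wc a b).addX x₁ x₂ ((Wc a b).slope x₁ x₂ y₁ y₂) =
      ((y₁ - y₂) / (x₁ - x₂)) ^ 2 - x₁ - x₂ := by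
    rw [hs]; simp only [Affine.addX, Wc]; ring
  have e2 : (Wc a b).addY x₁ x₂ y₁ ((Wc a b).slope x₁ x₂ y₁ y₂) =
      (-(((y₁ - y₂) / (x₁ - x₂)) * ((((y₁ - y₂) / (x₁ - x₂)) ^ 2 - x₁ - x₂) - x₁) + y₁)) := by
    rw [Affine.addY, Wc_negY, Affine.negAddY, e1, hs]
  rw [e]
  refine ⟨?_, ?_⟩
  · rw [← e2, ← e1]
    exact Affine.nonsingular_add h₁ h₂ (fun h => hx h.1)
  · congr

theorem Wc_dbl {x y : F} (h : (Wc a b).Nonsingular x y) (hy : y ≠ 0) (h2 : (2 : F) ≠ 0) :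
    ∃ h', (Affine.Point.some x y h) + (Affine.Point.some x y h) =
      Affine.Point.some (((3 * x ^ 2 + a) / (2 * y)) ^ 2 - x - x)
        (-(((3 * x ^ 2 + a) / (2 * y)) * ((((3 * x ^ 2 + a) / (2 * y)) ^ 2 - x - x) - x) + y)) h' := by
  have hne : y ≠ (Wc a b).negY x y := by
    rw [Wc_negY]
    intro hh
    have : 2 * y = 0 := by linear_combination hh
    exact mul_ne_zero h2 hy this
  have hs := Affine.slope_of_Y_ne (W := Wc a b) (x₁ := x) (x₂ := x) rfl hne
  have e := Affine.Point.add_self_of_Y_ne (h₁ := h) hne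
  have hs' : (Wc a b).slope x x y y = (3 * x ^ 2 + a) / (2 * y) := by
    rw [hs, Wc_negY]; simp only [Wc]; congr 1 <;> ring
  have e1 : (Wc a b).addX x x ((Wc a b).slope x x y y) =
      ((3 * x ^ 2 + a) / (2 * y)) ^ 2 - x - x := by
    rw [hs']; simp only [Affine.addX, Wc]; ring
  have e2 : (Wc a b).addY x x y ((Wc a b).slope x x y y) =
      (-(((3 * x ^ 2 + a) / (2 * y)) * ((((3 * x ^ 2 + a) / (2 * y)) ^ 2 - x - x) - x) + y)) := by
    rw [Affine.addY, Wc_negY, Affine.negAddY, e1, hs']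
  rw [e]
  refine ⟨?_, ?_⟩
  · rw [← e2, ← e1]
    exact Affine.nonsingular_add h h (fun h => hne h.2)
  · congr

theorem Wc_dbl0 {x y : F} (h : (Wc a b).Nonsingular x y) (hy : y = 0) :
    (Affine.Point.some x y h) + (Affine.Point.some x y h) = 0 := by
  apply Affine.Point.add_self_of_Y_eq
  rw [Wc_negY, hy, neg_zero]

def PS (a b : F) (P Q : (Wc a b).Point) : Prop :=
  ∃ κ : F, T0 (P.xRep 0) (P.xRep 1) (Q.xRep 0) (Q.xRep 1) = κ * ((P + Q).xRep 1 * (P - Q).xRep 1) ∧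
    T1 a b (P.xRep 0) (P.xRep 1) (Q.xRep 0) (Q.xRep 1) =
      κ * ((P + Q).xRep 0 * (P - Q).xRep 1 + (P + Q).xRep 1 * (P - Q).xRep 0) ∧
    T2 a b (P.xRep 0) (P.xRep 1) (Q.xRep 0) (Q.xRep 1) =
      κ * ((P + Q).xRep 0 * (P - Q).xRep 0)

theorem PS_self (h2 : (2 : F) ≠ 0) (P : (Wc a b).Point) : PS a b P P := by
  unfold PS
  rcases P with _ | ⟨x, y, h⟩
  · rw [← Affine.Point.zero_def]
    refine ⟨1, ?_⟩
    simp [T0, T1, T2]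
  · have e := Wc_eqn h
    by_cases hy : y = 0
    · rw [Wc_dbl0 h hy, sub_self]
      subst hy
      simp only [Affine.Point.xRep_some, Affine.Point.xRep_zero]
      refine ⟨T2 a b x 1 x 1, ?_⟩
      simp [T0, T1, T2]
      right
      linear_combination -2 * e
    · obtain ⟨h', e'⟩ := Wc_dbl h hy h2
      rw [e', sub_self]
      simp only [Affine.Point.xRep_some, Affine.Point.xRep_zero]
      refine ⟨4 * y ^ 2, ?_⟩
      simp only [T0, T1, T2, Matrix.cons_val_zero, Matrix.cons_val_one]
      have h2y : (2 * y) ≠ 0 := mul_ne_zero h2 hy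
      have : ((3 * x ^ 2 + a) / (2 * y)) * (2 * y) = (3 * x ^ 2 + a) := div_mul_cancel₀ _ h2y
      refine ⟨by ring, by linear_combination -4 * e, ?_⟩
      set q := (3 * x ^ 2 + a) / (2 * y)
      linear_combination 8 * x * e - (2 * y * q + 3 * x ^ 2 + a) * this

theorem PS_all (h2 : (2 : F) ≠ 0) (P Q : (Wc a b).Point) : PS a b P Q := by
  by_cases hPQ : P = Q
  · subst hPQ; exact PS_self h2 P
  by_cases hPQ' : P = -Q
  · obtain ⟨κ, h0, h1, h3⟩ := PS_self h2 Q
    subst hPQ'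
    refine ⟨κ, ?_⟩
    have e1 : -Q - Q = -(Q + Q) := by abel
    have e2 : -Q + Q = 0 := by abel
    rw [e1, e2]
    rw [sub_self] at h0 h1 h3
    simp only [Affine.Point.xRep_neg] at *
    refine ⟨h0.trans (by ring), h1.trans (by ring), h3.trans (by ring)⟩
  rcases P with _ | ⟨x, y, h⟩
  · rw [← Affine.Point.zero_def]
    refine ⟨1, ?_⟩
    simp only [zero_add, zero_sub, Affine.Point.xRep_neg, Affine.Point.xRep_zero, T0, T1, T2,
      Matrix.cons_val_zero, Matrix.cons_val_one]
    refine ⟨by ring, by ring, by ring⟩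
  rcases Q with _ | ⟨x', y', h'⟩
  · rw [← Affine.Point.zero_def]
    refine ⟨1, ?_⟩
    simp only [add_zero, sub_zero, Affine.Point.xRep_zero, T0, T1, T2,
      Matrix.cons_val_zero, Matrix.cons_val_one]
    refine ⟨by ring, by ring, by ring⟩
  have hx : x ≠ x' := by
    intro hx
    rcases Affine.Point.X_eq_iff (h₁ := h) (h₂ := h') |>.1 hx with h | h
    · exact hPQ h
    · exact hPQ' h
  obtain ⟨hs, es⟩ := Wc_add h h' hx
  obtain ⟨hn, en⟩ := Wc_neg h'
  obtain ⟨hd, ed⟩ := Wc_add h hn hx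
  unfold PS
  rw [sub_eq_add_neg, en, es, ed]
  simp only [Affine.Point.xRep_some, Matrix.cons_val_zero, Matrix.cons_val_one]
  refine ⟨(x - x') ^ 2, ?_⟩
  have e := Wc_eqn h
  have e' := Wc_eqn h'
  have hxx : x - x' ≠ 0 := sub_ne_zero.2 hx
  obtain ⟨q, hq⟩ : ∃ q, q = (y - y') / (x - x') := ⟨_, rfl⟩
  obtain ⟨r, hr⟩ : ∃ r, r = (y - -y') / (x - x') := ⟨_, rfl⟩
  rw [← hq, ← hr]
  have hq' : q * (x - x') = y - y' := by rw [hq, div_mul_cancel₀ _ hxx]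
  have hr' : r * (x - x') = y + y' := by rw [hr, div_mul_cancel₀ _ hxx]; ring
  simp only [T0, T1, T2]
  have eq2 : (x - x') ^ 2 * q ^ 2 = (y - y') ^ 2 := by rw [← hq']; ring
  have er2 : (x - x') ^ 2 * r ^ 2 = (y + y') ^ 2 := by rw [← hr']; ring
  refine ⟨by ring, ?_, ?_⟩
  · linear_combination -eq2 - er2 - 2 * e - 2 * e'
  · apply mul_left_cancel₀ (pow_ne_zero 2 hxx)
    have : (x - x') ^ 2 * ((x - x') ^ 2 * ((q ^ 2 - x - x') * (r ^ 2 - x - x'))) =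
      ((y - y') ^ 2 - (x + x') * (x - x') ^ 2) * ((y + y') ^ 2 - (x + x') * (x - x') ^ 2) := by
      rw [← eq2, ← er2]; ring
    rw [this]
    have : ((y - y') ^ 2 - (x + x') * (x - x') ^ 2) * ((y + y') ^ 2 - (x + x') * (x - x') ^ 2)
      = (y ^ 2 - y' ^ 2) ^ 2 - 2 * (x + x') * (x - x') ^ 2 * (y ^ 2 + y' ^ 2)
        + ((x + x') * (x - x') ^ 2) ^ 2 := by ring
    rw [this, e, e']
    ring
end
end DS

namespace DS
open Polynomial WeierstrassCurve

section quad
variable {G : Type*} [AddCommGroup G] (d : G → ℤ)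
  (hd : ∀ P Q, d (P + Q) + d (P - Q) = 2 * d P + 2 * d Q)

theorem q_zero (hd : ∀ P Q, d (P + Q) + d (P - Q) = 2 * d P + 2 * d Q) : d 0 = 0 := by
  have := hd 0 0
  simp only [add_zero, sub_zero] at this
  linarith

theorem q_neg (hd : ∀ P Q, d (P + Q) + d (P - Q) = 2 * d P + 2 * d Q) (P : G) : d (-P) = d P := by
  have := hd 0 P
  simp only [zero_add, zero_sub, q_zero d hd] at this
  linarith

theorem q_nat (hd : ∀ P Q, d (P + Q) + d (P - Q) = 2 * d P + 2 * d Q) (P Q : G) (n : ℕ) :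
    d (n • P + Q) = n ^ 2 * d P + n * (d (P + Q) - d P - d Q) + d Q ∧
    d ((n + 1) • P + Q) = (n + 1) ^ 2 * d P + (n + 1) * (d (P + Q) - d P - d Q) + d Q := by
  induction n with
  | zero => refine ⟨by simp, by simp; ring⟩
  | succ n ih =>
    refine ⟨by exact_mod_cast ih.2, ?_⟩
    have h := hd ((n + 1) • P + Q) P
    have e1 : (n + 1) • P + Q + P = (n + 1 + 1) • P + Q := by
      rw [succ_nsmul P (n + 1)]; abel
    have e2 : (n + 1) • P + Q - P = n • P + Q := by
      rw [succ_nsmul P n]; abel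
    rw [e1, e2, ih.1, ih.2] at h
    push_cast
    linear_combination h

theorem q_int (hd : ∀ P Q, d (P + Q) + d (P - Q) = 2 * d P + 2 * d Q) (P Q : G) (n : ℤ) :
    d (n • P + Q) = n ^ 2 * d P + n * (d (P + Q) - d P - d Q) + d Q := by
  obtain ⟨n, rfl | rfl⟩ := Int.eq_nat_or_neg n
  · rw [natCast_zsmul]
    exact (q_nat d hd P Q n).1
  · have h := (q_nat d hd (-P) Q n).1
    have e : n • (-P) = (-(n : ℤ)) • P := by rw [neg_smul, natCast_zsmul, smul_neg]
    rw [← e, h, q_neg d hd]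
    have h2 := hd Q P
    have e3 : Q - P = -P + Q := by abel
    rw [e3, add_comm Q P] at h2
    linear_combination n * h2

theorem q_form (hd : ∀ P Q, d (P + Q) + d (P - Q) = 2 * d P + 2 * d Q) (P Q : G) (m n : ℤ) :
    d (m • P + n • Q) = m ^ 2 * d P + m * n * (d (P + Q) - d P - d Q) + n ^ 2 * d Q := by
  have h := q_int d hd P (n • Q) m
  have h1 := q_int d hd Q P n
  have h2 := q_int d hd Q 0 n
  rw [add_zero, add_zero, q_zero d hd] at h2
  rw [h, add_comm P (n • Q), h1, h2, add_comm Q P]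
  ring
end quad

section rep
variable {k : Type*} [Field k] (A B : k) (f : k[X]) (K : Type*) [Field K] [DecidableEq K]
  [Algebra k[X] K] [IsFractionRing k[X] K]

/-- the twisted generic curve -/
noncomputable abbrev WW : WeierstrassCurve.Affine K :=
  Wc (algebraMap k[X] K (C A) * algebraMap k[X] K f ^ 2) (algebraMap k[X] K (C B) * algebraMap k[X] K f ^ 3)

variable {A B f K}

def IsRep (P : (WW A B f K).Point) (u v : k[X]) : Prop :=
  IsCoprime u v ∧ P.xRep 0 * algebraMap k[X] K v = algebraMap k[X] K f * algebraMap k[X] K u * P.xRep 1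

theorem xRep_ne (P : (WW A B f K).Point) : ¬ (P.xRep 0 = 0 ∧ P.xRep 1 = 0) := by
  rcases P with _ | ⟨x, y, h⟩
  · rw [← Affine.Point.zero_def]; simp
  · simp

theorem rep_scale (hf : f ≠ 0) {P : (WW A B f K).Point} {u v : k[X]} (h : IsRep P u v) :
    ∃ l : K, l ≠ 0 ∧ P.xRep 0 = l * (algebraMap k[X] K f * algebraMap k[X] K u) ∧
      P.xRep 1 = l * algebraMap k[X] K v := by
  obtain ⟨⟨r, s, e⟩, h⟩ := h
  have inj : Function.Injective (algebraMap k[X] K) := IsFractionRing.injective _ _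
  have hf' : algebraMap k[X] K f ≠ 0 := by
    rwa [Ne, map_eq_zero_iff _ inj]
  have e' := congrArg (algebraMap k[X] K) e
  simp only [map_add, map_mul, map_one] at e'
  set l := P.xRep 0 / algebraMap k[X] K f * algebraMap k[X] K r + P.xRep 1 * algebraMap k[X] K s with hl
  have h0 : P.xRep 0 = l * (algebraMap k[X] K f * algebraMap k[X] K u) := by
    rw [hl]
    field_simp
    linear_combination (-P.xRep 0) * e' + algebraMap k[X] K s * h
  have h1 : P.xRep 1 = l * algebraMap k[X] K v := by
    rw [hl]
    field_simp
    linear_combination (-P.xRep 1 * algebraMap k[X] K f) * e' - algebraMap k[X] K r * h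
  refine ⟨l, ?_, h0, h1⟩
  intro hl0
  apply xRep_ne P
  rw [h0, h1, hl0]
  simp

theorem rep_exists (hf : f ≠ 0) (P : (WW A B f K).Point) : ∃ u v, IsRep P u v := by
  have inj : Function.Injective (algebraMap k[X] K) := IsFractionRing.injective _ _
  have hf' : algebraMap k[X] K f ≠ 0 := by
    rwa [Ne, map_eq_zero_iff _ inj]
  rcases P with _ | ⟨x, y, h⟩
  · rw [← Affine.Point.zero_def]
    exact ⟨1, 0, isCoprime_one_left, by simp⟩
  · obtain ⟨a, b, h1, h2⟩ := IsFractionRing.exists_reduced_fraction (A := k[X]) (x / algebraMap k[X] K f)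
    refine ⟨a, b, h1.isCoprime, ?_⟩
    have hb : algebraMap k[X] K b ≠ 0 := by
      rw [Ne, map_eq_zero_iff _ inj]; exact nonZeroDivisors.ne_zero b.2
    rw [IsFractionRing.mk'_eq_div] at h2
    simp only [Affine.Point.xRep_some, Matrix.cons_val_zero, Matrix.cons_val_one]
    field_simp at h2
    linear_combination -h2

theorem rep_para (h2 : (2 : k) ≠ 0) (hD : 4 * A ^ 3 + 27 * B ^ 2 ≠ 0) (hf : f ≠ 0)
    {P Q : (WW A B f K).Point} {a b c d u v w z : k[X]} (hP : IsRep P a b) (hQ : IsRep Q c d)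
    (hS : IsRep (P + Q) u v) (hT : IsRep (P - Q) w z) :
    max u.natDegree v.natDegree + max w.natDegree z.natDegree =
      2 * max a.natDegree b.natDegree + 2 * max c.natDegree d.natDegree ∧
    (b.coeff (max a.natDegree b.natDegree) = 0 → d.coeff (max c.natDegree d.natDegree) = 0 →
      v.coeff (max u.natDegree v.natDegree) = 0 ∧ z.coeff (max w.natDegree z.natDegree) = 0) := by
  have inj : Function.Injective (algebraMap k[X] K) := IsFractionRing.injective _ _
  have hf' : algebraMap k[X] K f ≠ 0 := by
    rwa [Ne, map_eq_zero_iff _ inj]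
  have h2' : (2 : K) ≠ 0 := by
    have : algebraMap k[X] K (C 2) ≠ 0 := by
      rw [Ne, map_eq_zero_iff _ inj]; simpa using h2
    rwa [show (C (2 : k) : k[X]) = 2 from map_ofNat C 2, map_ofNat] at this
  obtain ⟨κ, e0, e1, e2⟩ := PS_all h2' P Q
  obtain ⟨l, hl, l0, l1⟩ := rep_scale hf hP
  obtain ⟨m, hm, m0, m1⟩ := rep_scale hf hQ
  obtain ⟨s, hs, s0, s1⟩ := rep_scale hf hS
  obtain ⟨t, ht, t0, t1⟩ := rep_scale hf hT
  rw [l0, l1, m0, m1, s1, t1] at e0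
  rw [l0, l1, m0, m1, s1, t1, s0, t0] at e1
  rw [l0, l1, m0, m1, s0, t0] at e2
  have hF := hf'
  have hz : (l * m * algebraMap k[X] K f) ^ 2 ≠ 0 := pow_ne_zero 2 (mul_ne_zero (mul_ne_zero hl hm) hF)
  refine core A B h2 hD hP.1 hQ.1 hS.1 hT.1 (K := K) (κ * s * t / (l * m * algebraMap k[X] K f) ^ 2) ?_ ?_ ?_
  · rw [div_mul_eq_mul_div, eq_div_iff hz]
    simp only [T0, map_sub, map_mul, map_pow] at e0 ⊢
    linear_combination e0
  · rw [div_mul_eq_mul_div, eq_div_iff hz]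
    apply mul_left_cancel₀ hF
    simp only [T1, map_sub, map_mul, map_pow, map_add, map_ofNat] at e1 ⊢
    linear_combination e1
  · rw [div_mul_eq_mul_div, eq_div_iff hz]
    apply mul_left_cancel₀ hF
    apply mul_left_cancel₀ hF
    simp only [T2, map_sub, map_mul, map_pow, map_add, map_ofNat] at e2 ⊢
    linear_combination e2

open Classical in
/-- degree of the x-coordinate of a point -/
noncomputable def dg (P : (WW A B f K).Point) : ℤ :=
  if h : ∃ u v, IsRep P u v then (max h.choose.natDegree h.choose_spec.choose.natDegree : ℕ) else 0

def Good (P : (WW A B f K).Point) : Prop :=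
  ∃ u v, IsRep P u v ∧ v.coeff (max u.natDegree v.natDegree) = 0

theorem rep_same (h2 : (2 : k) ≠ 0) (hD : 4 * A ^ 3 + 27 * B ^ 2 ≠ 0) (hf : f ≠ 0)
    {P : (WW A B f K).Point} {a b u v : k[X]} (hP : IsRep P a b) (hQ : IsRep P u v) :
    max u.natDegree v.natDegree = max a.natDegree b.natDegree ∧
    (b.coeff (max a.natDegree b.natDegree) = 0 → v.coeff (max u.natDegree v.natDegree) = 0) := by
  have h0 : IsRep (0 : (WW A B f K).Point) 1 0 := ⟨isCoprime_one_left, by simp⟩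
  have := rep_para h2 hD hf hP h0 (by rw [add_zero]; exact hQ) (by rw [sub_zero]; exact hQ)
  simp only [natDegree_one, natDegree_zero] at this
  refine ⟨by simp at this; omega, fun h => (this.2 h (by simp)).1⟩

theorem dg_eq (h2 : (2 : k) ≠ 0) (hD : 4 * A ^ 3 + 27 * B ^ 2 ≠ 0) (hf : f ≠ 0)
    {P : (WW A B f K).Point} {a b : k[X]} (hP : IsRep P a b) :
    dg P = (max a.natDegree b.natDegree : ℕ) := by
  have h : ∃ u v, IsRep P u v := ⟨a, b, hP⟩
  rw [dg, dif_pos h, (rep_same h2 hD hf hP h.choose_spec.choose_spec).1]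

theorem dg_para (h2 : (2 : k) ≠ 0) (hD : 4 * A ^ 3 + 27 * B ^ 2 ≠ 0) (hf : f ≠ 0)
    (P Q : (WW A B f K).Point) : dg (P + Q) + dg (P - Q) = 2 * dg P + 2 * dg Q := by
  obtain ⟨a, b, hP⟩ := rep_exists hf P
  obtain ⟨c, d, hQ⟩ := rep_exists hf Q
  obtain ⟨u, v, hS⟩ := rep_exists hf (P + Q)
  obtain ⟨w, z, hT⟩ := rep_exists hf (P - Q)
  rw [dg_eq h2 hD hf hP, dg_eq h2 hD hf hQ, dg_eq h2 hD hf hS, dg_eq h2 hD hf hT]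
  exact_mod_cast (rep_para h2 hD hf hP hQ hS hT).1

theorem dg_nonneg (h2 : (2 : k) ≠ 0) (hD : 4 * A ^ 3 + 27 * B ^ 2 ≠ 0) (hf : f ≠ 0)
    (P : (WW A B f K).Point) : 0 ≤ dg P := by
  obtain ⟨a, b, hP⟩ := rep_exists hf P
  rw [dg_eq h2 hD hf hP]; positivity

/-- the subgroup of good points -/
def goodSub (h2 : (2 : k) ≠ 0) (hD : 4 * A ^ 3 + 27 * B ^ 2 ≠ 0) (hf : f ≠ 0) :
    AddSubgroup (WW A B f K).Point where
  carrier := {P | Good P}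
  zero_mem' := ⟨1, 0, ⟨isCoprime_one_left, by simp⟩, by simp⟩
  add_mem' := by
    rintro P Q ⟨a, b, hP, gP⟩ ⟨c, d, hQ, gQ⟩
    obtain ⟨u, v, hS⟩ := rep_exists hf (P + Q)
    obtain ⟨w, z, hT⟩ := rep_exists hf (P - Q)
    exact ⟨u, v, hS, ((rep_para h2 hD hf hP hQ hS hT).2 gP gQ).1⟩
  neg_mem' := by
    rintro P ⟨a, b, hP, gP⟩
    exact ⟨a, b, ⟨hP.1, by simpa using hP.2⟩, gP⟩

end rep
end DS

namespace DS
open Polynomial WeierstrassCurve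

section deriv
variable (k : Type*) [Field k] (K : Type*) [Field K] [Algebra k[X] K] [IsFractionRing k[X] K]

noncomputable def dualHom : k[X] →+* TrivSqZeroExt K K where
  toFun u := TrivSqZeroExt.inl (algebraMap k[X] K u) + TrivSqZeroExt.inr (algebraMap k[X] K (derivative u))
  map_one' := by ext <;> simp
  map_zero' := by ext <;> simp
  map_add' u v := by
    ext
    · simp
    · simp [-Algebra.smul_def]; rw [Algebra.smul_def, Algebra.smul_def, mul_one, mul_one]
  map_mul' u v := by
    ext
    · simp
    · simp; rw [Algebra.smul_def, Algebra.smul_def]; ring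

theorem dualHom_unit (y : nonZeroDivisors k[X]) : IsUnit (dualHom k K y) := by
  rw [TrivSqZeroExt.isUnit_iff_isUnit_fst]
  have inj : Function.Injective (algebraMap k[X] K) := IsFractionRing.injective _ _
  have hb : algebraMap k[X] K y ≠ 0 := by
    rw [Ne, map_eq_zero_iff _ inj]; exact nonZeroDivisors.ne_zero y.2
  simpa [dualHom] using hb

noncomputable def dualLift : K →+* TrivSqZeroExt K K :=
  IsLocalization.lift (M := nonZeroDivisors k[X]) (dualHom_unit k K)

theorem dualLift_fst (x : K) : (dualLift k K x).fst = x := by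
  have : ((TrivSqZeroExt.fstHom K K K : TrivSqZeroExt K K →ₐ[K] K) : TrivSqZeroExt K K →+* K).comp
      (dualLift k K) = RingHom.id K := by
    apply IsLocalization.ringHom_ext (nonZeroDivisors k[X])
    ext u <;> simp [dualLift, dualHom]
  exact congrArg (fun g => g x) this

/-- the derivation d/dt on the field of rational functions -/
noncomputable def dK : Derivation ℤ K K :=
  Derivation.mk' ((TrivSqZeroExt.sndHom K K).toAddMonoidHom.comp (dualLift k K).toAddMonoidHom).toIntLinearMap (by
    intro a b
    simp [dualLift_fst, mul_comm])

theorem dK_am (u : k[X]) : dK k K (algebraMap k[X] K u) = algebraMap k[X] K (derivative u) := by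
  change (dualLift k K (algebraMap k[X] K u)).snd = _
  rw [dualLift, IsLocalization.lift_eq]
  simp [dualHom]; rw [Algebra.smul_def, mul_one]
end deriv

section drel
variable {K : Type*} [Field K] [DecidableEq K] (δ : Derivation ℤ K K) {a b F : K}

def DRel (a b F : K) (P : (Wc (a * F ^ 2) (b * F ^ 3)).Point) (c : K) : Prop :=
  (P = 0 ∧ c = 0) ∨ ∃ X Y : K, ∃ h, P = Affine.Point.some (F * X) (F ^ 2 * Y) h ∧
    δ X = c * Y ∧ δ F * Y + 2 * F * δ Y = c * (3 * X ^ 2 + a)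

theorem eqnXY (hF : F ≠ 0) {X Y : K} (h : (Wc (a * F ^ 2) (b * F ^ 3)).Nonsingular (F * X) (F ^ 2 * Y)) :
    F * Y ^ 2 = X ^ 3 + a * X + b := by
  have := Wc_eqn h
  apply mul_left_cancel₀ (pow_ne_zero 3 hF)
  linear_combination this

theorem DRel.neg {P : (Wc (a * F ^ 2) (b * F ^ 3)).Point} {c : K} (h : DRel δ a b F P c) :
    DRel δ a b F (-P) (-c) := by
  rcases h with ⟨rfl, rfl⟩ | ⟨X, Y, h, rfl, h1, h2⟩
  · left; simp
  · right
    obtain ⟨h', e⟩ := Wc_neg h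
    refine ⟨X, -Y, ?_, ?_, ?_, ?_⟩
    · rw [mul_neg]; exact h'
    · rw [e]; congr 1; ring
    · rw [h1]; ring
    · rw [map_neg]; linear_combination -h2

theorem some_congr {W : Affine K} {x y x' y' : K} (hx : x = x') (hy : y = y') (h : W.Nonsingular x y) :
    ∃ h', Affine.Point.some x y h = Affine.Point.some x' y' h' := by
  subst hx hy; exact ⟨h, rfl⟩

theorem dmul (x y : K) : δ (x * y) = x * δ y + δ x * y := by
  rw [Derivation.leibniz, smul_eq_mul, smul_eq_mul]; ring
theorem dnat (n : ℕ) : δ (n : K) = 0 := δ.map_natCast n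
theorem dsq (x : K) : δ (x ^ 2) = 2 * x * δ x := by
  rw [pow_two, dmul]; ring
theorem dcub (x : K) : δ (x ^ 3) = 3 * x ^ 2 * δ x := by
  rw [pow_succ, dmul, dsq]; ring
theorem d2 : δ (2 : K) = 0 := by simpa using dnat δ 2
theorem d3 : δ (3 : K) = 0 := by simpa using dnat δ 3

theorem DRel.dbl (h2K : (2 : K) ≠ 0) (hF : F ≠ 0) (ha : δ a = 0)
    {P : (Wc (a * F ^ 2) (b * F ^ 3)).Point} {c c' : K}
    (h : DRel δ a b F P c) (h' : DRel δ a b F P c')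
    (hns : ∀ X : K, X ^ 3 + a * X + b = 0 → 3 * X ^ 2 + a ≠ 0) :
    c = c' ∧ DRel δ a b F (P + P) (c + c) := by
  rcases h with ⟨rfl, rfl⟩ | ⟨X, Y, h, rfl, h1, h2⟩
  · rcases h' with ⟨-, rfl⟩ | ⟨X, Y, h, h', h1, h2⟩
    · exact ⟨rfl, by left; simp⟩
    · cases h'
  rcases h' with ⟨h', -⟩ | ⟨X', Y', h', e', h1', h2'⟩
  · cases h'
  have e := eqnXY hF h
  simp only [Affine.Point.some.injEq] at e'
  obtain ⟨e1, e2⟩ := e'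
  obtain rfl := mul_left_cancel₀ hF e1
  obtain rfl := mul_left_cancel₀ (pow_ne_zero 2 hF) e2
  by_cases hY : Y = 0
  · have h3 := hns X (by rw [← e, hY]; ring)
    refine ⟨mul_right_cancel₀ h3 (h2.symm.trans h2'), ?_⟩
    left
    refine ⟨Wc_dbl0 h (by rw [hY]; ring), ?_⟩
    subst hY
    rw [map_zero] at h2
    have : c * (3 * X ^ 2 + a) = 0 := by rw [← h2]; ring
    have : c = 0 := by simpa [h3] using this
    rw [this, add_zero]
  · refine ⟨mul_right_cancel₀ hY (h1.symm.trans h1'), ?_⟩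
    right
    obtain ⟨h', e'⟩ := Wc_dbl h (mul_ne_zero (pow_ne_zero 2 hF) hY) h2K
    obtain ⟨Λ, hΛ⟩ : ∃ Λ, Λ = (3 * X ^ 2 + a) / (2 * F * Y) := ⟨_, rfl⟩
    have hFY : 2 * F * Y ≠ 0 := mul_ne_zero (mul_ne_zero h2K hF) hY
    have hl : (3 * (F * X) ^ 2 + a * F ^ 2) / (2 * (F ^ 2 * Y)) = F * Λ := by
      rw [hΛ]; field_simp
    have hL : 2 * F * Λ * Y = 3 * X ^ 2 + a := by rw [hΛ]; field_simp
    simp only [hl] at e' h'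
    obtain ⟨h'', e''⟩ := some_congr (x' := F * (F * Λ ^ 2 - 2 * X))
      (y' := F ^ 2 * (-(Λ * ((F * Λ ^ 2 - 2 * X) - X) + Y))) (by ring) (by ring) h'
    refine ⟨_, _, h'', e'.trans e'', ?_⟩
    have hdδ : δ F * Λ + 2 * F * δ Λ = 6 * X * c - 2 * c * F * Λ ^ 2 := by
      have := congrArg δ hL
      simp only [map_add, dmul, d2, d3, dsq, ha, h1] at this
      apply mul_right_cancel₀ hY
      linear_combination this - Λ * h2 + c * Λ * hL
    have h3 : δ (F * Λ ^ 2 - 2 * X) = (c + c) * (-(Λ * ((F * Λ ^ 2 - 2 * X) - X) + Y)) := by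
      simp only [map_sub, dmul, d2, dsq, h1]
      linear_combination Λ * hdδ
    refine ⟨h3, ?_⟩
    obtain ⟨X3, hX3⟩ : ∃ X3, X3 = F * Λ ^ 2 - 2 * X := ⟨_, rfl⟩
    rw [← hX3] at h3 ⊢
    simp only [map_neg, map_sub, map_add, dmul, h3, h1]
    linear_combination (-(X3 - X)) * hdδ - h2 + 3 * c * hL - 6 * c * (X3 - X) * hX3

theorem DRel.add' (hF : F ≠ 0) {P Q : (Wc (a * F ^ 2) (b * F ^ 3)).Point} {c c' : K}
    (h : DRel δ a b F P c) (h' : DRel δ a b F Q c')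
    (h1 : P ≠ Q) (h2 : P ≠ -Q) :
    DRel δ a b F (P + Q) (c + c') := by
  rcases h with ⟨rfl, rfl⟩ | ⟨X, Y, h, rfl, u1, u2⟩
  · simpa using h'
  rcases h' with ⟨rfl, rfl⟩ | ⟨X', Y', h', rfl, v1, v2⟩
  · right; simp only [add_zero]; exact ⟨X, Y, h, rfl, u1, u2⟩
  have hx : F * X ≠ F * X' := by
    intro hx
    rcases Affine.Point.X_eq_iff (h₁ := h) (h₂ := h') |>.1 hx with h | h
    · exact h1 h
    · exact h2 h
  have hX : X - X' ≠ 0 := by intro h; apply hx; rw [sub_eq_zero.1 h]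
  obtain ⟨hs, es⟩ := Wc_add h h' hx
  have e := eqnXY hF h
  have e' := eqnXY hF h'
  right
  obtain ⟨Λ, hΛ⟩ : ∃ Λ, Λ = (Y - Y') / (X - X') := ⟨_, rfl⟩
  have hl : (F ^ 2 * Y - F ^ 2 * Y') / (F * X - F * X') = F * Λ := by
    rw [hΛ, ← mul_sub, ← mul_sub]; field_simp
  have hL : Λ * (X - X') = Y - Y' := by rw [hΛ]; field_simp
  simp only [hl] at es hs
  obtain ⟨h'', e''⟩ := some_congr (x' := F * (F * Λ ^ 2 - X - X'))
    (y' := F ^ 2 * (-(Λ * ((F * Λ ^ 2 - X - X') - X) + Y))) (by ring) (by ring) hs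
  refine ⟨_, _, h'', es.trans e'', ?_⟩
  have hd := congrArg δ hL
  simp only [map_sub, dmul, u1, v1] at hd
  have hs1 : F * Λ * (Y + Y') = X ^ 2 + X * X' + X' ^ 2 + a := by
    apply mul_right_cancel₀ hX
    linear_combination F * (Y + Y') * hL + e - e'
  have hdδ : 2 * F * δ Λ * (X - X') = c * (3 * X ^ 2 + a) - c' * (3 * X' ^ 2 + a) - δ F * (Y - Y')
      - 2 * F * Λ * (c * Y - c' * Y') := by
    linear_combination 2 * F * hd + u2 - v2
  obtain ⟨X3, hX3⟩ : ∃ X3, X3 = F * Λ ^ 2 - X - X' := ⟨_, rfl⟩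
  have E1 : 3 * X ^ 2 + a - 2 * F * Λ * Y = (X - X') * (X - X3) := by
    linear_combination -hs1 + F * Λ * hL + (X - X') * hX3
  have E2 : 3 * X' ^ 2 + a - 2 * F * Λ * Y' = (X' - X) * (X' - X3) := by
    linear_combination -hs1 - F * Λ * hL - (X - X') * hX3
  obtain ⟨Y3, hY3⟩ : ∃ Y3, Y3 = -(Λ * (X3 - X) + Y) := ⟨_, rfl⟩
  have E3 : 3 * X3 ^ 2 + a + 2 * F * Λ * Y3 = (X3 - X) * (X3 - X') := by
    rw [hY3]
    linear_combination E1 + (-2 * (X3-X)) * (-hX3)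
  have h3 : δ X3 = (c + c') * Y3 := by
    have : δ X3 = δ F * Λ ^ 2 + 2 * F * Λ * δ Λ - c * Y - c' * Y' := by
      rw [hX3]
      simp only [map_sub, dmul, dsq, u1, v1]; ring
    rw [this]
    apply mul_right_cancel₀ hX
    linear_combination Λ * hdδ + δ F * Λ * hL + Λ*c*E1 - Λ*c'*E2 - c'*(X-X')*hL - (c+c')*(X-X') * hY3
  rw [← hX3, ← hY3]
  refine ⟨h3, ?_⟩
  have : δ Y3 = -(δ Λ * (X3 - X) + Λ * ((c + c') * Y3 - c * Y) + δ Y) := by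
    rw [hY3]
    simp only [map_neg, map_sub, map_add, dmul, h3, u1, hY3]; ring
  rw [this]
  apply mul_right_cancel₀ hX
  linear_combination -(X3 - X) * hdδ - (X-X') * u2 + δ F * (X - X') * hY3 - δ F * (X3 - X) * hL - (X3 - X) * c * E1 + (X3 - X) * c' * E2 - c * (X - X') * E1 - (c + c') * (X - X') * E3

theorem DRel.add (h2' : (2 : K) ≠ 0) (hF : F ≠ 0) (ha : δ a = 0)
    {P Q : (Wc (a * F ^ 2) (b * F ^ 3)).Point} {c c' : K}
    (h : DRel δ a b F P c) (h' : DRel δ a b F Q c')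
    (hns : ∀ X : K, X ^ 3 + a * X + b = 0 → 3 * X ^ 2 + a ≠ 0) :
    DRel δ a b F (P + Q) (c + c') := by
  by_cases h1 : P = Q
  · subst h1
    obtain ⟨rfl, h⟩ := DRel.dbl δ h2' hF ha h h' hns
    exact h
  by_cases h2 : P = -Q
  · subst h2
    obtain ⟨rfl, -⟩ := DRel.dbl δ h2' hF ha h (h'.neg δ) hns
    left
    constructor <;> abel
  exact DRel.add' δ hF h h' h1 h2

/-- graph of the additive map `D` -/
def DSub (h2' : (2 : K) ≠ 0) (hF : F ≠ 0) (ha : δ a = 0)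
    (hns : ∀ X : K, X ^ 3 + a * X + b = 0 → 3 * X ^ 2 + a ≠ 0) :
    AddSubgroup ((Wc (a * F ^ 2) (b * F ^ 3)).Point × K) where
  carrier := {x | DRel δ a b F x.1 x.2}
  zero_mem' := Or.inl ⟨rfl, rfl⟩
  add_mem' h h' := DRel.add δ h2' hF ha h h' hns
  neg_mem' h := DRel.neg δ h

end drel
end DS

namespace DS
open Polynomial WeierstrassCurve

section
variable {K : Type*} [Field K] [DecidableEq K] (δ : Derivation ℤ K K) {a b F : K}

theorem Wc_ns {a b x y : K} (h2 : (2 : K) ≠ 0) (h : y ^ 2 = x ^ 3 + a * x + b) (hy : y ≠ 0) :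
    (Wc a b).Nonsingular x y := by
  rw [Affine.nonsingular_iff, Affine.equation_iff]
  refine ⟨?_, Or.inr ?_⟩
  · simp only [Wc]; linear_combination h
  · simp only [Wc]
    intro hh
    have : 2 * y = 0 := by linear_combination hh
    exact mul_ne_zero h2 hy this

theorem mkPt (h2 : (2 : K) ≠ 0) (hF : F ≠ 0) (ha : δ a = 0) (hb : δ b = 0) {X Y c : K}
    (h : F * Y ^ 2 = X ^ 3 + a * X + b) (hY : Y ≠ 0) (hd : δ X = c * Y) :
    ∃ h, DRel δ a b F (Affine.Point.some (F * X) (F ^ 2 * Y) h) c := by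
  have hn : (Wc (a * F ^ 2) (b * F ^ 3)).Nonsingular (F * X) (F ^ 2 * Y) := by
    apply Wc_ns h2
    · linear_combination F ^ 3 * h
    · exact mul_ne_zero (pow_ne_zero 2 hF) hY
  refine ⟨hn, Or.inr ⟨X, Y, hn, rfl, hd, ?_⟩⟩
  have := congrArg δ h
  simp only [map_add, dmul, dsq, dcub, ha, hb, hd] at this
  apply mul_right_cancel₀ hY
  linear_combination this

theorem ns_of_disc {a b : K} (hD : 4 * a ^ 3 + 27 * b ^ 2 ≠ 0) (X : K) (h : X ^ 3 + a * X + b = 0) :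
    3 * X ^ 2 + a ≠ 0 := by
  intro h'
  apply hD
  linear_combination (-18 * a * X + 27 * b) * h + (6 * a * X ^ 2 - 9 * b * X + 4 * a ^ 2) * h'
end

section
variable {k : Type*} [Field k] {A B : k} {f : k[X]} {K : Type*} [Field K] [DecidableEq K]
  [Algebra k[X] K] [IsFractionRing k[X] K]

theorem am_inj : Function.Injective (algebraMap k[X] K) := IsFractionRing.injective _ _

theorem am_ne {u : k[X]} : algebraMap k[X] K u ≠ 0 ↔ u ≠ 0 := by
  rw [Ne, map_eq_zero_iff _ am_inj]

theorem am_two (h2 : (2 : k) ≠ 0) : (2 : K) ≠ 0 := by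
  have : algebraMap k[X] K (C 2) ≠ 0 := by
    rw [am_ne]; simpa using h2
  rwa [show (C (2 : k) : k[X]) = 2 from map_ofNat C 2, map_ofNat] at this

theorem rep_some {u v : k[X]} (huv : IsCoprime u v) {X y : K} (hX : X * algebraMap k[X] K v = algebraMap k[X] K u) (h) :
    IsRep (Affine.Point.some (W' := WW A B f K) (algebraMap k[X] K f * X) y h) u v := by
  refine ⟨huv, ?_⟩
  simp only [Affine.Point.xRep_some, Matrix.cons_val_zero, Matrix.cons_val_one]
  rw [mul_assoc, hX]; ring

theorem const_of_der {u v : k[X]} (huv : IsCoprime u v) (h : derivative u * v = u * derivative v) :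
    derivative u = 0 ∧ derivative v = 0 := by
  have key : ∀ {u v : k[X]}, IsCoprime u v → derivative u * v = u * derivative v → derivative u = 0 := by
    intro u v huv h
    have : u ∣ derivative u := huv.dvd_of_dvd_mul_right ⟨_, h⟩
    by_contra h0
    have h1 := natDegree_le_of_dvd this h0
    by_cases hu : u.natDegree = 0
    · rw [eq_C_of_natDegree_eq_zero hu] at h0; simp at h0
    · have := natDegree_derivative_lt hu; omega
  exact ⟨key huv h, key huv.symm (by rw [mul_comm, ← h, mul_comm])⟩

theorem DRel0 {p : ℕ} [Fact p.Prime] [CharP k p] (hf : f ≠ 0)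
    {P : (WW A B f K).Point} (h : DRel (dK k K) (algebraMap k[X] K (C A)) (algebraMap k[X] K (C B)) (algebraMap k[X] K f) P 0)
    {u v : k[X]} (hr : IsRep P u v) : ∃ u' v', u = expand k p u' ∧ v = expand k p v' := by
  have hp : p ≠ 0 := (Fact.out : p.Prime).ne_zero
  suffices h : derivative u * v = u * derivative v by
    obtain ⟨h1, h2⟩ := const_of_der hr.1 h
    exact ⟨_, _, (expand_contract p h1 hp).symm, (expand_contract p h2 hp).symm⟩
  rcases h with ⟨rfl, -⟩ | ⟨X, Y, h, rfl, h1, h2⟩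
  · have h2 := hr.2
    have h1 := hr.1
    simp at h2
    subst h2; simp
  · have := hr.2
    simp only [Affine.Point.xRep_some, Matrix.cons_val_zero, Matrix.cons_val_one, mul_one, mul_assoc] at this
    have e := mul_left_cancel₀ (am_ne.2 hf) this
    have e' := congrArg (dK k K) e
    rw [dmul, h1, dK_am, dK_am] at e'
    simp only [zero_mul, add_zero] at e'
    apply am_inj (K := K)
    rw [map_mul, map_mul, ← e, ← e']; ring

theorem p_dvd_dg {p : ℕ} [Fact p.Prime] [CharP k p] (h2 : (2 : k) ≠ 0) (hD : 4 * A ^ 3 + 27 * B ^ 2 ≠ 0) (hf : f ≠ 0)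
    {P : (WW A B f K).Point} (h : DRel (dK k K) (algebraMap k[X] K (C A)) (algebraMap k[X] K (C B)) (algebraMap k[X] K f) P 0) :
    (p : ℤ) ∣ dg P := by
  obtain ⟨u, v, hr⟩ := rep_exists hf P
  rw [dg_eq h2 hD hf hr]
  obtain ⟨u', v', rfl, rfl⟩ := DRel0 (p := p) hf h hr
  rw [natDegree_expand, natDegree_expand, Nat.mul_max_mul_right]
  simp
end
end DS

namespace DS
open Polynomial WeierstrassCurve

section phi
variable {S : Type*} [CommRing S]

def phN (R X : S) : S := 7505 - 5046*R^1 - 10140*X^1 + 6870*X^1*R^1 + 5223*X^2 - 3684*X^2*R^1 - 1320*X^3 + 932*X^3*R^1 + 183*X^4 - 102*X^4*R^1 - 12*X^5 + 6*X^5*R^1 + 1*X^6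
def phD (R X : S) : S := -432 + 306*R^1 + 585*X^1 - 420*X^1*R^1 - 300*X^2 + 232*X^2*R^1 + 78*X^3 - 60*X^3*R^1 - 12*X^4 + 6*X^4*R^1 + 1*X^5
def phU (R X : S) : S := 295 + 3900*R^1 + 6426*X^1 - 7678*X^1*R^1 - 9694*X^2 + 6192*X^2*R^1 + 4794*X^3 - 2042*X^3*R^1 - 440*X^4 - 180*X^4*R^1 - 450*X^5 + 302*X^5*R^1 + 110*X^6 - 120*X^6*R^1 - 18*X^7 + 10*X^7*R^1 + 1*X^8
def phM (R X : S) : S := 9 - 6*R^1 - 6*X^1 + 2*X^1*R^1 + 1*X^2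
def phdN (R X : S) : S := -10140 + 6870*R^1 + 10446*X^1 - 7368*X^1*R^1 - 3960*X^2 + 2796*X^2*R^1 + 732*X^3 - 408*X^3*R^1 - 60*X^4 + 30*X^4*R^1 + 6*X^5
def phdD (R X : S) : S := 585 - 420*R^1 - 600*X^1 + 464*X^1*R^1 + 234*X^2 - 180*X^2*R^1 - 48*X^3 + 24*X^3*R^1 + 5*X^4

theorem ph1 (R X : S) (h : R ^ 2 = 2) : (-7 + 6*R^1 - 2*X^1*R^1 + 1*X^2) * phU R X ^ 2 = phN R X ^ 3 + 36 * (-15 + 6 * R) * phN R X * phD R X ^ 2 - 216 * (24 - 14 * R) * phD R X ^ 3 := by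
  simp only [phN, phD, phU]
  linear_combination (42165522756 - 51018723720*R^1 + 15411736512*R^2 - 170497940400*X^1 + 206507678040*X^1*R^1 - 62329849920*X^1*R^2 + 318193947516*X^2 - 385736849136*X^2*R^1 + 116187156864*X^2*R^2 - 363195236640*X^3 + 440542692592*X^3*R^1 - 132270475392*X^3*R^2 + 283364211124*X^4 - 343708875096*X^4*R^1 + 102740249664*X^4*R^2 - 159994654032*X^5 + 194013867208*X^5*R^1 - 57743077824*X^5*R^2 + 67549500508*X^6 - 82012279200*X^6*R^1 + 24416384256*X^6*R^2 - 21780408768*X^7 + 26613686016*X^7*R^1 - 8037363456*X^7*R^2 + 5470942044*X^8 - 6794204088*X^8*R^1 + 2134154304*X^8*R^2 - 1104037968*X^9 + 1408311912*X^9*R^1 - 470038464*X^9*R^2 + 187847700*X^10 - 245497200*X^10*R^1 + 85131648*X^10*R^2 - 28004640*X^11 + 36198576*X^11*R^1 - 11788416*X^11*R^2 + 3554780*X^12 - 4169832*X^12*R^1 + 1073088*X^12*R^2 - 340656*X^13 + 302200*X^13*R^1 - 46656*X^13*R^2 + 18452*X^14 - 6912*X^14*R^1 - 416*X^15*R^1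 - 48*X^16) * h

theorem ph2 (R X : S) (h : R ^ 2 = 2) : phD R X = (X + 2 * R) * phM R X ^ 2 := by
  simp only [phD, phM]
  linear_combination (216 - 72*R^1 - 252*X^1 + 48*X^1*R^1 + 96*X^2 - 8*X^2*R^1 - 12*X^3) * h

theorem ph3 (R X : S) (h : R ^ 2 = 2) : phdN R X * phD R X - phN R X * phdD R X = phM R X * phU R X := by
  simp only [phD, phM, phU, phN, phdN, phdD]
  linear_combination (6300 + 32868*X^1 - 46756*X^2 + 13140*X^3 + 12228*X^4 - 11028*X^5 + 3380*X^6 - 420*X^7 + 16*X^8) * h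

end phi
end DS

namespace DS
open Polynomial WeierstrassCurve

section
variable {k : Type*} [Field k] (r : k)

noncomputable def fA (r : k) : k := -15 + 6 * r
noncomputable def fB (r : k) : k := 24 - 14 * r
noncomputable def ff (r : k) : k[X] := X ^ 3 + C (fA r) * X + C (fB r)
noncomputable def pu (r : k) : k[X] := phN (C r) X
noncomputable def pv (r : k) : k[X] := C (-6) * phD (C r) X

theorem C_of (n : ℕ) [n.AtLeastTwo] : (C (OfNat.ofNat n : k) : k[X]) = OfNat.ofNat n := map_ofNat C n

theorem CR (h : r ^ 2 = 2) : (C r : k[X]) ^ 2 = 2 := by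
  rw [← map_pow, h]; exact C_of 2

theorem ff_fac (h : r ^ 2 = 2) : ff r = (X + 2 * C r) * (-7 + 6*(C r) - 2*X*(C r) + X^2) := by
  have := CR r h
  simp only [ff, fA, fB, map_add, map_sub, map_neg, map_mul, map_ofNat]
  linear_combination (4*X - 12) * this

theorem der_pu : derivative (pu r) = phdN (C r) X := by
  simp [pu, phN, phdN, map_ofNat]
  ring

theorem der_phD : derivative (phD (C r) X) = phdD (C r) X := by
  simp [phD, phdD, map_ofNat]
  ring

theorem pu_HC : pu r = X ^ 6 + C (6 * r - 12) * X ^ 5 + C (183 - 102 * r) * X ^ 4 + C (932 * r - 1320) * X ^ 3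
    + C (5223 - 3684 * r) * X ^ 2 + C (6870 * r - 10140) * X + C (7505 - 5046 * r) := by
  simp only [pu, phN, map_add, map_sub, map_neg, map_mul, map_ofNat]; ring

theorem phD_HC : phD (C r) X = X ^ 5 + C (6 * r - 12) * X ^ 4 + C (78 - 60 * r) * X ^ 3 + C (232 * r - 300) * X ^ 2
    + C (585 - 420 * r) * X + C (306 * r - 432) := by
  simp only [phD, map_add, map_sub, map_neg, map_mul, map_ofNat]; ring

theorem pu_deg : (pu r).natDegree = 6 := by rw [pu_HC]; compute_degree!

theorem phU_ne : phU (C r) X ≠ (0 : k[X]) := by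
  have : phU (C r) X = X ^ 8 + C (10 * r - 18) * X ^ 7 + C (110 - 120 * r) * X ^ 6 + C (302 * r - 450) * X ^ 5
     + C (-440 - 180 * r) * X ^ 4 + C (4794 - 2042 * r) * X ^ 3 + C (6192 * r - 9694) * X ^ 2
     + C (6426 - 7678 * r) * X + C (295 + 3900 * r) := by
    simp only [phU, map_add, map_sub, map_neg, map_mul, map_ofNat]; ring
  intro h
  have h8 : (phU (C r) X).natDegree = 8 := by rw [this]; compute_degree!
  rw [h] at h8; simp at h8

theorem phM_ne : phM (C r) X ≠ (0 : k[X]) := by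
  have e2 : phM (C r) X = (X - C 3) * (X - C (3 - 2 * r)) := by
    simp only [phM, map_sub, map_mul, map_ofNat]; ring
  rw [e2]
  exact mul_ne_zero (X_sub_C_ne_zero _) (X_sub_C_ne_zero _)

theorem phD_deg : (phD (C r) X).natDegree = 5 := by rw [phD_HC]; compute_degree!

theorem cop_lin {c : k} {u : k[X]} (h : u.eval c ≠ 0) : IsCoprime u (X - C c) := by
  apply IsCoprime.symm
  rw [(irreducible_X_sub_C c).coprime_iff_not_dvd, dvd_iff_isRoot]
  exact h

theorem nz_of_mul {a b : k} (n : ℕ) (m : ℕ) (h2 : (2 : k) ≠ 0) (h3 : (3 : k) ≠ 0) (h : a * b = 2 ^ n * 3 ^ m) : a ≠ 0 := by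
  rintro rfl
  rw [zero_mul] at h
  exact mul_ne_zero (pow_ne_zero n h2) (pow_ne_zero m h3) h.symm

theorem pu_cop (h : r ^ 2 = 2) (h2 : (2 : k) ≠ 0) (h3 : (3 : k) ≠ 0) : IsCoprime (pu r) (pv r) := by
  have hu : IsUnit (C (-6 : k)) := by
    rw [isUnit_C, isUnit_iff_ne_zero]
    have : (-6 : k) = -(2 * 3) := by norm_num
    rw [this, neg_ne_zero]; exact mul_ne_zero h2 h3
  rw [pv, isCoprime_mul_unit_left_right hu, ph2 _ _ (CR r h)]
  have e1 : (X + 2 * C r : k[X]) = X - C (-2 * r) := by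
    simp only [map_mul, map_neg, map_ofNat]; ring
  have e2 : phM (C r) X = (X - C 3) * (X - C (3 - 2 * r)) := by
    simp only [phM, map_sub, map_mul, map_ofNat]; ring
  rw [e1, e2]
  have E : ∀ c, (pu r).eval c = phN r c := by
    intro c; simp [pu, phN]; ring
  have c1 : IsCoprime (pu r) (X - C (-2 * r)) := by
    apply cop_lin
    rw [E]
    apply nz_of_mul (b := 2673 - 1890 * r) 0 6 h2 h3
    simp only [phN]
    linear_combination (-10030068 - 13268016*r^1 - 177552*r^2 + 5705856*r^3 + 2016576*r^4 + 241920*r^5) * h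
  have c2 : IsCoprime (pu r) (X - C 3) := by
    apply cop_lin
    rw [E]
    apply nz_of_mul (b := 1088 - 768 * r) 12 0 h2 h3
    simp only [phN]
    linear_combination (-589824) * h
  have c3 : IsCoprime (pu r) (X - C (3 - 2 * r)) := by
    apply cop_lin
    rw [E]
    apply nz_of_mul (b := 5184 + 3456 * r) 12 6 h2 h3
    simp only [phN]
    linear_combination (-1327104 + 6082560*r^1 - 829440*r^2 - 2101248*r^3 - 1990656*r^4 - 442368*r^5) * h
  exact c1.mul_right (c2.mul_right c3).pow_right

theorem disc_val (h : r ^ 2 = 2) : (4 * fA r ^ 3 + 27 * fB r ^ 2) * (-(3 - 2 * r)) = 2 ^ 2 * 3 ^ 3 := by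
  simp only [fA, fB]
  linear_combination (3132 - 4968*r + 1728*r^2) * h

end

section
variable {k : Type*} [Field k] (r : k) {K : Type*} [Field K] [DecidableEq K] [Algebra k[X] K] [IsFractionRing k[X] K]

theorem phi_id (h : r ^ 2 = 2) (h2 : (2 : k) ≠ 0) (h3 : (3 : k) ≠ 0) :
    dK k K (algebraMap k[X] K (pu r) / algebraMap k[X] K (pv r)) ≠ 0 ∧
    algebraMap k[X] K (ff r) * (dK k K (algebraMap k[X] K (pu r) / algebraMap k[X] K (pv r))) ^ 2 =
    -6 * ((algebraMap k[X] K (pu r) / algebraMap k[X] K (pv r)) ^ 3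
      + algebraMap k[X] K (C (fA r)) * (algebraMap k[X] K (pu r) / algebraMap k[X] K (pv r))
      + algebraMap k[X] K (C (fB r))) := by
  have h6 : (6 : k) ≠ 0 := by
    have : (6 : k) = 2 * 3 := by norm_num
    rw [this]; exact mul_ne_zero h2 h3
  have h6K : (6 : K) ≠ 0 := by
    have : algebraMap k[X] K (C 6) ≠ 0 := by
      rw [Ne, map_eq_zero_iff _ (am_inj (k := k) (K := K))]; simpa using h6
    rwa [C_of, map_ofNat] at this
  have hD0 : phD (C r) X ≠ (0 : k[X]) := by
    intro h0; have := phD_deg r; rw [h0] at this; simp at this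
  obtain ⟨m, hm⟩ : ∃ m : k[X] →+* K, m = algebraMap k[X] K := ⟨_, rfl⟩
  have hDK : m (phD (C r) X) ≠ 0 := by
    rwa [hm, Ne, map_eq_zero_iff _ (am_inj (k := k) (K := K))]
  have ev : m (pv r) = -6 * m (phD (C r) X) := by
    rw [pv, map_mul, map_neg, C_of, map_neg, map_ofNat]
  have hd : dK k K (m (pu r) / m (pv r)) * (-6 * m (phD (C r) X) ^ 2) = m (phM (C r) X * phU (C r) X) := by
    rw [← ph3 _ _ (CR r h), ev, ← der_pu, ← der_phD]
    have e : m (pu r) / (-6 * m (phD (C r) X)) * (-6 * m (phD (C r) X)) = m (pu r) := by field_simp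
    have e' := congrArg (dK k K) e
    have h6d : dK k K (-6 : K) = 0 := by
      rw [map_neg]; simpa using dnat (dK k K) 6
    rw [dmul, dmul, h6d, hm, dK_am, dK_am, ← hm] at e'
    rw [map_sub, map_mul, map_mul, ← e']
    rw [show phN (C r) X = pu r from rfl, ← e]
    field_simp
    ring
  rw [← hm]
  constructor
  · intro h0
    rw [h0, zero_mul] at hd
    have := am_inj (k := k) (K := K) (by rw [← hm, ← hd, map_zero] : algebraMap k[X] K _ = algebraMap k[X] K 0)
    exact mul_ne_zero (phM_ne r) (phU_ne r) this
  · have i1 := congrArg m (ph1 (C r) X (CR r h))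
    have i2 := congrArg m (ph2 (C r) X (CR r h))
    have i3 := congrArg m (ff_fac r h)
    set d := dK k K (m (pu r) / m (pv r)) with hd'
    have hX : m (pu r) / m (pv r) * (-6 * m (phD (C r) X)) = m (pu r) := by
      rw [ev]; field_simp
    set x := m (pu r) / m (pv r)
    have eA : m (C (fA r)) = -15 + 6 * m (C r) := by
      simp only [fA, map_add, map_neg, map_mul, C_of, map_ofNat]
    have eB : m (C (fB r)) = 24 - 14 * m (C r) := by
      simp only [fB, map_sub, map_mul, C_of, map_ofNat]
    rw [eA, eB]
    simp only [map_add, map_sub, map_neg, map_mul, map_pow, map_ofNat, pow_one, map_one, one_mul] at i1 i2 i3 hd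
    rw [show phN (C r) X = pu r from rfl, ← hX] at i1
    have h4 : (6 * m (phD (C r) X) ^ 2) ^ 2 ≠ 0 := pow_ne_zero 2 (mul_ne_zero h6K (pow_ne_zero 2 hDK))
    apply mul_left_cancel₀ h4
    have : (6 * m (phD (C r) X) ^ 2) ^ 2 * (m (ff r) * d ^ 2) =
      m (ff r) * (d * (-6 * m (phD (C r) X) ^ 2)) ^ 2 := by ring
    rw [this, hd, i3]
    have : (m X + 2 * m (C r)) * (-7 + 6 * m (C r) - 2 * m X * m (C r) + m X ^ 2) *
      (m (phM (C r) X) * m (phU (C r) X)) ^ 2 = ((m X + 2 * m (C r)) * m (phM (C r) X) ^ 2) *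
       ((-7 + 6 * m (C r) - 2 * m X * m (C r) + m X ^ 2) * m (phU (C r) X) ^ 2) := by ring
    rw [this, ← i2]
    rw [i1]; ring

end
end DS

namespace DS
open Polynomial WeierstrassCurve

section
variable {p : ℕ} [Fact p.Prime]

theorem prod_lin : ∏ c : ZMod p, (X - C c) = (X ^ p - X : (ZMod p)[X]) := by
  have h := prod_multiset_X_sub_C_of_monic_of_roots_card_eq (p := (X ^ p - X : (ZMod p)[X])) ?_ ?_
  · have e := FiniteField.roots_X_pow_card_sub_X (ZMod p)
    rw [ZMod.card] at e
    rw [e] at h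
    exact h
  · apply monic_X_pow_sub
    rw [degree_X]
    exact_mod_cast (Fact.out : p.Prime).one_lt
  · have e := FiniteField.roots_X_pow_card_sub_X (ZMod p)
    rw [ZMod.card] at e
    rw [e, FiniteField.X_pow_card_sub_X_natDegree_eq _ (Fact.out : p.Prime).one_lt]
    simp [ZMod.card]

theorem pow_half (a : ZMod p) (hp2 : p ≠ 2) : (quadraticChar (ZMod p) a : ZMod p) = a ^ ((p - 1) / 2) := by
  have h : ringChar (ZMod p) ≠ 2 := by rwa [ZMod.ringChar_zmod_n]
  rw [quadraticChar_eq_pow_of_char_ne_two' h, ZMod.card]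
  congr 1
  have := (Fact.out : p.Prime).eq_two_or_odd
  omega

noncomputable def NNp (f : (ZMod p)[X]) : (ZMod p)[X] :=
  f * (f ^ ((p - 1) / 2) + 1) ^ 2 - (X ^ p + X) * (X ^ p - X) ^ 2

/-- cancellation exponents -/
noncomputable def ee (f : (ZMod p)[X]) (c : ZMod p) : ℕ := (1 - quadraticChar (ZMod p) (f.eval c)).toNat

theorem ee_val (f : (ZMod p)[X]) (c : ZMod p) :
    ((ee f c : ℕ) : ℤ) = 1 - quadraticChar (ZMod p) (f.eval c) ∧ ee f c ≤ 2 := by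
  rcases quadraticChar_isQuadratic (F := ZMod p) (f.eval c) with h | h | h <;> simp [ee, h]

theorem ee_dvd (hp2 : p ≠ 2) (f : (ZMod p)[X]) (c : ZMod p) : (X - C c) ^ ee f c ∣ NNp f := by
  have hT : (X - C c) ∣ (X ^ p - X : (ZMod p)[X]) := by
    rw [dvd_iff_isRoot]; simp
  have hT2 : (X - C c) ^ ee f c ∣ (X ^ p + X) * (X ^ p - X) ^ 2 := by
    apply Dvd.dvd.mul_left
    exact (pow_dvd_pow _ (ee_val f c).2).trans (pow_dvd_pow_of_dvd hT 2)
  apply dvd_sub _ hT2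
  have hv := pow_half (f.eval c) hp2
  rcases quadraticChar_isQuadratic (F := ZMod p) (f.eval c) with h | h | h
  · simp only [ee, h]
    simp only [sub_zero, Int.toNat_one, pow_one]
    apply Dvd.dvd.mul_right
    rw [dvd_iff_isRoot]
    exact quadraticChar_eq_zero_iff.1 h
  · simp [ee, h]
  · simp only [ee, h]
    apply Dvd.dvd.mul_left
    have : (1 - -1 : ℤ).toNat = 2 := rfl
    rw [this]
    apply pow_dvd_pow_of_dvd
    rw [dvd_iff_isRoot]
    rw [h] at hv
    simp only [IsRoot, eval_add, eval_pow, eval_one, ← hv]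
    simp

theorem ee_not_dvd (hp2 : p ≠ 2) (f : (ZMod p)[X]) (hs : ∀ c, f.eval c = 0 → (derivative f).eval c ≠ 0)
    (c : ZMod p) (h2 : ee f c ≠ 2) : ¬ (X - C c) ^ (ee f c + 1) ∣ NNp f := by
  have hT : (X - C c) ∣ (X ^ p - X : (ZMod p)[X]) := by
    rw [dvd_iff_isRoot]; simp
  intro hd
  have hle := (ee_val f c).2
  have hT2 : (X - C c) ^ (ee f c + 1) ∣ (X ^ p + X) * (X ^ p - X) ^ 2 := by
    apply Dvd.dvd.mul_left
    exact (pow_dvd_pow _ (by omega)).trans (pow_dvd_pow_of_dvd hT 2)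
  have hd' : (X - C c) ^ (ee f c + 1) ∣ f * (f ^ ((p - 1) / 2) + 1) ^ 2 := by
    have := dvd_add hd hT2
    rwa [NNp, sub_add_cancel] at this
  have hv := pow_half (f.eval c) hp2
  have two : (2 : ZMod p) ≠ 0 := by
    have : Fact (2 < p) := ⟨lt_of_le_of_ne (Fact.out : p.Prime).two_le (Ne.symm hp2)⟩
    intro h
    exact (ZMod.neg_one_ne_one (n := p)) (by linear_combination -h)
  rcases quadraticChar_isQuadratic (F := ZMod p) (f.eval c) with h | h | h
  · simp only [ee, h] at hd'
    obtain ⟨q, hq⟩ := hd'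
    have h0 := quadraticChar_eq_zero_iff.1 h
    have hd := congrArg (fun u => (derivative u).eval c) hq
    rw [h] at hv
    simp only [sub_zero, Int.toNat_one, derivative_mul, eval_add, eval_mul, eval_pow, eval_one, ← hv, h0] at hd
    simp [derivative_X_sub_C_pow] at hd
    rcases hd with hd | hd
    · exact hs c h0 hd
    · have hm : (p - 1) / 2 ≠ 0 := by
        have := (Fact.out : p.Prime).two_le
        omega
      rw [zero_pow hm] at hd
      simp at hd
  · simp only [ee, h, sub_self, Int.toNat_zero, zero_add, pow_one] at hd'
    rw [dvd_iff_isRoot] at hd'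
    rw [h] at hv
    simp only [IsRoot, eval_add, eval_mul, eval_pow, eval_one, ← hv] at hd'
    have hne : f.eval c ≠ 0 := by
      intro h0; rw [h0] at h; simp at h
    have : ((1 : ℤ) : ZMod p) + 1 = 2 := by norm_num
    rw [this] at hd'
    exact mul_ne_zero hne (pow_ne_zero 2 two) hd'
  · exact h2 (by simp [ee, h])

theorem cancel (hp2 : p ≠ 2) (f : (ZMod p)[X]) (hs : ∀ c, f.eval c = 0 → (derivative f).eval c ≠ 0)
    (hdeg : (NNp f).natDegree = 2 * p + 1) :
    ∃ u v : (ZMod p)[X], IsCoprime u v ∧ v ≠ 0 ∧ u * (X ^ p - X) ^ 2 = NNp f * v ∧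
      ((max u.natDegree v.natDegree : ℕ) : ℤ) = p + 1 + ∑ c : ZMod p, quadraticChar (ZMod p) (f.eval c) := by
  have hcop : ∀ c d : ZMod p, c ≠ d → IsCoprime (X - C c) (X - C d) := by
    intro c d h
    exact isCoprime_X_sub_C_of_isUnit_sub (by rw [isUnit_iff_ne_zero]; exact sub_ne_zero.2 h)
  obtain ⟨u, hu⟩ : (∏ c : ZMod p, (X - C c) ^ ee f c) ∣ NNp f := by
    apply Finset.prod_dvd_of_coprime
    · intro c _ d _ h
      exact (hcop c d h).pow
    · intro c _; exact ee_dvd hp2 f c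
  have hGne : (∏ c : ZMod p, (X - C c) ^ ee f c) ≠ 0 :=
    (monic_prod_of_monic _ _ fun c _ => (monic_X_sub_C c).pow _).ne_zero
  have hvm : (∏ c : ZMod p, (X - C c) ^ (2 - ee f c)).Monic :=
    (monic_prod_of_monic _ _ fun c _ => (monic_X_sub_C c).pow _)
  have hprod : (∏ c : ZMod p, (X - C c) ^ ee f c) * (∏ c : ZMod p, (X - C c) ^ (2 - ee f c)) = (X ^ p - X) ^ 2 := by
    rw [← prod_lin, ← Finset.prod_mul_distrib, ← Finset.prod_pow]
    apply Finset.prod_congr rfl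
    intro c _
    rw [← pow_add]; congr 1; have := (ee_val f c).2; omega
  refine ⟨u, ∏ c : ZMod p, (X - C c) ^ (2 - ee f c), ?_, hvm.ne_zero, ?_, ?_⟩
  · apply IsCoprime.prod_right
    intro c _
    by_cases h2 : ee f c = 2
    · rw [h2]; simp [isCoprime_one_right]
    apply IsCoprime.pow_right
    apply IsCoprime.symm
    rw [(irreducible_X_sub_C c).coprime_iff_not_dvd]
    intro hd
    apply ee_not_dvd hp2 f hs c h2
    rw [hu, pow_succ]
    exact mul_dvd_mul (Finset.dvd_prod_of_mem (fun c => (X - C c) ^ ee f c) (Finset.mem_univ c)) hd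
  · rw [← hprod, hu]; ring
  · have hu0 : u ≠ 0 := by rintro rfl; rw [hu] at hdeg; simp at hdeg
    have d1 : (∏ c : ZMod p, (X - C c) ^ ee f c).natDegree = ∑ c, ee f c := by
      rw [natDegree_prod_of_monic _ _ fun c _ => (monic_X_sub_C c).pow _]
      simp
    have d2 : (∏ c : ZMod p, (X - C c) ^ (2 - ee f c)).natDegree = ∑ c, (2 - ee f c) := by
      rw [natDegree_prod_of_monic _ _ fun c _ => (monic_X_sub_C c).pow _]
      simp
    have d3 : ∑ c, ee f c + ∑ c, (2 - ee f c) = 2 * p := by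
      rw [← Finset.sum_add_distrib]
      rw [Finset.sum_congr rfl (g := fun _ => 2) (by intro c _; have := (ee_val f c).2; omega)]
      simp [ZMod.card, mul_comm]
    have d4 : ((∑ c, ee f c : ℕ) : ℤ) = p - ∑ c : ZMod p, quadraticChar (ZMod p) (f.eval c) := by
      push_cast
      rw [Finset.sum_congr rfl (fun c _ => (ee_val f c).1), Finset.sum_sub_distrib]
      simp [ZMod.card]
    rw [hu, natDegree_mul hGne hu0, d1] at hdeg
    rw [d2]
    omega

end
end DS

namespace DS
open Polynomial WeierstrassCurve

section
variable {k : Type*} [Field k]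

theorem cub_sep (A B : k) (hD : 4 * A ^ 3 + 27 * B ^ 2 ≠ 0) : (X ^ 3 + C A * X + C B : k[X]).Separable := by
  rw [separable_def]
  have hd : derivative (X ^ 3 + C A * X + C B : k[X]) = 3 * X ^ 2 + C A := by
    simp [map_ofNat]; norm_num
  rw [hd]
  have e : (C (4 * A ^ 3 + 27 * B ^ 2)⁻¹ : k[X]) * (4 * C A ^ 3 + 27 * C B ^ 2) = 1 := by
    have : (4 * C A ^ 3 + 27 * C B ^ 2 : k[X]) = C (4 * A ^ 3 + 27 * B ^ 2) := by
      simp only [map_add, map_mul, map_pow, map_ofNat]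
    rw [this, ← map_mul, inv_mul_cancel₀ hD, map_one]
  refine ⟨C (4 * A ^ 3 + 27 * B ^ 2)⁻¹ * (-18 * C A * X + 27 * C B),
    C (4 * A ^ 3 + 27 * B ^ 2)⁻¹ * (6 * C A * X ^ 2 - 9 * C B * X + 4 * C A ^ 2), ?_⟩
  linear_combination e

theorem cub_mon (A B : k) : (X ^ 3 + C A * X + C B : k[X]).Monic := by monicity!

theorem cub_deg (A B : k) : (X ^ 3 + C A * X + C B : k[X]).natDegree = 3 := by compute_degree!

theorem cub_lin (h3 : (3 : k) ≠ 0) {A B a b : k} (hA : A ≠ 0) (hB : B ≠ 0) (ha : a ≠ 0)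
    (h : (X ^ 3 + C A * X + C B : k[X]) ∣ (C a * X + C b) ^ 3 + C A * (C a * X + C b) + C B) :
    a = 1 ∧ b = 0 := by
  set h0 : k[X] := (C a * X + C b) ^ 3 + C A * (C a * X + C b) + C B with hh0
  have e : h0 = C (a ^ 3) * X ^ 3 + C (3 * a ^ 2 * b) * X ^ 2 + C (3 * a * b ^ 2 + A * a) * X + C (b ^ 3 + A * b + B) := by
    rw [hh0]; simp only [map_add, map_mul, map_pow, map_ofNat]; ring
  have e2 : (X ^ 3 + C A * X + C B : k[X]) ∣ C (3 * a ^ 2 * b) * X ^ 2 + C (3 * a * b ^ 2 + A * a - a ^ 3 * A) * X + C (b ^ 3 + A * b + B - a ^ 3 * B) := by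
    have := dvd_sub h (Dvd.intro_left (C (a ^ 3)) rfl)
    convert this using 1
    rw [e]; simp only [map_add, map_sub, map_mul, map_pow, map_ofNat]; ring
  have e3 := eq_zero_of_dvd_of_natDegree_lt e2 (by
    rw [cub_deg]
    refine lt_of_le_of_lt (b := 2) ?_ (by norm_num)
    compute_degree)
  rw [show (C (3 * a ^ 2 * b) * X ^ 2 + C (3 * a * b ^ 2 + A * a - a ^ 3 * A) * X + C (b ^ 3 + A * b + B - a ^ 3 * B) : k[X]) = C (3 * a ^ 2 * b) * X ^ 2 + C (3 * a * b ^ 2 + A * a - a ^ 3 * A) * X ^ 1 + C (b ^ 3 + A * b + B - a ^ 3 * B) * X ^ 0 by simp] at e3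
  have c2 := congrArg (fun u => coeff u 2) e3
  have c1 := congrArg (fun u => coeff u 1) e3
  have c0 := congrArg (fun u => coeff u 0) e3
  simp only [coeff_add, coeff_C_mul_X_pow, coeff_zero] at c2 c1 c0
  norm_num at c2 c1 c0
  have hb : b = 0 := by
    rcases c2 with (c2 | c2) | c2
    · exact absurd c2 h3
    · exact absurd c2 ha
    · exact c2
  subst hb
  refine ⟨?_, rfl⟩
  have h1 : a ^ 2 = 1 := by
    apply mul_left_cancel₀ (mul_ne_zero hA ha)
    linear_combination -c1
  have h2 : a ^ 3 = 1 := by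
    apply mul_left_cancel₀ hB
    linear_combination -c0
  linear_combination h2 - a * h1
end

section
variable {p : ℕ} [Fact p.Prime] {A B : ZMod p} {f : (ZMod p)[X]} (hf : f = X ^ 3 + C A * X + C B)
  {K : Type*} [Field K] [DecidableEq K] [Algebra (ZMod p)[X] K] [IsFractionRing (ZMod p)[X] K]

theorem hodd (hp2 : p ≠ 2) : 2 * ((p - 1) / 2) + 1 = p := by
  have := (Fact.out : p.Prime).eq_two_or_odd
  omega

theorem NNp_deg (hp2 : p ≠ 2) (hp3 : p ≠ 3) (hf : f = X ^ 3 + C A * X + C B) : (NNp f).natDegree = 2 * p + 1 := by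
  have hm := hodd hp2
  set m := (p - 1) / 2
  have hp5 : 4 < p := by
    have := (Fact.out : p.Prime).two_le
    omega
  have hfp : f ^ p = X ^ (3 * p) + C A * X ^ p + C B := by
    rw [← ZMod.expand_card, hf]; simp only [map_add, map_mul, map_pow, expand_C, expand_X]; ring
  have e : NNp f = X ^ (2 * p + 1) + (X ^ (p + 2) + C A * X ^ p + 2 * f ^ (m + 1) + C A * X + C (B + B)) := by
    have e1 : NNp f = f ^ (2 * m + 1) + 2 * f ^ (m + 1) + f - (X ^ p + X) * (X ^ p - X) ^ 2 := by
      rw [NNp]; ring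
    rw [e1, hm, hfp]
    nth_rewrite 2 [hf]
    rw [map_add]
    ring
  have hfd : f.natDegree = 3 := by rw [hf]; exact cub_deg A B
  have hd2 : (2 * f ^ (m + 1) : (ZMod p)[X]).natDegree ≤ 3 * (m + 1) := by
    rw [← C_of]
    refine (natDegree_C_mul_le _ _).trans (natDegree_pow_le.trans ?_)
    rw [hfd]; omega
  rw [e]
  rw [natDegree_add_eq_left_of_natDegree_lt]
  · simp
  rw [natDegree_X_pow]
  refine lt_of_le_of_lt (b := 2 * p) ?_ (by omega)
  refine natDegree_add_le_of_degree_le (natDegree_add_le_of_degree_le (natDegree_add_le_of_degree_le (natDegree_add_le_of_degree_le ?_ ?_) ?_) ?_) ?_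
  · rw [natDegree_X_pow]; omega
  · exact (natDegree_C_mul_X_pow_le _ _).trans (by omega)
  · omega
  · exact ((natDegree_C_mul_le _ _).trans natDegree_X_le).trans (by omega)
  · rw [natDegree_C]; omega

/-- Frobenius point -/
theorem frob_pt (hp2 : p ≠ 2) (h2 : (2 : ZMod p) ≠ 0) (hf : f = X ^ 3 + C A * X + C B) :
    ∃ h, DRel (dK (ZMod p) K) (algebraMap (ZMod p)[X] K (C A)) (algebraMap (ZMod p)[X] K (C B)) (algebraMap (ZMod p)[X] K f)
      (Affine.Point.some (algebraMap (ZMod p)[X] K f * algebraMap (ZMod p)[X] K (X ^ p))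
        (algebraMap (ZMod p)[X] K f ^ 2 * algebraMap (ZMod p)[X] K (f ^ ((p - 1) / 2))) h) 0 := by
  have hf0 : f ≠ 0 := by rw [hf]; exact (cub_mon A B).ne_zero
  have hfp : f ^ p = (X ^ p) ^ 3 + C A * X ^ p + C B := by
    rw [← ZMod.expand_card, hf]; simp only [map_add, map_mul, map_pow, expand_C, expand_X]
  apply mkPt (dK (ZMod p) K) (am_two (k := ZMod p) h2) (am_ne.2 hf0) (by rw [dK_am]; simp) (by rw [dK_am]; simp)
  · simp only [← map_pow, ← map_mul, ← map_add]
    congr 1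
    rw [← hfp]
    rw [← pow_mul, ← pow_succ', mul_comm, hodd hp2]
  · exact am_ne.2 (pow_ne_zero _ hf0)
  · rw [dK_am]; simp [derivative_X_pow]

theorem iota_pt (h2 : (2 : ZMod p) ≠ 0) (hf : f = X ^ 3 + C A * X + C B) :
    ∃ h, DRel (dK (ZMod p) K) (algebraMap (ZMod p)[X] K (C A)) (algebraMap (ZMod p)[X] K (C B)) (algebraMap (ZMod p)[X] K f)
      (Affine.Point.some (algebraMap (ZMod p)[X] K f * algebraMap (ZMod p)[X] K X)
        (algebraMap (ZMod p)[X] K f ^ 2 * 1) h) 1 := by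
  have hf0 : f ≠ 0 := by rw [hf]; exact (cub_mon A B).ne_zero
  apply mkPt (dK (ZMod p) K) (am_two (k := ZMod p) h2) (am_ne.2 hf0) (by rw [dK_am]; simp) (by rw [dK_am]; simp)
  · rw [hf]; simp
  · exact one_ne_zero
  · rw [dK_am]; simp

theorem count_pt (hp2 : p ≠ 2) (hp3 : p ≠ 3) (h2 : (2 : ZMod p) ≠ 0) (hD : 4 * A ^ 3 + 27 * B ^ 2 ≠ 0)
    (hf : f = X ^ 3 + C A * X + C B)
    {hF} {hi} {F i : (WW A B f K).Point}
    (eF : F = (Affine.Point.some (algebraMap (ZMod p)[X] K f * algebraMap (ZMod p)[X] K (X ^ p))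
        (algebraMap (ZMod p)[X] K f ^ 2 * algebraMap (ZMod p)[X] K (f ^ ((p - 1) / 2))) hF))
    (ei : i = (Affine.Point.some (algebraMap (ZMod p)[X] K f * algebraMap (ZMod p)[X] K X)
        (algebraMap (ZMod p)[X] K f ^ 2 * 1) hi)) :
    dg (F - i) = p + 1 + ∑ c : ZMod p, quadraticChar (ZMod p) (f.eval c) := by
  have hf0 : f ≠ 0 := by rw [hf]; exact (cub_mon A B).ne_zero
  have hf0' : algebraMap (ZMod p)[X] K f ≠ 0 := am_ne.2 hf0
  obtain ⟨u, v, hc, hv, huv, hdeg⟩ := cancel hp2 f (by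
    intro c hc hc'
    obtain ⟨s, t, e⟩ := cub_sep A B hD
    rw [← hf] at e
    have := congrArg (eval c) e
    simp [hc, hc'] at this) (NNp_deg hp2 hp3 hf)
  rw [← hdeg]
  apply dg_eq h2 hD hf0
  subst eF ei
  obtain ⟨hn, en⟩ := Wc_neg hi
  have hXX : (X ^ p - X : (ZMod p)[X]) ≠ 0 := FiniteField.X_pow_card_sub_X_ne_zero _ (Fact.out : p.Prime).one_lt
  have hXX' : algebraMap (ZMod p)[X] K (X ^ p) - algebraMap (ZMod p)[X] K X ≠ 0 := by
    rw [← map_sub]; exact am_ne.2 hXX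
  rw [sub_eq_add_neg, en]
  obtain ⟨hs, es⟩ := Wc_add hF hn (by
    intro h
    exact hXX' (sub_eq_zero.2 (mul_left_cancel₀ hf0' h)))
  rw [es]
  have ex : ((algebraMap (ZMod p)[X] K f ^ 2 * algebraMap (ZMod p)[X] K (f ^ ((p - 1) / 2)) - -(algebraMap (ZMod p)[X] K f ^ 2 * 1)) / (algebraMap (ZMod p)[X] K f * algebraMap (ZMod p)[X] K (X ^ p) - algebraMap (ZMod p)[X] K f * algebraMap (ZMod p)[X] K X)) ^ 2 - algebraMap (ZMod p)[X] K f * algebraMap (ZMod p)[X] K (X ^ p) - algebraMap (ZMod p)[X] K f * algebraMap (ZMod p)[X] K X = algebraMap (ZMod p)[X] K f * (algebraMap (ZMod p)[X] K (NNp f) / algebraMap (ZMod p)[X] K (X ^ p - X) ^ 2) := by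
    have e0 : algebraMap (ZMod p)[X] K (NNp f) = algebraMap (ZMod p)[X] K f * (algebraMap (ZMod p)[X] K (f ^ ((p - 1) / 2)) + 1) ^ 2 - (algebraMap (ZMod p)[X] K (X ^ p) + algebraMap (ZMod p)[X] K X) * (algebraMap (ZMod p)[X] K (X ^ p) - algebraMap (ZMod p)[X] K X) ^ 2 := by
      rw [NNp]; simp only [map_sub, map_mul, map_add, map_one, map_pow]
    rw [e0, map_sub, ← mul_sub]
    generalize algebraMap (ZMod p)[X] K (X ^ p) = x at *
    generalize algebraMap (ZMod p)[X] K X = x' at *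
    field_simp
    ring
  obtain ⟨h', e'⟩ := some_congr ex rfl hs
  rw [e']
  apply rep_some hc
  rw [div_mul_eq_mul_div, div_eq_iff (pow_ne_zero 2 (am_ne.2 hXX)), ← map_pow, ← map_mul, ← map_mul, huv]

theorem frob_uniq (hp2 : p ≠ 2) (h2 : (2 : ZMod p) ≠ 0) (h3 : (3 : ZMod p) ≠ 0) (hD : 4 * A ^ 3 + 27 * B ^ 2 ≠ 0)
    (hA : A ≠ 0) (hB : B ≠ 0)
    (hf : f = X ^ 3 + C A * X + C B)
    {hF} {F P : (WW A B f K).Point}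
    (eF : F = (Affine.Point.some (algebraMap (ZMod p)[X] K f * algebraMap (ZMod p)[X] K (X ^ p))
        (algebraMap (ZMod p)[X] K f ^ 2 * algebraMap (ZMod p)[X] K (f ^ ((p - 1) / 2))) hF))
    (hg : Good P) (hdg : dg P = p)
    (h : DRel (dK (ZMod p) K) (algebraMap (ZMod p)[X] K (C A)) (algebraMap (ZMod p)[X] K (C B)) (algebraMap (ZMod p)[X] K f) P 0) :
    P = F ∨ P = -F := by
  have hp0 : 0 < p := (Fact.out : p.Prime).pos
  have hf0 : f ≠ 0 := by rw [hf]; exact (cub_mon A B).ne_zero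
  have hf0' : algebraMap (ZMod p)[X] K f ≠ 0 := am_ne.2 hf0
  obtain ⟨u, v, hr, hv⟩ := hg
  obtain ⟨u', v', rfl, rfl⟩ := DRel0 (p := p) hf0 h hr
  rw [dg_eq h2 hD hf0 hr] at hdg
  have hmax : max (natDegree (expand (ZMod p) p u')) (natDegree (expand (ZMod p) p v')) = p := by exact_mod_cast hdg
  rw [hmax] at hv
  rw [natDegree_expand, natDegree_expand, Nat.mul_max_mul_right] at hmax
  have hm1 : max u'.natDegree v'.natDegree = 1 := by
    have : max u'.natDegree v'.natDegree * p = 1 * p := by rw [hmax, one_mul]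
    exact Nat.eq_of_mul_eq_mul_right hp0 this
  have hv1 : v'.coeff 1 = 0 := by
    have := coeff_expand_mul hp0 v' 1
    rw [one_mul, hv] at this
    exact this.symm
  have hv' : v' = C (v'.coeff 0) := by
    apply eq_C_of_natDegree_le_zero
    by_contra hh
    have : v'.natDegree = 1 := by omega
    have h0 : v'.leadingCoeff = 0 := by rw [leadingCoeff, this, hv1]
    rw [leadingCoeff_eq_zero] at h0
    rw [h0] at this; simp at this
  have hu' : u' = C (u'.coeff 1) * X + C (u'.coeff 0) := eq_X_add_C_of_natDegree_le_one (by omega)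
  set v0 := v'.coeff 0
  set a := u'.coeff 1 with ha
  set b := u'.coeff 0
  have hu1 : u'.natDegree = 1 := by rw [hv', natDegree_C] at hm1; omega
  have ha0 : a ≠ 0 := by
    intro h0
    rw [h0] at hu'
    rw [hu'] at hu1
    simp at hu1
  have hv0 : v0 ≠ 0 := by
    intro h0
    have h1 := hr.1
    rw [hv', h0, map_zero, map_zero, isCoprime_zero_right] at h1
    have := natDegree_eq_zero_of_isUnit h1
    rw [natDegree_expand, hu1] at this
    omega
  rcases P with _ | ⟨x, y, hxy⟩
  · exfalso
    have := hr.2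
    rw [← Affine.Point.zero_def] at this
    simp at this
    rw [hv'] at this
    simp [hv0] at this
  have hx : x = algebraMap (ZMod p)[X] K f * algebraMap (ZMod p)[X] K (expand (ZMod p) p (C (a / v0) * X + C (b / v0))) := by
    have := hr.2
    simp only [Affine.Point.xRep_some, Matrix.cons_val_zero, Matrix.cons_val_one, mul_one] at this
    have hvv : algebraMap (ZMod p)[X] K (C v0) ≠ 0 := am_ne.2 (C_ne_zero.2 hv0)
    apply mul_right_cancel₀ hvv
    rw [hv', expand_C] at this
    rw [this, mul_assoc, ← map_mul _ _ (C v0)]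
    congr 2
    rw [hu']
    have e1 : (C (a / v0) : (ZMod p)[X]) * C v0 = C a := by rw [← map_mul, div_mul_cancel₀ _ hv0]
    have e2 : (C (b / v0) : (ZMod p)[X]) * C v0 = C b := by rw [← map_mul, div_mul_cancel₀ _ hv0]
    simp only [map_add, map_mul, expand_C, expand_X]
    linear_combination (-X ^ p : (ZMod p)[X]) * e1 - e2
  have ha0' : a / v0 ≠ 0 := div_ne_zero ha0 hv0
  generalize a / v0 = s at *
  generalize b / v0 = t at *
  have key : s = 1 ∧ t = 0 := by
    apply cub_lin h3 hA hB ha0'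
    rw [← hf]
    set hh := (C s * X + C t) ^ 3 + C A * (C s * X + C t) + C B
    have hy : y ^ 2 = algebraMap (ZMod p)[X] K (f ^ 3 * hh ^ p) := by
      rw [Wc_eqn hxy, ← ZMod.expand_card hh]
      simp only [hh, map_add, map_mul, map_pow, expand_C] at hx ⊢
      rw [hx]
      ring
    obtain ⟨y0, hy0⟩ : ∃ y0, algebraMap (ZMod p)[X] K y0 = y := by
      apply IsIntegrallyClosed.exists_algebraMap_eq_of_isIntegral_pow (n := 2) (by norm_num)
      rw [hy]; exact isIntegral_algebraMap
    rw [← hy0, ← map_pow] at hy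
    have hy1 := am_inj hy
    have hsq : Squarefree f := by rw [hf]; exact (cub_sep A B hD).squarefree
    have d1 : f ∣ y0 := by
      rw [← hsq.dvd_pow_iff_dvd (n := 2) (by norm_num), hy1]
      exact Dvd.dvd.mul_right (dvd_pow_self _ (by norm_num)) _
    obtain ⟨y1, rfl⟩ := d1
    have hy2 : y1 ^ 2 = f * hh ^ p := by
      apply mul_left_cancel₀ (pow_ne_zero 2 hf0)
      linear_combination hy1
    have d2 : f ∣ y1 := by
      rw [← hsq.dvd_pow_iff_dvd (n := 2) (by norm_num), hy2]
      exact Dvd.intro _ rfl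
    obtain ⟨y2, rfl⟩ := d2
    rw [← hsq.dvd_pow_iff_dvd (n := p) (by omega)]
    refine ⟨y2 ^ 2, mul_left_cancel₀ hf0 ?_⟩
    linear_combination -hy2
  obtain ⟨rfl, rfl⟩ := key
  rw [eF]
  have := (Affine.Point.X_eq_iff (h₁ := hxy) (h₂ := hF)).1 (by rw [hx]; simp)
  exact this
end
end DS

namespace DS
open Polynomial WeierstrassCurve

section
variable {p : ℕ} [Fact p.Prime]
  {K : Type*} [Field K] [DecidableEq K] [Algebra (ZMod p)[X] K] [IsFractionRing (ZMod p)[X] K]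

theorem phi_pt {r c : ZMod p} (hr : r ^ 2 = 2) (hc : c ^ 2 = -6) (h2 : (2 : ZMod p) ≠ 0) (h3 : (3 : ZMod p) ≠ 0) :
    ∃ P : (WW (fA r) (fB r) (ff r) K).Point,
     DRel (dK (ZMod p) K) (algebraMap (ZMod p)[X] K (C (fA r))) (algebraMap (ZMod p)[X] K (C (fB r))) (algebraMap (ZMod p)[X] K (ff r))
      P (algebraMap (ZMod p)[X] K (C c)) ∧ IsRep P (pu r) (pv r) := by
  have h6 : (6 : ZMod p) ≠ 0 := by
    have : (6 : ZMod p) = 2 * 3 := by norm_num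
    rw [this]; exact mul_ne_zero h2 h3
  have hc0 : c ≠ 0 := by
    rintro rfl
    apply h6; linear_combination hc
  have hcK : algebraMap (ZMod p)[X] K (C c) ≠ 0 := am_ne.2 (C_ne_zero.2 hc0)
  have hcK2 : algebraMap (ZMod p)[X] K (C c) ^ 2 = -6 := by
    rw [← map_pow, ← map_pow, hc]; simp [map_ofNat]
  have hf0 : ff r ≠ 0 := (cub_mon _ _).ne_zero
  have hpv : pv r ≠ 0 := by
    rw [pv]
    refine mul_ne_zero (C_ne_zero.2 (neg_ne_zero.2 h6)) ?_
    intro h0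
    have := phD_deg (k := ZMod p) r
    rw [h0] at this; simp at this
  obtain ⟨p1, p2⟩ := phi_id (K := K) r hr h2 h3
  obtain ⟨h, hD⟩ := mkPt (dK (ZMod p) K) (am_two (k := ZMod p) h2) (am_ne.2 hf0)
    (a := algebraMap (ZMod p)[X] K (C (fA r))) (b := algebraMap (ZMod p)[X] K (C (fB r)))
    (by rw [dK_am]; simp) (by rw [dK_am]; simp)
    (X := algebraMap (ZMod p)[X] K (pu r) / algebraMap (ZMod p)[X] K (pv r))
    (Y := dK (ZMod p) K (algebraMap (ZMod p)[X] K (pu r) / algebraMap (ZMod p)[X] K (pv r)) / algebraMap (ZMod p)[X] K (C c))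
    (c := algebraMap (ZMod p)[X] K (C c))
    (by
      rw [div_pow, mul_div_assoc', p2, hcK2]
      rw [mul_div_cancel_left₀]
      rw [← hcK2]; exact pow_ne_zero 2 hcK) (div_ne_zero p1 hcK) (by field_simp)
  refine ⟨_, hD, rep_some (pu_cop r hr h2 h3) ?_ h⟩
  exact div_mul_cancel₀ _ (am_ne.2 hpv)

theorem main17 (hp7 : 7 ≤ p) {r c : ZMod p} (hr : r ^ 2 = 2) (hc : c ^ 2 = -6) (hA : fA r ≠ 0) (hB : fB r ≠ 0)
    (x y : ℤ) (hxy : (p : ℤ) = x ^ 2 + 6 * y ^ 2) :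
    (∑ t : ZMod p, quadraticChar (ZMod p) ((ff r).eval t)) ^ 2 = 4 * x ^ 2 := by
  classical
  have hpp : p.Prime := Fact.out
  have hn : ∀ n : ℕ, 0 < n → n < p → ((n : ℕ) : ZMod p) ≠ 0 := by
    intro n h0 h1 h
    rw [ZMod.natCast_eq_zero_iff] at h
    exact absurd (Nat.le_of_dvd h0 h) (by omega)
  have h2 : (2 : ZMod p) ≠ 0 := by exact_mod_cast hn 2 (by norm_num) (by omega)
  have h3 : (3 : ZMod p) ≠ 0 := by exact_mod_cast hn 3 (by norm_num) (by omega)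
  have h6 : (6 : ZMod p) ≠ 0 := by exact_mod_cast hn 6 (by norm_num) (by omega)
  have hp2 : p ≠ 2 := by omega
  have hp3 : p ≠ 3 := by omega
  have hf0 : ff r ≠ 0 := (cub_mon _ _).ne_zero
  have hf : ff r = X ^ 3 + C (fA r) * X + C (fB r) := rfl
  have hD : 4 * fA r ^ 3 + 27 * fB r ^ 2 ≠ 0 := nz_of_mul 2 3 h2 h3 (disc_val r hr)
  let K := FractionRing (ZMod p)[X]
  obtain ⟨hF, DF⟩ := frob_pt (K := K) hp2 h2 hf
  obtain ⟨hi, Di⟩ := iota_pt (K := K) h2 hf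
  obtain ⟨φ, Dφ, Rφ⟩ := phi_pt (K := K) hr hc h2 h3
  generalize eF : Affine.Point.some _ _ hF = F at DF
  generalize ei : Affine.Point.some _ _ hi = ι at Di
  have para := dg_para (K := K) h2 hD hf0
  have Rι : IsRep (A := fA r) (B := fB r) (f := ff r) (K := K) ι X 1 := by
    rw [← ei]; apply rep_some isCoprime_one_right; simp
  have dι : dg (A := fA r) (B := fB r) (f := ff r) (K := K) ι = 1 := by rw [dg_eq h2 hD hf0 Rι]; simp
  have Gι : Good (A := fA r) (B := fB r) (f := ff r) (K := K) ι := ⟨_, _, Rι, by simp [coeff_one]⟩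
  have pvd : (pv r).natDegree = 5 := by
    rw [pv, natDegree_C_mul (neg_ne_zero.2 h6), phD_deg]
  have dφ : dg φ = 6 := by rw [dg_eq h2 hD hf0 Rφ, pu_deg, pvd]; simp
  have Gφ : Good φ := ⟨_, _, Rφ, by
    rw [pu_deg, pvd]
    exact coeff_eq_zero_of_natDegree_lt (by rw [pvd]; norm_num)⟩
  have Gall : ∀ m n : ℤ, Good (A := fA r) (B := fB r) (f := ff r) (K := K) (m • ι + n • φ) := by
    intro m n
    exact (goodSub h2 hD hf0).add_mem ((goodSub h2 hD hf0).zsmul_mem Gι m) ((goodSub h2 hD hf0).zsmul_mem Gφ n)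
  have Dall : ∀ m n : ℤ, (m : ZMod p) + n * c = 0 → DRel (dK (ZMod p) K) (algebraMap (ZMod p)[X] K (C (fA r))) (algebraMap (ZMod p)[X] K (C (fB r))) (algebraMap (ZMod p)[X] K (ff r)) (m • ι + n • φ) 0 := by
    intro m n hmn
    have hDK : 4 * (algebraMap (ZMod p)[X] K (C (fA r))) ^ 3 + 27 * (algebraMap (ZMod p)[X] K (C (fB r))) ^ 2 ≠ 0 := by
      have : 4 * (algebraMap (ZMod p)[X] K (C (fA r))) ^ 3 + 27 * (algebraMap (ZMod p)[X] K (C (fB r))) ^ 2 = algebraMap (ZMod p)[X] K (C (4 * fA r ^ 3 + 27 * fB r ^ 2)) := by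
        simp only [map_add, map_mul, map_pow, map_ofNat]
      rw [this]; exact am_ne.2 (C_ne_zero.2 hD)
    let S := DSub (dK (ZMod p) K) (a := algebraMap (ZMod p)[X] K (C (fA r))) (b := algebraMap (ZMod p)[X] K (C (fB r))) (am_two (k := ZMod p) h2) (am_ne.2 hf0 : algebraMap (ZMod p)[X] K (ff r) ≠ 0) (by rw [dK_am]; simp) (ns_of_disc hDK)
    have m1 : (ι, (1 : K)) ∈ S := Di
    have m2 : (φ, algebraMap (ZMod p)[X] K (C c)) ∈ S := Dφ
    have m3 := S.add_mem (S.zsmul_mem m1 m) (S.zsmul_mem m2 n)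
    have m4 : DRel (dK (ZMod p) K) (algebraMap (ZMod p)[X] K (C (fA r))) (algebraMap (ZMod p)[X] K (C (fB r))) (algebraMap (ZMod p)[X] K (ff r)) (m • ι + n • φ) (m • (1 : K) + n • algebraMap (ZMod p)[X] K (C c)) := m3
    have e : (m • (1 : K) + n • algebraMap (ZMod p)[X] K (C c)) = 0 := by
      have : algebraMap (ZMod p)[X] K (C ((m : ZMod p) + n * c)) = 0 := by rw [hmn]; simp
      rw [← this]
      simp
    rwa [e] at m4
  have form := q_form dg para ι φ
  generalize hb : dg (ι + φ) - dg ι - dg φ = b at form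
  rw [dι, dφ] at form
  have hb0 : b = 0 := by
    have h24 : b ^ 2 ≤ 24 := by
      have h := dg_nonneg h2 hD hf0 (b • ι + (-2 : ℤ) • φ)
      rw [form] at h
      nlinarith
    let m : ℤ := -(c.val : ℤ)
    have hm : (m : ZMod p) = -c := by simp [m]
    have h := p_dvd_dg (p := p) h2 hD hf0 (Dall m 1 (by rw [hm]; simp))
    rw [form] at h
    have h1 : (p : ℤ) ∣ m ^ 2 + 6 := by
      rw [← ZMod.intCast_zmod_eq_zero_iff_dvd]; push_cast; rw [hm]; linear_combination hc
    have h2' : (p : ℤ) ∣ m * b := by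
      have e : m * b = m ^ 2 * 1 + m * 1 * b + 1 ^ 2 * 6 - (m ^ 2 + 6) := by ring
      rw [e]; exact dvd_sub h h1
    rcases (Nat.prime_iff_prime_int.1 hpp).dvd_or_dvd h2' with h' | h'
    · exfalso
      have : (p : ℤ) ∣ 6 := by
        have e : (6 : ℤ) = m ^ 2 + 6 - m * m := by ring
        rw [e]; exact dvd_sub h1 (Dvd.dvd.mul_left h' m)
      have := Int.le_of_dvd (by norm_num) this
      omega
    · by_contra hne
      have := Int.le_of_dvd (abs_pos.2 hne) ((dvd_abs _ _).2 h')
      have h7 : (7 : ℤ) ≤ |b| := le_trans (by exact_mod_cast hp7) this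
      nlinarith [sq_abs b]
  subst hb0
  obtain ⟨z, hz, hz2⟩ : ∃ z : ℤ, (x : ZMod p) + z * c = 0 ∧ z ^ 2 = y ^ 2 := by
    have h := congrArg (fun t : ℤ => (t : ZMod p)) hxy
    simp only [Int.cast_natCast, CharP.cast_eq_zero, Int.cast_add, Int.cast_mul, Int.cast_pow, Int.cast_ofNat] at h
    have : ((x : ZMod p) + y * c) * (x + (-y) * c) = 0 := by
      linear_combination -h - y ^ 2 * hc
    rcases mul_eq_zero.1 this with h' | h'
    · exact ⟨y, h', rfl⟩
    · exact ⟨-y, by push_cast; exact h', by ring⟩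
  have hα : dg (A := fA r) (B := fB r) (f := ff r) (K := K) (x • ι + z • φ) = p := by
    rw [form]; linear_combination 6 * hz2 - hxy
  have cnt := count_pt hp2 hp3 h2 hD hf eF.symm ei.symm
  rcases frob_uniq hp2 h2 h3 hD hA hB hf eF.symm (Gall x z) hα (Dall x z hz) with h | h
  · have e : F - ι = (x - 1) • ι + z • φ := by rw [← h, sub_smul, one_smul]; abel
    rw [e, form] at cnt
    have : ∑ t : ZMod p, quadraticChar (ZMod p) ((ff r).eval t) = - 2 * x := by
      linear_combination -cnt - hxy + 6 * hz2
    rw [this]; ring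
  · have e : F - ι = (-x - 1) • ι + (-z) • φ := by
      have : F = -(x • ι + z • φ) := by rw [h, neg_neg]
      rw [this, sub_smul, one_smul, neg_smul, neg_smul]; abel
    rw [e, form] at cnt
    have : ∑ t : ZMod p, quadraticChar (ZMod p) ((ff r).eval t) = 2 * x := by
      linear_combination -cnt - hxy + 6 * hz2
    rw [this]; ring
end
end DS

namespace DS
open Polynomial WeierstrassCurve

section
variable {p : ℕ} [Fact p.Prime]

theorem desc_mod (j : ℕ) : ((j.descFactorial (p - 1) : ℕ) : ZMod p) = if j % p = p - 1 then -1 else 0 := by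
  have hp := (Fact.out : p.Prime).two_le
  rw [Nat.descFactorial_eq_factorial_mul_choose]
  push_cast
  rw [ZMod.wilsons_lemma]
  have h := Choose.choose_modEq_choose_mod_mul_choose_div_nat (p := p) (n := j) (k := p - 1)
  rw [(ZMod.natCast_eq_natCast_iff _ _ _).2 h, Nat.mod_eq_of_lt (by omega : p - 1 < p), Nat.div_eq_of_lt (by omega : p - 1 < p)]
  have := Nat.mod_lt j (by omega : 0 < p)
  split_ifs with h1
  · rw [h1]; simp
  · rw [Nat.choose_eq_zero_of_lt (by omega)]; simp

theorem dp_mono (a : ZMod p) (j : ℕ) : derivative^[p - 1] (C a * X ^ j : (ZMod p)[X]) =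
    if j % p = p - 1 then - C a * X ^ (j - (p - 1)) else 0 := by
  rw [iterate_derivative_C_mul, iterate_derivative_X_pow_eq_C_mul, desc_mod]
  split_ifs <;> simp

theorem dp_der (g : (ZMod p)[X]) : derivative^[p - 1] (derivative g) = 0 := by
  rw [← Function.iterate_succ_apply, Nat.succ_eq_add_one, Nat.sub_add_cancel (Fact.out : p.Prime).one_le,
    ← factorial_smul_hasseDeriv]
  rw [LinearMap.smul_apply, ← Nat.cast_smul_eq_nsmul (ZMod p)]
  have : ((p.factorial : ℕ) : ZMod p) = 0 := by
    rw [ZMod.natCast_eq_zero_iff]; exact (Nat.Prime.dvd_factorial Fact.out).2 le_rfl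
  rw [this, zero_smul]

theorem dp_pow_mul (g h : (ZMod p)[X]) (n : ℕ) : derivative^[n] (g ^ p * h) = g ^ p * derivative^[n] h := by
  induction n with
  | zero => rfl
  | succ n ih =>
    rw [Function.iterate_succ_apply', Function.iterate_succ_apply', ih, derivative_mul, derivative_pow]
    simp

theorem dp_add (g h : (ZMod p)[X]) (n : ℕ) : derivative^[n] (g + h) = derivative^[n] g + derivative^[n] h :=
  iterate_map_add derivative n g h

/-- the multinomial derivative -/
theorem add_pow_der (g h : (ZMod p)[X]) : ∃ q : (ZMod p)[X],
    (g + h) ^ (p - 1) * derivative (g + h) = g ^ (p - 1) * derivative g + h ^ (p - 1) * derivative h + derivative q := by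
  have hp : p.Prime := Fact.out
  obtain ⟨n, hn⟩ : ∃ n, p = n + 2 := ⟨p - 2, by have := hp.two_le; omega⟩
  have he : ∀ i, 0 < i → i < p → p * (p.choose i / p) = p.choose i := by
    intro i h0 h1
    exact Nat.mul_div_cancel' (hp.dvd_choose_self (by omega) h1)
  have e1 : ∀ i, i < n + 1 → (p.choose (i + 1) / p) * (i + 1) = (n + 1).choose i := by
    intro i hi
    apply Nat.eq_of_mul_eq_mul_left hp.pos
    rw [← mul_assoc, he (i + 1) (by omega) (by omega)]
    have := Nat.add_one_mul_choose_eq (n + 1) i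
    rw [hn]; linarith
  have e2 : ∀ i, i < n + 1 → (p.choose (i + 1) / p) * (n + 1 - i) = (n + 1).choose (i + 1) := by
    intro i hi
    apply Nat.eq_of_mul_eq_mul_left hp.pos
    rw [← mul_assoc, he (i + 1) (by omega) (by omega)]
    have := Nat.choose_mul_succ_eq (n + 1) (i + 1)
    rw [hn]
    have h' : n + 1 + 1 - (i + 1) = n + 1 - i := by omega
    rw [h'] at this
    linarith
  refine ⟨∑ i ∈ Finset.range (n + 1), ((p.choose (i + 1) / p : ℕ) : (ZMod p)[X]) * (g ^ (i + 1) * h ^ (n + 1 - i)), ?_⟩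
  have d : derivative (∑ i ∈ Finset.range (n + 1), ((p.choose (i + 1) / p : ℕ) : (ZMod p)[X]) * (g ^ (i + 1) * h ^ (n + 1 - i)))
     = (∑ i ∈ Finset.range (n + 1), g ^ i * h ^ (n + 1 - i) * ((n + 1).choose i : (ZMod p)[X])) * derivative g
       + (∑ i ∈ Finset.range (n + 1), g ^ (i + 1) * h ^ (n + 1 - (i + 1)) * ((n + 1).choose (i + 1) : (ZMod p)[X])) * derivative h := by
    rw [derivative_sum, Finset.sum_mul, Finset.sum_mul, ← Finset.sum_add_distrib]
    apply Finset.sum_congr rfl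
    intro i hi
    have hi' := Finset.mem_range.1 hi
    rw [← e1 i hi', ← e2 i hi', derivative_natCast_mul, derivative_mul, derivative_pow, derivative_pow]
    rw [show n + 1 - (i + 1) = n + 1 - i - 1 by omega]
    simp only [Nat.add_sub_cancel, C_eq_natCast]
    push_cast
    ring
  rw [d, show p - 1 = n + 1 by omega, derivative_add]
  have b1 := add_pow g h (n + 1)
  have b2 := b1
  rw [Finset.sum_range_succ] at b1
  rw [Finset.sum_range_succ'] at b2
  simp only [Nat.sub_self, pow_zero, mul_one, Nat.choose_self, Nat.cast_one, Nat.choose_zero_right, one_mul, Nat.sub_zero] at b1 b2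
  linear_combination derivative g * b1 + derivative h * b2

theorem dp_cart (g : (ZMod p)[X]) : derivative^[p - 1] (g ^ (p - 1) * derivative g) = - (derivative g) ^ p := by
  have hp : p.Prime := Fact.out
  have hp2 := hp.two_le
  induction g using Polynomial.induction_on' with
  | add g h ihg ihh =>
    obtain ⟨q, hq⟩ := add_pow_der g h
    rw [hq, dp_add, dp_add, ihg, ihh, dp_der, derivative_add, add_pow_char]
    ring
  | monomial n a =>
    rw [derivative_monomial, ← C_mul_X_pow_eq_monomial, ← C_mul_X_pow_eq_monomial]
    rcases n with _ | n
    · simp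
      exact hp.ne_zero
    have e : (C a * X ^ (n + 1)) ^ (p - 1) * (C (a * ((n + 1 : ℕ) : ZMod p)) * X ^ (n + 1 - 1)) =
      C (a * ((n + 1 : ℕ) : ZMod p)) * X ^ (p * n + (p - 1)) := by
      rw [show p * n + (p - 1) = (n + 1) * (p - 1) + n by
        obtain ⟨s, rfl⟩ : ∃ s, p = s + 1 := ⟨p - 1, by omega⟩
        simp; ring]
      have ha : (C a : (ZMod p)[X]) ^ (p - 1) * C a = C a := by
        rw [← pow_succ, Nat.sub_add_cancel hp.one_le, ← C_pow, ZMod.pow_card]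
      simp only [Nat.add_sub_cancel, mul_pow, map_mul, ← pow_mul]
      rw [pow_add]
      linear_combination X ^ ((n + 1) * (p - 1)) * X ^ n * C ((n + 1 : ℕ) : ZMod p) * ha
    rw [e, dp_mono, if_pos (by rw [Nat.mul_add_mod, Nat.mod_eq_of_lt (by omega)]), Nat.add_sub_cancel, mul_pow, ← C_pow, ZMod.pow_card]
    simp only [Nat.add_sub_cancel]
    rw [← pow_mul, mul_comm n p]; ring

theorem sum_eval (g : (ZMod p)[X]) (hg : g.natDegree < 2 * (p - 1)) : ∑ c : ZMod p, g.eval c = - g.coeff (p - 1) := by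
  have hp : p.Prime := Fact.out
  have hp2 := hp.two_le
  have hs : ∀ j, j < 2 * (p - 1) → ∑ c : ZMod p, c ^ j = if j = p - 1 then -1 else 0 := by
    intro j hj
    split_ifs with h
    · rw [h]
      have : ∀ c : ZMod p, c ^ (p - 1) = 1 - if c = 0 then 1 else 0 := by
        intro c
        split_ifs with h0
        · rw [h0, zero_pow (by omega)]; simp
        · rw [ZMod.pow_card_sub_one_eq_one h0]; simp
      simp [this]
    · by_cases h1 : j < p - 1
      · exact FiniteField.sum_pow_lt_card_sub_one _ j (by rwa [ZMod.card])
      · rw [← FiniteField.sum_pow_lt_card_sub_one (ZMod p) (j - (p - 1)) (by rw [ZMod.card]; omega)]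
        apply Finset.sum_congr rfl
        intro c _
        by_cases h0 : c = 0
        · rw [h0, zero_pow (by omega), zero_pow (by omega)]
        · rw [show c ^ j = c ^ (j - (p - 1)) * c ^ (p - 1) by rw [← pow_add]; congr 1; omega, ZMod.pow_card_sub_one_eq_one h0, mul_one]
  simp_rw [eval_eq_sum_range' hg]
  rw [Finset.sum_comm]
  rw [Finset.sum_congr rfl (g := fun j => if j = p - 1 then - g.coeff j else 0)]
  · rw [Finset.sum_ite_eq' ]
    rw [if_pos (Finset.mem_range.2 (by omega))]
  · intro j hj
    rw [← Finset.mul_sum, hs j (Finset.mem_range.1 hj)]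
    split_ifs <;> simp

/-- derivative^[p-1] of a polynomial of degree < 2p-1 -/
theorem dp_low (g : (ZMod p)[X]) (hg : g.natDegree < 2 * p - 1) : derivative^[p - 1] g = - C (g.coeff (p - 1)) := by
  have hp2 := (Fact.out : p.Prime).two_le
  conv_lhs => rw [as_sum_range_C_mul_X_pow' g hg, iterate_derivative_sum]
  rw [Finset.sum_congr rfl (g := fun j => if j = p - 1 then - C (g.coeff j) else 0)]
  · rw [Finset.sum_ite_eq', if_pos (Finset.mem_range.2 (by omega))]
  · intro j hj
    have := Finset.mem_range.1 hj
    rw [dp_mono]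
    by_cases h : j = p - 1
    · rw [if_pos h, h, if_pos (Nat.mod_eq_of_lt (by omega))]; simp
    · rw [if_neg h, if_neg]
      intro h'
      by_cases hj : j < p
      · rw [Nat.mod_eq_of_lt hj] at h'; exact h h'
      · rw [Nat.mod_eq_sub_mod (by omega), Nat.mod_eq_of_lt (by omega)] at h'; omega

theorem dp_uv (u v : (ZMod p)[X]) (hp2 : p ≠ 2) (j : ℕ) (hj : j ≤ 2 * p - 2) :
    derivative^[p - 1] (u ^ j * v ^ (2 * p - 2 - j) * (derivative u * v - u * derivative v)) =
     if j = p - 1 then - (derivative u * v - u * derivative v) ^ p else 0 := by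
  have hp : p.Prime := Fact.out
  have hpt := hp.two_le
  split_ifs with h
  · subst h
    have e : u ^ (p - 1) * v ^ (2 * p - 2 - (p - 1)) * (derivative u * v - u * derivative v) =
      (u * v) ^ (p - 1) * derivative (u * v) + u ^ p * (C (-2) * (v ^ (p - 1) * derivative v)) := by
      rw [show 2 * p - 2 - (p - 1) = p - 1 by omega, derivative_mul, map_neg, C_of]
      have : u ^ p = u ^ (p - 1) * u := by rw [← pow_succ, Nat.sub_add_cancel hp.one_le]
      rw [this]; ring
    rw [e, dp_add, dp_cart, dp_pow_mul, iterate_derivative_C_mul, dp_cart, derivative_mul, add_pow_char, sub_pow_char,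
     map_neg, C_of]
    ring
  · by_cases hj' : (j + 1) % p = 0
    · exfalso
      obtain ⟨t, ht⟩ := Nat.dvd_of_mod_eq_zero hj'
      have : t < 2 := by
        by_contra hh
        have : p * 2 ≤ p * t := Nat.mul_le_mul_left p (by omega)
        omega
      interval_cases t <;> omega
    · have hne : ((j + 1 : ℕ) : ZMod p) ≠ 0 := by
        rw [Ne, ZMod.natCast_eq_zero_iff]; exact fun h => hj' (Nat.mod_eq_zero_of_dvd h)
      have e : C ((j + 1 : ℕ) : ZMod p) * (u ^ j * v ^ (2 * p - 2 - j) * (derivative u * v - u * derivative v)) =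
        derivative (u ^ (j + 1) * v ^ (2 * p - 1 - j)) := by
        have hc : ((2 * p - 1 - j : ℕ) : ZMod p) = -((j + 1 : ℕ) : ZMod p) := by
          rw [eq_neg_iff_add_eq_zero, ← Nat.cast_add, show 2 * p - 1 - j + (j + 1) = 2 * p by omega]; simp
        rw [derivative_mul, derivative_pow, derivative_pow, hc, show 2 * p - 1 - j - 1 = 2 * p - 2 - j by omega,
          show 2 * p - 1 - j = 2 * p - 2 - j + 1 by omega, map_neg]
        simp only [Nat.add_sub_cancel]
        ring
      have e2 := congrArg derivative^[p - 1] e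
      rw [dp_der, iterate_derivative_C_mul] at e2
      exact (mul_eq_zero.1 e2).resolve_left (C_ne_zero.2 hne)

theorem key1723 (K : Type) [Field K] [DecidableEq K] [Algebra (ZMod p)[X] K] [IsFractionRing (ZMod p)[X] K]
    (hp2 : p ≠ 2) (hp3 : p ≠ 3) {r : ZMod p} (hr : r ^ 2 = 2) (h6 : (-6 : ZMod p) ^ ((p - 1) / 2) = -1) :
    ∃ u v : (ZMod p)[X], derivative u * v - u * derivative v ≠ 0 ∧ 
     ff r ^ ((p - 1) / 2) * (derivative u * v - u * derivative v) ^ p = C ((-6) ^ ((p - 1) / 2)) * ∑ j ∈ Finset.range (2 * p - 1), C ((ff r ^ ((p - 1) / 2)).coeff j) * (u ^ j * v ^ (2 * p - 2 - j) * (derivative u * v - u * derivative v)) := by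
  have hp : p.Prime := Fact.out
  have hpt := hp.two_le
  have hn : ∀ n : ℕ, 0 < n → n < p → ((n : ℕ) : ZMod p) ≠ 0 := by
    intro n h0 h1 h
    rw [ZMod.natCast_eq_zero_iff] at h
    exact absurd (Nat.le_of_dvd h0 h) (by omega)
  have h2 : (2 : ZMod p) ≠ 0 := by exact_mod_cast hn 2 (by norm_num) (by omega)
  have h3 : (3 : ZMod p) ≠ 0 := by exact_mod_cast hn 3 (by norm_num) (by omega)
  have hm := hodd hp2
  set m := (p - 1) / 2 with hmdef
  have hdeg : (ff r ^ m).natDegree = 3 * m := by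
    rw [natDegree_pow, ff, cub_deg, mul_comm]
  obtain ⟨p1, p2⟩ := phi_id (K := K) r hr h2 h3
  have h6' : (-6 : ZMod p) ≠ 0 := by
    intro h; rw [h, zero_pow (by omega)] at h6; simp at h6
  have hpv : pv r ≠ 0 := by
    rw [pv]
    refine mul_ne_zero (C_ne_zero.2 h6') ?_
    intro h0
    have := phD_deg (k := ZMod p) r
    rw [h0] at this; simp at this
  generalize pu r = u at *
  generalize pv r = v at *
  have hv : algebraMap (ZMod p)[X] K v ≠ 0 := am_ne.2 hpv
  set w := derivative u * v - u * derivative v with hw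
  have hd : dK (ZMod p) K (algebraMap (ZMod p)[X] K u / algebraMap (ZMod p)[X] K v) = algebraMap (ZMod p)[X] K w / algebraMap (ZMod p)[X] K v ^ 2 := by
    have e : algebraMap (ZMod p)[X] K u / algebraMap (ZMod p)[X] K v * algebraMap (ZMod p)[X] K v = algebraMap (ZMod p)[X] K u := by field_simp
    have e' := congrArg (dK (ZMod p) K) e
    rw [dmul, dK_am, dK_am] at e'
    rw [hw, map_sub, map_mul, map_mul, ← e']
    field_simp
    ring
  have hw0 : w ≠ 0 := by
    intro h0
    rw [hd, h0] at p1; simp at p1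
  have key : ff r ^ m * w ^ p = C ((-6) ^ m) * ∑ j ∈ Finset.range (2 * p - 1), C ((ff r ^ m).coeff j) * (u ^ j * v ^ (2 * p - 2 - j) * w) := by
    apply am_inj (k := ZMod p) (K := K)
    set x := algebraMap (ZMod p)[X] K u / algebraMap (ZMod p)[X] K v with hx
    have ev : x ^ 3 + algebraMap (ZMod p)[X] K (C (fA r)) * x + algebraMap (ZMod p)[X] K (C (fB r)) = eval₂ ((algebraMap (ZMod p)[X] K).comp C) x (ff r) := by
      simp [ff]
    have e1 := congrArg (· ^ m) p2
    simp only [mul_pow] at e1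
    rw [ev, ← eval₂_pow, eval₂_eq_sum_range' _ (by rw [hdeg]; omega : (ff r ^ m).natDegree < 2 * p - 1), hd, div_pow, div_pow, ← pow_mul, ← pow_mul, ← pow_mul] at e1
    have e2 : algebraMap (ZMod p)[X] K (ff r ^ m * w ^ p) = (algebraMap (ZMod p)[X] K (ff r) ^ m * (algebraMap (ZMod p)[X] K w ^ (2 * m) / algebraMap (ZMod p)[X] K v ^ (2 * 2 * m))) * algebraMap (ZMod p)[X] K v ^ (2 * p - 2) * algebraMap (ZMod p)[X] K w := by
      rw [show 2 * p - 2 = 2 * 2 * m by omega]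
      rw [map_mul, map_pow, map_pow]
      have : algebraMap (ZMod p)[X] K w ^ p = algebraMap (ZMod p)[X] K w ^ (2 * m) * algebraMap (ZMod p)[X] K w := by
        rw [← pow_succ, hm]
      rw [this]
      field_simp
    rw [e2, mul_assoc 2 2 m, e1, map_mul, map_sum, mul_assoc, mul_assoc, Finset.sum_mul]
    congr 1
    · simp [map_ofNat]
    · apply Finset.sum_congr rfl
      intro j hj
      have hj' := Finset.mem_range.1 hj
      simp only [map_mul, map_pow, RingHom.comp_apply]
      rw [hx, show algebraMap (ZMod p)[X] K v ^ (2 * p - 2) = algebraMap (ZMod p)[X] K v ^ j * algebraMap (ZMod p)[X] K v ^ (2 * p - 2 - j) by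
        rw [← pow_add]; congr 1; omega, div_pow]
      field_simp
  exact ⟨u, v, hw0, key⟩

theorem main1723 (hp2 : p ≠ 2) (hp3 : p ≠ 3) {r : ZMod p} (hr : r ^ 2 = 2) (h6 : (-6 : ZMod p) ^ ((p - 1) / 2) = -1) :
    ∑ t : ZMod p, ((ff r).eval t) ^ ((p - 1) / 2) = 0 := by
  classical
  have hp : p.Prime := Fact.out
  have hpt := hp.two_le
  have hn : ∀ n : ℕ, 0 < n → n < p → ((n : ℕ) : ZMod p) ≠ 0 := by
    intro n h0 h1 h
    rw [ZMod.natCast_eq_zero_iff] at h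
    exact absurd (Nat.le_of_dvd h0 h) (by omega)
  have h2 : (2 : ZMod p) ≠ 0 := by exact_mod_cast hn 2 (by norm_num) (by omega)
  have h3 : (3 : ZMod p) ≠ 0 := by exact_mod_cast hn 3 (by norm_num) (by omega)
  have hm := hodd hp2
  set m := (p - 1) / 2 with hmdef
  have hdeg : (ff r ^ m).natDegree = 3 * m := by
    rw [natDegree_pow, ff, cub_deg, mul_comm]
  have hS : ∑ t : ZMod p, ((ff r).eval t) ^ m = - (ff r ^ m).coeff (p - 1) := by
    rw [← sum_eval _ (by rw [hdeg]; omega)]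
    simp
  rw [hS, neg_eq_zero]
  set H := (ff r ^ m).coeff (p - 1) with hH
  obtain ⟨u, v, hw0, key⟩ := key1723 (FractionRing (ZMod p)[X]) hp2 hp3 hr h6
  set w := derivative u * v - u * derivative v with hw
  have k2 := congrArg derivative^[p - 1] key
  rw [mul_comm, dp_pow_mul, dp_low _ (by rw [hdeg]; omega), iterate_derivative_C_mul, iterate_derivative_sum,
    Finset.sum_congr rfl (g := fun j => if j = p - 1 then C ((ff r ^ m).coeff j) * (- w ^ p) else 0), Finset.sum_ite_eq',
    if_pos (Finset.mem_range.2 (by omega)), ← hH, h6] at k2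
  · have : C (2 * H) * w ^ p = 0 := by
      have c2 : (C (2 : ZMod p) : (ZMod p)[X]) = 2 := map_ofNat C 2
      rw [map_mul, c2]
      simp only [map_neg, map_one] at k2
      linear_combination -k2
    have h0 := (mul_eq_zero.1 this).resolve_right (pow_ne_zero _ hw0)
    rw [C_eq_zero] at h0
    exact (mul_eq_zero.1 h0).resolve_left h2
  · intro j hj
    rw [iterate_derivative_C_mul, dp_uv u v hp2 j (by have := Finset.mem_range.1 hj; omega)]
    split_ifs <;> simp [hw, hmdef]
end
end DS

namespace DS
open Finset

section domb

/-- b_k and c_k -/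
def bk (k : ℕ) : ℕ := Nat.centralBinom k * Nat.choose (3 * k) k
def ck (k : ℕ) : ℕ := Nat.centralBinom k * bk k

theorem cb_rec (k : ℕ) : ((k : ℚ) + 1) * (Nat.centralBinom (k + 1) : ℚ) = 2 * (2 * k + 1) * (Nat.centralBinom k : ℚ) := by
  have := Nat.succ_mul_centralBinom_succ k
  exact_mod_cast this

theorem bk_fact (k : ℕ) : bk k * k.factorial ^ 3 = (3 * k).factorial := by
  have h1 := Nat.choose_mul_factorial_mul_factorial (show k ≤ 3 * k by omega)
  have h2 := Nat.choose_mul_factorial_mul_factorial (show k ≤ 2 * k by omega)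
  rw [show 3 * k - k = 2 * k by omega] at h1
  rw [show 2 * k - k = k by omega] at h2
  rw [bk, Nat.centralBinom, ← h1, ← h2]; ring

theorem bk_rec (k : ℕ) : ((k : ℚ) + 1) ^ 3 * (bk (k + 1) : ℚ) = (3 * k + 1) * (3 * k + 2) * (3 * k + 3) * (bk k : ℚ) := by
  have h1 : (bk k : ℚ) * (k.factorial : ℚ) ^ 3 = ((3 * k).factorial : ℚ) := by exact_mod_cast bk_fact k
  have h2 : (bk (k + 1) : ℚ) * ((k + 1).factorial : ℚ) ^ 3 = ((3 * (k + 1)).factorial : ℚ) := by exact_mod_cast bk_fact (k + 1)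
  rw [show 3 * (k + 1) = 3 * k + 1 + 1 + 1 by ring] at h2
  simp only [Nat.factorial_succ] at h2
  push_cast at h2
  have h0 : (k.factorial : ℚ) ^ 3 ≠ 0 := pow_ne_zero _ (by exact_mod_cast k.factorial_ne_zero)
  apply mul_right_cancel₀ h0
  linear_combination h2 - (3 * k + 1) * (3 * k + 2) * (3 * k + 3) * h1

noncomputable def wk (k : ℕ) : ℚ := (Nat.centralBinom k : ℚ) / (k.factorial : ℚ) ^ 2

theorem wk_rec (k : ℕ) : wk (k + 1) = 2 * (2 * k + 1) / (k + 1) ^ 3 * wk k := by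
  have h := cb_rec k
  have h0 : (k.factorial : ℚ) ≠ 0 := by exact_mod_cast k.factorial_ne_zero
  have h1 : (k : ℚ) + 1 ≠ 0 := by positivity
  rw [wk, wk, Nat.factorial_succ]
  push_cast
  field_simp
  linear_combination h

theorem A_wk (n : ℕ) : (A n : ℚ) = (n.factorial : ℚ) ^ 2 * ∑ k ∈ range (n + 1), wk k * wk (n - k) := by
  rw [A, mul_sum]
  push_cast
  apply sum_congr rfl
  intro k hk
  have hk' : k ≤ n := by have := mem_range.1 hk; omega
  rw [show 2 * n - 2 * k = 2 * (n - k) by omega, Nat.cast_choose ℚ hk', wk, wk, Nat.centralBinom, Nat.centralBinom]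
  have h0 : (k.factorial : ℚ) ≠ 0 := by exact_mod_cast k.factorial_ne_zero
  have h1 : ((n - k).factorial : ℚ) ≠ 0 := by exact_mod_cast (n - k).factorial_ne_zero
  field_simp

/-- certificate polynomial -/
def pc (n k : ℚ) : ℚ := -224 + 296*k - 120*k^2 + 16*k^3 - 864*n + 948*n*k - 312*n*k^2 + 32*n*k^3 - 1304*n^2 + 1112*n^2*k
  - 264*n^2*k^2 + 16*n^2*k^3 - 960*n^3 + 564*n^3*k - 72*n^3*k^2 - 344*n^4 + 104*n^4*k - 48*n^5

theorem domb_tel (n K : ℕ) (hK : K ≤ n + 1) :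
    ∑ k ∈ range K, (((n : ℚ) + 2) ^ 5 * (n + 1) ^ 2 * (wk k * wk (n + 2 - k))
      - 2 * (2 * n + 3) * (5 * (n + 1) ^ 2 + 5 * (n + 1) + 2) * (n + 1) ^ 2 * (wk k * wk (n + 1 - k))
      + 64 * (n + 1) ^ 3 * (wk k * wk (n - k))) =
    wk K * wk (n + 2 - K) * K ^ 3 * pc n K / (4 * (2 * ((n : ℚ) - K) + 3)) := by
  induction K with
  | zero => simp
  | succ k ih =>
    rw [sum_range_succ, ih (by omega)]
    obtain ⟨j, rfl⟩ : ∃ j, n = k + j := ⟨n - k, by omega⟩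
    rw [show k + j + 2 - k = j + 1 + 1 by omega, show k + j + 1 - k = j + 1 by omega, show k + j - k = j by omega,
      show k + j + 2 - (k + 1) = j + 1 by omega, wk_rec (j + 1), wk_rec j, wk_rec k]
    push_cast
    have h1 : (j : ℚ) + 1 ≠ 0 := by positivity
    have h2 : (j : ℚ) + 1 + 1 ≠ 0 := by positivity
    have h3 : (k : ℚ) + 1 ≠ 0 := by positivity
    have h4 : (2 * ((k : ℚ) + j - k) + 3) = 2 * j + 3 := by ring
    have h5 : (2 * ((k : ℚ) + j - (k + 1)) + 3) = 2 * j + 1 := by ring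
    have h6 : 2 * (j : ℚ) + 3 ≠ 0 := by positivity
    have h7 : 2 * (j : ℚ) + 1 ≠ 0 := by positivity
    rw [h4, h5]
    simp only [pc]
    field_simp
    ring

theorem domb_rec (n : ℕ) : ((n : ℚ) + 2) ^ 3 * A (n + 2) - 2 * (2 * n + 3) * (5 * (n + 1) ^ 2 + 5 * (n + 1) + 2) * A (n + 1)
    + 64 * (n + 1) ^ 3 * A n = 0 := by
  have h := domb_tel n (n + 1) le_rfl
  rw [A_wk, A_wk, A_wk]
  rw [sum_add_distrib, sum_sub_distrib, ← mul_sum, ← mul_sum, ← mul_sum] at h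
  rw [sum_range_succ _ (n + 2), sum_range_succ _ (n + 1), show n + 1 + 1 = (n + 1) + 1 by rfl, sum_range_succ _ (n + 1)]
  rw [show n + 2 - (n + 1) = 0 + 1 by omega, show n + 2 - (n + 2) = 0 by omega, show n + 1 - (n + 1) = 0 by omega, wk_rec (n + 1), wk_rec 0] at *
  have w0 : wk 0 = 1 := by simp [wk]
  rw [w0] at h ⊢
  norm_num only at h ⊢
  simp only [Nat.factorial_succ] at *
  push_cast at *
  generalize ∑ x ∈ range (n + 1), wk x * wk (n + 2 - x) = s2 at *
  generalize ∑ x ∈ range (n + 1), wk x * wk (n + 1 - x) = s1 at *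
  generalize ∑ x ∈ range (n + 1), wk x * wk (n - x) = s0 at *
  have h2 : (n : ℚ) + 2 ≠ 0 := by positivity
  simp only [show (n : ℚ) + 1 + 1 = n + 2 by ring] at h ⊢
  have h4 : (2 * ((n : ℚ) - (n + 1)) + 3) = 1 := by ring
  rw [h4] at h
  simp only [pc] at h
  have h5 : (n : ℚ) + 1 ≠ 0 := by positivity
  field_simp at h
  field_simp
  linear_combination (n + 1) ^ 2 * (n.factorial : ℚ) ^ 2 / 4 * h

noncomputable def Qk (k n : ℕ) : ℚ := (ck k : ℚ) * (Nat.choose (n + k) (3 * k) : ℚ) / 16 ^ k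

theorem ch_step (N r : ℕ) : ((r : ℚ) + 1) * (Nat.choose N (r + 1) : ℚ) = (Nat.choose N r : ℚ) * (N - r) := by
  rcases le_or_gt r N with h | h
  · have := Nat.choose_succ_right_eq N r
    rw [← Nat.cast_sub h]
    rw [mul_comm]
    exact_mod_cast this
  · rw [Nat.choose_eq_zero_of_lt h, Nat.choose_eq_zero_of_lt (by omega)]; simp

theorem Qk_rec (k n : ℕ) : Qk (k + 1) n = (2 * k + 1) * (n + k + 1) * (n - 2 * k) * (n - 2 * k - 1) / (8 * (k + 1) ^ 4) * Qk k n := by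
  have a1 : ((3 * k : ℚ) + 3) * (Nat.choose (n + k + 1) (3 * k + 2 + 1) : ℚ) = (n + k + 1) * (Nat.choose (n + k) (3 * k + 2) : ℚ) := by
    have := Nat.add_one_mul_choose_eq (n + k) (3 * k + 2)
    have h : (((n + k + 1) * Nat.choose (n + k) (3 * k + 2) : ℕ) : ℚ) = ((Nat.choose (n + k + 1) (3 * k + 2 + 1) * (3 * k + 2 + 1) : ℕ) : ℚ) := by
      exact_mod_cast this
    push_cast at h
    linear_combination -h
  have a2 := ch_step (n + k) (3 * k + 1)
  have a3 := ch_step (n + k) (3 * k)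
  have b := bk_rec k
  have c := cb_rec k
  push_cast at a2 a3
  have h3 : (k : ℚ) + 1 ≠ 0 := by positivity
  have h31 : 3 * (k : ℚ) + 1 ≠ 0 := by positivity
  have h32 : 3 * (k : ℚ) + 1 + 1 ≠ 0 := by positivity
  have h33 : 3 * (k : ℚ) + 3 ≠ 0 := by positivity
  have e3 : (Nat.choose (n + k) (3 * k + 1) : ℚ) = (Nat.choose (n + k) (3 * k) : ℚ) * (n + k - 3 * k) / (3 * k + 1) := by
    rw [eq_div_iff h31]; linear_combination a3
  have e2 : (Nat.choose (n + k) (3 * k + 1 + 1) : ℚ) = (Nat.choose (n + k) (3 * k + 1) : ℚ) * (n + k - (3 * k + 1)) / (3 * k + 1 + 1) := by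
    rw [eq_div_iff h32]; linear_combination a2
  have e1 : (Nat.choose (n + k + 1) (3 * k + 2 + 1) : ℚ) = (n + k + 1) * (Nat.choose (n + k) (3 * k + 2) : ℚ) / (3 * k + 3) := by
    rw [eq_div_iff h33]; linear_combination a1
  have eb : (bk (k + 1) : ℚ) = (3 * k + 1) * (3 * k + 2) * (3 * k + 3) * (bk k : ℚ) / (k + 1) ^ 3 := by
    rw [eq_div_iff (pow_ne_zero _ h3)]; linear_combination b
  have ec : (Nat.centralBinom (k + 1) : ℚ) = 2 * (2 * k + 1) * (Nat.centralBinom k : ℚ) / (k + 1) := by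
    rw [eq_div_iff h3]; linear_combination c
  rw [Qk, Qk, ck, ck, show n + (k + 1) = n + k + 1 by ring, show 3 * (k + 1) = 3 * k + 2 + 1 by ring, e1,
    show 3 * k + 2 = 3 * k + 1 + 1 by ring, e2, e3]
  push_cast
  rw [eb, ec]
  rw [pow_succ]
  field_simp
  ring

noncomputable def Vk (n : ℕ) : ℕ → ℚ
  | 0 => 1 / (((n : ℚ) + 1) * (n + 2))
  | k + 1 => (2 * k + 1) * (n + k + 1) * (n - 2 * k + 2) * (n - 2 * k + 1) / (8 * ((k : ℚ) + 1) ^ 4) * Vk n k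

theorem Vk_rel (n k : ℕ) : Qk k n = Vk n k * (n - 2 * k + 2) * (n - 2 * k + 1) ∧
    Qk k (n + 1) = Vk n k * (n + k + 1) * (n - 2 * k + 2) ∧
    Qk k (n + 2) = Vk n k * (n + k + 2) * (n + k + 1) := by
  have h1 : (n : ℚ) + 1 ≠ 0 := by positivity
  have h2 : (n : ℚ) + 2 ≠ 0 := by positivity
  induction k with
  | zero =>
    simp [Qk, ck, bk, Vk]
    field_simp
    simp
  | succ k ih =>
    obtain ⟨i1, i2, i3⟩ := ih
    rw [Qk_rec, Qk_rec, Qk_rec, i1, i2, i3, Vk]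
    push_cast
    have h3 : (k : ℚ) + 1 ≠ 0 := by positivity
    refine ⟨?_, ?_, ?_⟩ <;> field_simp <;> ring

theorem Vk_zero (n k : ℕ) (i : ℕ) (hi : i < k) (h : ((n : ℚ) - 2 * i + 2) * (n - 2 * i + 1) = 0) : Vk n k = 0 := by
  induction k with
  | zero => omega
  | succ k ih =>
    rw [Vk]
    rcases Nat.lt_succ_iff_lt_or_eq.1 hi with h' | h'
    · rw [ih h', mul_zero]
    · subst h'
      rw [mul_assoc _ ((n : ℚ) - 2 * i + 2), h]; simp

theorem Q_tel (n K : ℕ) :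
    ∑ k ∈ range K, (((n : ℚ) + 2) ^ 3 * (16 * Qk k (n + 2)) - 2 * (2 * n + 3) * (5 * (n + 1) ^ 2 + 5 * (n + 1) + 2) * (4 * Qk k (n + 1))
    + 64 * (n + 1) ^ 3 * Qk k n) = -192 * (3 * n + 4) * K ^ 4 * Vk n K := by
  induction K with
  | zero => simp
  | succ k ih =>
    rw [sum_range_succ, ih, (Vk_rel n k).1, (Vk_rel n k).2.1, (Vk_rel n k).2.2, Vk]
    push_cast
    have h3 : (k : ℚ) + 1 ≠ 0 := by positivity
    field_simp
    ring

theorem Qk_zero (k n : ℕ) (h : n < 2 * k) : Qk k n = 0 := by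
  rw [Qk, Nat.choose_eq_zero_of_lt (by omega)]; simp

theorem A_eq (N : ℕ) (n : ℕ) (hn : n < N) : (A n : ℚ) = 4 ^ n * ∑ k ∈ range N, Qk k n := by
  induction n using Nat.strong_induction_on with
  | _ n ih =>
  rcases n with _ | _ | n
  · obtain ⟨M, rfl⟩ : ∃ M, N = M + 1 := ⟨N - 1, by omega⟩
    rw [sum_range_succ', sum_eq_zero (fun k _ => Qk_zero (k + 1) 0 (by omega))]
    simp [A, Qk, ck, bk]
  · obtain ⟨M, rfl⟩ : ∃ M, N = M + 1 := ⟨N - 1, by omega⟩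
    rw [sum_range_succ', sum_eq_zero (fun k _ => Qk_zero (k + 1) (0 + 1) (by omega))]
    simp [A, Qk, ck, bk, sum_range_succ]
  · have h1 := ih n (by omega) (by omega)
    have h2 := ih (n + 1) (by omega) (by omega)
    have t := Q_tel n N
    have hV : Vk n N = 0 := by
      rcases Nat.even_or_odd' n with ⟨i, hi | hi⟩
      · apply Vk_zero n N (i + 1) (by omega)
        rw [hi]; push_cast; ring
      · apply Vk_zero n N (i + 1) (by omega)
        rw [hi]; push_cast; ring
    rw [hV, mul_zero, sum_add_distrib, sum_sub_distrib, ← mul_sum, ← mul_sum, ← mul_sum, ← mul_sum, ← mul_sum] at t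
    have r := domb_rec n
    rw [h1, h2] at r
    have h0 : ((n : ℚ) + 2) ^ 3 ≠ 0 := by positivity
    apply mul_left_cancel₀ h0
    rw [show n + 1 + 1 = n + 2 by ring]
    rw [pow_succ, pow_add] at *
    linear_combination r - 4 ^ n * t
end domb
end DS

namespace DS
open Finset

section clausen

theorem bk_rec' (k : ℕ) : (bk (k + 1) : ℚ) = 3 * (3 * k + 1) * (3 * k + 2) / (k + 1) ^ 2 * (bk k : ℚ) := by
  have h3 : (k : ℚ) + 1 ≠ 0 := by positivity
  have h := bk_rec k
  have : (bk (k + 1) : ℚ) = (3 * k + 1) * (3 * k + 2) * (3 * k + 3) * (bk k : ℚ) / (k + 1) ^ 3 := by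
    rw [eq_div_iff (pow_ne_zero _ h3)]; linear_combination h
  rw [this]
  field_simp

theorem ck_rec (k : ℕ) : (ck (k + 1) : ℚ) = 6 * (2 * k + 1) * (3 * k + 1) * (3 * k + 2) / (k + 1) ^ 3 * (ck k : ℚ) := by
  have h3 : (k : ℚ) + 1 ≠ 0 := by positivity
  have h := cb_rec k
  have : (Nat.centralBinom (k + 1) : ℚ) = 2 * (2 * k + 1) * (Nat.centralBinom k : ℚ) / (k + 1) := by
    rw [eq_div_iff h3]; linear_combination h
  rw [ck, ck]
  push_cast
  rw [this, bk_rec']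
  field_simp
  ring

noncomputable def GG (n : ℕ) : ℚ := ∑ k ∈ range (n + 1), (bk k : ℚ) * bk (n - k)

noncomputable def FF (n : ℕ) : ℚ := ∑ k ∈ range (n + 1), (ck k : ℚ) * Nat.choose k (n - k) * (-27) ^ (n - k)

def PP (n : ℚ) : ℚ := 54 * n ^ 3 + 243 * n ^ 2 + 375 * n + 198
def QQ (n : ℚ) : ℚ := 729 * n ^ 3 + 2187 * n ^ 2 + 2106 * n + 648
def pg (n k : ℚ) : ℚ := 24 - 14 * k + 30 * n - 9 * n * k + 9 * n ^ 2

theorem GG_tel (n K : ℕ) (hK : K ≤ n + 1) :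
    ∑ k ∈ range K, (((n : ℚ) + 2) ^ 3 * ((bk k : ℚ) * bk (n + 2 - k)) - PP n * ((bk k : ℚ) * bk (n + 1 - k))
      + QQ n * ((bk k : ℚ) * bk (n - k))) =
    (bk K : ℚ) * bk (n + 2 - K) * K ^ 2 * pg n K / ((3 * ((n : ℚ) - K) + 4) * (3 * ((n : ℚ) - K) + 5)) := by
  induction K with
  | zero => simp
  | succ k ih =>
    rw [sum_range_succ, ih (by omega)]
    obtain ⟨j, rfl⟩ : ∃ j, n = k + j := ⟨n - k, by omega⟩
    rw [show k + j + 2 - k = j + 1 + 1 by omega, show k + j + 1 - k = j + 1 by omega, show k + j - k = j by omega,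
      show k + j + 2 - (k + 1) = j + 1 by omega, bk_rec' (j + 1), bk_rec' j, bk_rec' k]
    push_cast
    have h1 : (j : ℚ) + 1 ≠ 0 := by positivity
    have h2 : (j : ℚ) + 1 + 1 ≠ 0 := by positivity
    have h3 : (k : ℚ) + 1 ≠ 0 := by positivity
    have h4 : (3 * ((k : ℚ) + j - k) + 4) = 3 * j + 4 := by ring
    have h5 : (3 * ((k : ℚ) + j - k) + 5) = 3 * j + 5 := by ring
    have h4' : (3 * ((k : ℚ) + j - (k + 1)) + 4) = 3 * j + 1 := by ring
    have h5' : (3 * ((k : ℚ) + j - (k + 1)) + 5) = 3 * j + 2 := by ring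
    have h6 : 3 * (j : ℚ) + 4 ≠ 0 := by positivity
    have h7 : 3 * (j : ℚ) + 1 ≠ 0 := by positivity
    have h8 : 3 * (j : ℚ) + 5 ≠ 0 := by positivity
    have h9 : 3 * (j : ℚ) + 2 ≠ 0 := by positivity
    rw [h4, h5, h4', h5', show (3 * ((j : ℚ) + 1) + 1) = 3 * j + 4 by ring, show (3 * ((j : ℚ) + 1) + 2) = 3 * j + 5 by ring]
    simp only [pg, PP, QQ]
    field_simp
    ring

theorem GG_rec (n : ℕ) : ((n : ℚ) + 2) ^ 3 * GG (n + 2) - PP n * GG (n + 1) + QQ n * GG n = 0 := by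
  have h := GG_tel n (n + 1) le_rfl
  rw [GG, GG, GG]
  rw [sum_add_distrib, sum_sub_distrib, ← mul_sum, ← mul_sum, ← mul_sum] at h
  rw [sum_range_succ _ (n + 2), sum_range_succ _ (n + 1), show n + 1 + 1 = (n + 1) + 1 by rfl, sum_range_succ _ (n + 1)]
  rw [show n + 2 - (n + 1) = 0 + 1 by omega, show n + 2 - (n + 2) = 0 by omega, show n + 1 - (n + 1) = 0 by omega, bk_rec' (n + 1)] at *
  have w0 : (bk 0 : ℚ) = 1 := by simp [bk]
  have w1 : (bk (0 + 1) : ℚ) = 6 := by norm_num [bk, Nat.centralBinom]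
  rw [w0, w1]
  rw [w1] at h
  push_cast at *
  generalize ∑ x ∈ range (n + 1), (bk x : ℚ) * bk (n + 2 - x) = s2 at *
  generalize ∑ x ∈ range (n + 1), (bk x : ℚ) * bk (n + 1 - x) = s1 at *
  generalize ∑ x ∈ range (n + 1), (bk x : ℚ) * bk (n - x) = s0 at *
  have h4 : (3 * ((n : ℚ) - (n + 1)) + 4) = 1 := by ring
  have h5 : (3 * ((n : ℚ) - (n + 1)) + 5) = 2 := by ring
  have h2 : (n : ℚ) + 2 ≠ 0 := by positivity
  rw [h4, h5] at h
  simp only [show (n : ℚ) + 1 + 1 = n + 2 by ring] at h ⊢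
  simp only [pg, PP, QQ] at *
  field_simp at h
  field_simp
  linear_combination 1 / 2 * h

theorem FF_tel (n K : ℕ) (hK : K ≤ n + 1) :
    ∑ k ∈ range K, (((n : ℚ) + 2) ^ 3 * ((ck k : ℚ) * Nat.choose k (n + 2 - k) * (-27) ^ (n + 2 - k))
      - PP n * ((ck k : ℚ) * Nat.choose k (n + 1 - k) * (-27) ^ (n + 1 - k))
      + QQ n * ((ck k : ℚ) * Nat.choose k (n - k) * (-27) ^ (n - k))) =
    - ((ck K : ℚ) * Nat.choose K (n + 2 - K) * (-27) ^ (n + 2 - K)) * K ^ 2 * (n + 2) := by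
  induction K with
  | zero => simp
  | succ k ih =>
    rw [sum_range_succ, ih (by omega)]
    obtain ⟨j, rfl⟩ : ∃ j, n = k + j := ⟨n - k, by omega⟩
    rw [show k + j + 2 - k = j + 1 + 1 by omega, show k + j + 1 - k = j + 1 by omega, show k + j - k = j by omega,
      show k + j + 2 - (k + 1) = j + 1 by omega, ck_rec k]
    have h1 : (j : ℚ) + 1 ≠ 0 := by positivity
    have h2 : (j : ℚ) + 2 ≠ 0 := by positivity
    have h3 : (k : ℚ) + 1 ≠ 0 := by positivity
    have e1 : (Nat.choose k (j + 1) : ℚ) = Nat.choose k j * (k - j) / (j + 1) := by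
      rw [eq_div_iff h1, ← ch_step]; ring
    have e2 : (Nat.choose k (j + 1 + 1) : ℚ) = Nat.choose k (j + 1) * (k - j - 1) / (j + 2) := by
      have := ch_step k (j + 1)
      push_cast at this
      rw [eq_div_iff h2]; linear_combination this
    have e3 : (Nat.choose (k + 1) (j + 1) : ℚ) = Nat.choose k j * (k + 1) / (j + 1) := by
      have h : (((k + 1) * Nat.choose k j : ℕ) : ℚ) = ((Nat.choose (k + 1) (j + 1) * (j + 1) : ℕ) : ℚ) := by
        exact_mod_cast Nat.add_one_mul_choose_eq k j
      push_cast at h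
      rw [eq_div_iff h1]; linear_combination -h
    rw [e2, e1, e3]
    push_cast
    simp only [PP, QQ, pow_succ (-27 : ℚ)]
    field_simp
    ring

theorem FF_rec (n : ℕ) : ((n : ℚ) + 2) ^ 3 * FF (n + 2) - PP n * FF (n + 1) + QQ n * FF n = 0 := by
  have h := FF_tel n (n + 1) le_rfl
  rw [FF, FF, FF]
  rw [sum_add_distrib, sum_sub_distrib, ← mul_sum, ← mul_sum, ← mul_sum] at h
  rw [sum_range_succ _ (n + 2), sum_range_succ _ (n + 1), show n + 1 + 1 = (n + 1) + 1 by rfl, sum_range_succ _ (n + 1)]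
  rw [show n + 2 - (n + 1) = 0 + 1 by omega, show n + 2 - (n + 2) = 0 by omega, show n + 1 - (n + 1) = 0 by omega, ck_rec (n + 1)] at *
  simp only [zero_add, Nat.choose_one_right, Nat.choose_zero_right, pow_one, pow_zero] at h ⊢
  push_cast at *
  generalize ∑ x ∈ range (n + 1), (ck x : ℚ) * Nat.choose x (n + 2 - x) * (-27) ^ (n + 2 - x) = s2 at *
  generalize ∑ x ∈ range (n + 1), (ck x : ℚ) * Nat.choose x (n + 1 - x) * (-27) ^ (n + 1 - x) = s1 at *
  generalize ∑ x ∈ range (n + 1), (ck x : ℚ) * Nat.choose x (n - x) * (-27) ^ (n - x) = s0 at *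
  have h2 : (n : ℚ) + 2 ≠ 0 := by positivity
  simp only [show (n : ℚ) + 1 + 1 = n + 2 by ring] at h ⊢
  simp only [PP, QQ] at *
  field_simp
  linear_combination h

theorem FF_eq_GG (n : ℕ) : FF n = GG n := by
  induction n using Nat.strong_induction_on with
  | _ n ih =>
  rcases n with _ | _ | n
  · simp [FF, GG, ck, bk]
  · norm_num [FF, GG, ck, bk, sum_range_succ, Nat.centralBinom]
  · have h1 := ih n (by omega)
    have h2 := ih (n + 1) (by omega)
    have f := FF_rec n
    have g := GG_rec n
    rw [h1, h2] at f
    have h0 : ((n : ℚ) + 2) ^ 3 ≠ 0 := by positivity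
    apply mul_left_cancel₀ h0
    rw [show n + 1 + 1 = n + 2 by ring]
    linear_combination f - g

theorem clausen_int (n : ℕ) : ∑ k ∈ range (n + 1), (ck k : ℤ) * Nat.choose k (n - k) * (-27) ^ (n - k)
    = ∑ k ∈ range (n + 1), (bk k : ℤ) * bk (n - k) := by
  have := FF_eq_GG n
  rw [FF, GG] at this
  exact_mod_cast this

end clausen
end DS

namespace DS
open Finset

section modp
variable {p : ℕ} [Fact p.Prime]

theorem bk_zero {k : ℕ} (h1 : p ≤ 3 * k) (h2 : k < p) : ((bk k : ℕ) : ZMod p) = 0 := by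
  have hp := Fact.out (p := p.Prime)
  rw [ZMod.natCast_eq_zero_iff]
  have h : p ∣ bk k * k.factorial ^ 3 := by
    rw [bk_fact]; exact (hp.dvd_factorial).2 h1
  rcases hp.dvd_mul.1 h with h | h
  · exact h
  · have := (hp.dvd_factorial).1 (hp.dvd_of_dvd_pow h)
    omega

theorem ck_zero {k : ℕ} (h1 : p ≤ 3 * k) (h2 : k < p) : ((ck k : ℕ) : ZMod p) = 0 := by
  rw [ck, Nat.cast_mul, bk_zero h1 h2, mul_zero]

theorem tri_sum (f : ℕ → ℕ → ZMod p) (hf : ∀ k l, k < p → l < p → p ≤ k + l → f k l = 0) :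
    ∑ k ∈ range p, ∑ l ∈ range p, f k l = ∑ n ∈ range p, ∑ k ∈ range (n + 1), f k (n - k) := by
  rw [Finset.sum_range_diag_flip]
  apply sum_congr rfl
  intro k hk
  symm
  apply sum_subset
  · intro l hl; rw [mem_range] at *; omega
  · intro l hl hl'
    rw [mem_range] at *
    exact hf k l hk hl (by omega)

theorem clausen_mod (s : ZMod p) :
    ∑ k ∈ range p, (ck k : ZMod p) * (s * (1 - 27 * s)) ^ k = (∑ k ∈ range p, (bk k : ZMod p) * s ^ k) ^ 2 := by
  have hR : (∑ k ∈ range p, (bk k : ZMod p) * s ^ k) ^ 2 =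
      ∑ k ∈ range p, ∑ l ∈ range p, (bk k : ZMod p) * bk l * s ^ (k + l) := by
    rw [sq, sum_mul_sum]
    apply sum_congr rfl; intro k _; apply sum_congr rfl; intro l _
    rw [pow_add]; ring
  have hL : ∑ k ∈ range p, (ck k : ZMod p) * (s * (1 - 27 * s)) ^ k =
      ∑ k ∈ range p, ∑ l ∈ range p, (ck k : ZMod p) * Nat.choose k l * (-27) ^ l * s ^ (k + l) := by
    apply sum_congr rfl; intro k hk
    have hk' := mem_range.1 hk
    have : (1 - 27 * s) ^ k = ∑ l ∈ range p, (Nat.choose k l : ZMod p) * (-27) ^ l * s ^ l := by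
      rw [show 1 - 27 * s = (-27 * s) + 1 by ring, add_pow]
      rw [← sum_subset (range_subset_range.2 (show k + 1 ≤ p by omega))]
      · apply sum_congr rfl; intro l _
        rw [one_pow, mul_pow]; ring
      · intro l _ hl
        rw [mem_range] at hl
        rw [Nat.choose_eq_zero_of_lt (by omega)]; simp
    rw [mul_pow, this, mul_sum, mul_sum]
    apply sum_congr rfl; intro l _
    rw [pow_add]; ring
  rw [hR, hL, tri_sum, tri_sum]
  · apply sum_congr rfl; intro n _
    have e := congrArg (Int.cast : ℤ → ZMod p) (clausen_int n)
    push_cast at e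
    have t1 : ∀ x ∈ range (n + 1), (ck x : ZMod p) * Nat.choose x (n - x) * (-27) ^ (n - x) * s ^ (x + (n - x)) =
        ((ck x : ZMod p) * Nat.choose x (n - x) * (-27) ^ (n - x)) * s ^ n := by
      intro x hx
      rw [mem_range] at hx
      rw [show x + (n - x) = n by omega]
    have t2 : ∀ x ∈ range (n + 1), (bk x : ZMod p) * bk (n - x) * s ^ (x + (n - x)) =
        ((bk x : ZMod p) * bk (n - x)) * s ^ n := by
      intro x hx
      rw [mem_range] at hx
      rw [show x + (n - x) = n by omega]
    rw [sum_congr rfl t1, sum_congr rfl t2, ← sum_mul, ← sum_mul, e]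
  · intro k l hk hl hkl
    by_cases h : p ≤ 3 * k
    · rw [bk_zero h hk]; ring
    · rw [bk_zero (k := l) (by omega) hl]; ring
  · intro k l hk hl hkl
    by_cases h : p ≤ 3 * k
    · rw [ck_zero h hk]; ring
    · rw [Nat.choose_eq_zero_of_lt (by omega)]; simp

theorem A_nat (N n : ℕ) (hn : n < N) : A n = ∑ k ∈ range N, ck k * Nat.choose (n + k) (3 * k) * 4 ^ (n - 2 * k) := by
  have h := A_eq N n hn
  have : (A n : ℚ) = ((∑ k ∈ range N, ck k * Nat.choose (n + k) (3 * k) * 4 ^ (n - 2 * k) : ℕ) : ℚ) := by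
    rw [h, mul_sum]
    push_cast
    apply sum_congr rfl; intro k _
    by_cases hk : n < 2 * k
    · rw [Qk_zero k n hk, Nat.choose_eq_zero_of_lt (by omega)]; simp
    · obtain ⟨j, rfl⟩ : ∃ j, n = 2 * k + j := ⟨n - 2 * k, by omega⟩
      rw [Qk, show 2 * k + j - 2 * k = j by omega, pow_add, pow_mul]
      norm_num
      field_simp
  exact_mod_cast this

theorem neg_choose (a j : ℕ) (h : a + j < p) :
    (Nat.choose (p - 1 - a) j : ZMod p) * (-1) ^ j = (Nat.choose (a + j) j : ZMod p) := by
  induction j with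
  | zero => simp
  | succ j ih =>
    have ih := ih (by omega)
    have h0 : ((j + 1 : ℕ) : ZMod p) ≠ 0 := by
      rw [Ne, ZMod.natCast_eq_zero_iff]
      intro hd; have := Nat.le_of_dvd (by omega) hd; omega
    have e1 : ((Nat.choose (p - 1 - a) (j + 1) * (j + 1) : ℕ) : ZMod p) = ((Nat.choose (p - 1 - a) j * (p - 1 - a - j) : ℕ) : ZMod p) := by
      rw [Nat.choose_succ_right_eq]
    have e2 : (((a + j + 1) * Nat.choose (a + j) j : ℕ) : ZMod p) = ((Nat.choose (a + j + 1) (j + 1) * (j + 1) : ℕ) : ZMod p) := by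
      rw [Nat.add_one_mul_choose_eq]
    have e3 : ((p - 1 - a - j : ℕ) : ZMod p) = - ((a + j + 1 : ℕ) : ZMod p) := by
      rw [eq_neg_iff_add_eq_zero, ← Nat.cast_add, show p - 1 - a - j + (a + j + 1) = p by omega]
      simp
    rw [Nat.cast_mul, Nat.cast_mul, e3] at e1
    rw [Nat.cast_mul, Nat.cast_mul] at e2
    apply mul_right_cancel₀ h0
    rw [show a + (j + 1) = a + j + 1 by ring, ← e2, ← ih, pow_succ]
    linear_combination (-1) ^ j * (-1) * e1

theorem choose_van (a j : ℕ) (ha : a < p) (hj : j < p) (h : p ≤ a + j) : (Nat.choose (a + j) a : ZMod p) = 0 := by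
  have hp := Fact.out (p := p.Prime)
  rw [ZMod.natCast_eq_zero_iff]
  exact hp.dvd_choose_add ha hj h

theorem geo (a M : ℕ) (x : ZMod p) (ha : a < p) (hM : p - a ≤ M) (hM' : M ≤ p) :
    ∑ j ∈ range M, (Nat.choose (a + j) a : ZMod p) * x ^ j = (1 - x) ^ (p - 1 - a) := by
  rw [show 1 - x = (- x) + 1 by ring, add_pow, show p - 1 - a + 1 = p - a by omega,
    ← sum_subset (range_subset_range.2 hM)]
  · apply sum_congr rfl; intro j hj
    rw [mem_range] at hj
    rw [Nat.choose_symm_add, ← neg_choose a j (by omega), one_pow, neg_pow]; ring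
  · intro j h1 h2
    rw [mem_range] at *
    rw [choose_van a j ha (by omega) (by omega), zero_mul]

theorem nat_ne {a : ℕ} (h0 : a ≠ 0) (h : ∀ q : ℕ, q.Prime → q ∣ a → q ≠ p) : (a : ZMod p) ≠ 0 := by
  have hp := Fact.out (p := p.Prime)
  rw [Ne, ZMod.natCast_eq_zero_iff]
  intro hd
  exact h p hp hd rfl

theorem S_eq (hp2 : (2 : ZMod p) ≠ 0) (hp3 : (3 : ZMod p) ≠ 0) :
    ∑ n ∈ range p, (A n : ZMod p) / (-8 : ZMod p) ^ n = ∑ k ∈ range p, (ck k : ZMod p) * (1 / 216) ^ k := by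
  have h8 : (8 : ZMod p) ≠ 0 := by
    rw [show (8 : ZMod p) = 2 ^ 3 by norm_num]; exact pow_ne_zero _ hp2
  have h216 : (216 : ZMod p) ≠ 0 := by
    rw [show (216 : ZMod p) = 2 ^ 3 * 3 ^ 3 by norm_num]; exact mul_ne_zero (pow_ne_zero _ hp2) (pow_ne_zero _ hp3)
  have s1 : ∀ n ∈ range p, (A n : ZMod p) / (-8 : ZMod p) ^ n =
      ∑ k ∈ range p, (ck k : ZMod p) * (Nat.choose (n + k) (3 * k) * 4 ^ (n - 2 * k) / (-8) ^ n) := by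
    intro n hn
    rw [A_nat p n (mem_range.1 hn)]
    push_cast
    rw [sum_div]
    apply sum_congr rfl; intro k _
    ring
  rw [sum_congr rfl s1, sum_comm]
  apply sum_congr rfl; intro k hk
  rw [← mul_sum]
  rw [mem_range] at hk
  by_cases h3 : p ≤ 3 * k
  · rw [ck_zero h3 hk]; ring
  congr 1
  rw [show range p = range (2 * k + (p - 2 * k)) by congr 1; omega, sum_range_add]
  rw [sum_eq_zero (s := range (2 * k))]
  · have s2 : ∀ j ∈ range (p - 2 * k), (Nat.choose (2 * k + j + k) (3 * k) * 4 ^ (2 * k + j - 2 * k) / (-8) ^ (2 * k + j) : ZMod p)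
        = (1 / 64) ^ k * ((Nat.choose (3 * k + j) (3 * k) : ZMod p) * (-1 / 2) ^ j) := by
      intro j _
      rw [show 2 * k + j + k = 3 * k + j by ring, show 2 * k + j - 2 * k = j by omega, pow_add, pow_mul,
        show (-1 / 2 : ZMod p) = 4 / (-8) by rw [div_eq_div_iff hp2 (neg_ne_zero.2 h8)]; norm_num, div_pow, div_pow]
      norm_num
      field_simp
    rw [sum_congr rfl s2, ← mul_sum, geo (3 * k) (p - 2 * k) _ (by omega) (by omega) (by omega), zero_add]
    have h32 : (1 - -1 / 2 : ZMod p) = 3 / 2 := by field_simp; norm_num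
    have h0 : (3 / 2 : ZMod p) ≠ 0 := div_ne_zero hp3 hp2
    have hf := ZMod.pow_card_sub_one_eq_one h0
    rw [h32]
    have h1 : (3 / 2 : ZMod p) ^ (p - 1 - 3 * k) * (27 / 8) ^ k = 1 := by
      rw [show (27 / 8 : ZMod p) = (3 / 2) ^ 3 by rw [div_pow]; norm_num, ← pow_mul, ← pow_add,
        show p - 1 - 3 * k + 3 * k = p - 1 by omega, hf]
    have h2 : (1 / 64 : ZMod p) = 1 / 216 * (27 / 8) := by
      rw [div_mul_div_comm, div_eq_div_iff]
      · norm_num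
      · rw [show (64 : ZMod p) = 2 ^ 6 by norm_num]; exact pow_ne_zero _ hp2
      · exact mul_ne_zero h216 h8
    rw [h2, mul_pow]
    linear_combination (1 / 216 : ZMod p) ^ k * h1
  · intro n hn
    rw [mem_range] at hn
    rw [Nat.choose_eq_zero_of_lt (by omega)]; simp

end modp
end DS

namespace DS
open Finset Polynomial

section chsum
variable {p : ℕ} [Fact p.Prime]

theorem half_choose (hp2 : p ≠ 2) (i : ℕ) (h : i ≤ (p - 1) / 2) :
    (Nat.choose ((p - 1) / 2) i : ZMod p) * (-4) ^ i = (Nat.centralBinom i : ZMod p) := by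
  have hodd := hodd (p := p) hp2
  set m := (p - 1) / 2 with hm
  induction i with
  | zero => simp
  | succ j ih =>
    have ih := ih (by omega)
    have h0 : ((j + 1 : ℕ) : ZMod p) ≠ 0 := by
      rw [Ne, ZMod.natCast_eq_zero_iff]
      intro hd; have := Nat.le_of_dvd (by omega) hd; omega
    have e1 : ((Nat.choose m (j + 1) * (j + 1) : ℕ) : ZMod p) = ((Nat.choose m j * (m - j) : ℕ) : ZMod p) := by
      rw [Nat.choose_succ_right_eq]
    have e2 : (((j + 1) * Nat.centralBinom (j + 1) : ℕ) : ZMod p) = ((2 * (2 * j + 1) * Nat.centralBinom j : ℕ) : ZMod p) := by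
      rw [Nat.succ_mul_centralBinom_succ]
    have e3 : 2 * ((m - j : ℕ) : ZMod p) = - (2 * j + 1) := by
      rw [eq_neg_iff_add_eq_zero]
      have : ((2 * (m - j) + (2 * j + 1) : ℕ) : ZMod p) = 0 := by
        rw [show 2 * (m - j) + (2 * j + 1) = p by omega]; simp
      push_cast at this
      linear_combination this
    apply mul_left_cancel₀ h0
    rw [← Nat.cast_mul, e2]
    push_cast at e1 ⊢
    rw [← ih, pow_succ]
    linear_combination (-4) ^ j * (-4) * e1 - 2 * (Nat.choose m j : ZMod p) * (-4) ^ j * e3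

theorem coeff_sum (hp2 : p ≠ 2) (s : ZMod p) :
    ((C 4 * X ^ 3 + (X + C s) ^ 2 : (ZMod p)[X]) ^ ((p - 1) / 2)).coeff (p - 1) = ∑ k ∈ range p, (bk k : ZMod p) * s ^ k := by
  have hodd := hodd (p := p) hp2
  have hp := (Fact.out : p.Prime).two_le
  set m := (p - 1) / 2 with hm
  rw [add_pow, finset_sum_coeff, ← sum_subset (range_subset_range.2 (show m + 1 ≤ p by omega))]
  · apply sum_congr rfl; intro i hi
    rw [mem_range] at hi
    have e : (C 4 * X ^ 3 : (ZMod p)[X]) ^ i * ((X + C s) ^ 2) ^ (m - i) * (Nat.choose m i : (ZMod p)[X]) =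
        C (4 ^ i * (Nat.choose m i : ZMod p)) * ((X + C s) ^ (2 * (m - i)) * X ^ (3 * i)) := by
      rw [mul_pow, ← pow_mul, ← pow_mul, C_mul, C_pow]
      simp only [map_natCast]
      ring
    rw [e, coeff_C_mul, coeff_mul_X_pow']
    split_ifs with h
    · rw [coeff_X_add_C_pow]
      have h1 := half_choose hp2 i (by omega)
      have h2 := neg_choose (p := p) (2 * i) i (by omega)
      rw [show 2 * (m - i) - (p - 1 - 3 * i) = i by omega,
        ← Nat.choose_symm (show p - 1 - 3 * i ≤ 2 * (m - i) by omega), show 2 * (m - i) - (p - 1 - 3 * i) = i by omega,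
        show 2 * (m - i) = p - 1 - 2 * i by omega, bk, show 3 * i = 2 * i + i by ring, Nat.cast_mul, ← h1, ← h2,
        show (-4 : ZMod p) = -1 * 4 by norm_num, mul_pow]
      have h3 : (-1 : ZMod p) ^ i * (-1) ^ i = 1 := by rw [← mul_pow]; norm_num
      linear_combination (-1 : ZMod p) * 4 ^ i * (Nat.choose m i) * (Nat.choose (p - 1 - 2 * i) i) * s ^ i * h3
    · rw [bk_zero (by omega) (by omega)]; simp
  · intro i h1 h2
    rw [mem_range] at *
    rw [bk_zero (by omega) h1]; simp

theorem ff_sum (hp2 : p ≠ 2) (hp3 : p ≠ 3) {r : ZMod p} (hr : r ^ 2 = 2) :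
    ∑ t : ZMod p, ((ff r).eval t) ^ ((p - 1) / 2) = - ∑ k ∈ range p, (bk k : ZMod p) * ((2 + r) / 108) ^ k := by
  have hodd := hodd (p := p) hp2
  have hp := (Fact.out : p.Prime).two_le
  have h2 : (2 : ZMod p) ≠ 0 := by
    have := nat_ne (p := p) (a := 2) (by norm_num) (by intro q hq hd; have := (Nat.prime_dvd_prime_iff_eq hq Nat.prime_two).1 hd; omega)
    exact_mod_cast this
  have h3 : (3 : ZMod p) ≠ 0 := by
    have := nat_ne (p := p) (a := 3) (by norm_num) (by intro q hq hd; have := (Nat.prime_dvd_prime_iff_eq hq Nat.prime_three).1 hd; omega)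
    exact_mod_cast this
  have h36 : (36 : ZMod p) ≠ 0 := by
    rw [show (36 : ZMod p) = 2 ^ 2 * 3 ^ 2 by norm_num]; exact mul_ne_zero (pow_ne_zero _ h2) (pow_ne_zero _ h3)
  have h108 : (108 : ZMod p) ≠ 0 := by
    rw [show (108 : ZMod p) = 2 ^ 2 * 3 ^ 3 by norm_num]; exact mul_ne_zero (pow_ne_zero _ h2) (pow_ne_zero _ h3)
  rw [← coeff_sum hp2, ← sum_eval]
  · let e : ZMod p ≃ ZMod p := (Equiv.mulLeft₀ 36 h36).trans (Equiv.addRight 3)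
    rw [← Equiv.sum_comp e]
    apply sum_congr rfl; intro x _
    have he : e x = 36 * x + 3 := rfl
    have hE : (ff r).eval (36 * x + 3) = 108 ^ 2 * (4 * x ^ 3 + (x + (2 + r) / 108) ^ 2) := by
      simp only [ff, fA, fB, eval_add, eval_mul, eval_pow, eval_X, eval_C]
      field_simp
      linear_combination -hr
    rw [he, hE, mul_pow, ← pow_mul, show 2 * ((p - 1) / 2) = p - 1 by omega, ZMod.pow_card_sub_one_eq_one h108]
    simp
  · have : (C 4 * X ^ 3 + (X + C ((2 + r) / 108)) ^ 2 : (ZMod p)[X]).natDegree ≤ 3 := by compute_degree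
    have := natDegree_pow_le_of_le ((p - 1) / 2) this
    have h5 : p ≠ 1 := by omega
    omega

theorem S_final (hp2 : p ≠ 2) (hp3 : p ≠ 3) {r : ZMod p} (hr : r ^ 2 = 2) :
    ∑ n ∈ range p, (A n : ZMod p) / (-8 : ZMod p) ^ n = (∑ t : ZMod p, ((ff r).eval t) ^ ((p - 1) / 2)) ^ 2 := by
  have h2 : (2 : ZMod p) ≠ 0 := by
    have := nat_ne (p := p) (a := 2) (by norm_num) (by intro q hq hd; have := (Nat.prime_dvd_prime_iff_eq hq Nat.prime_two).1 hd; omega)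
    exact_mod_cast this
  have h3 : (3 : ZMod p) ≠ 0 := by
    have := nat_ne (p := p) (a := 3) (by norm_num) (by intro q hq hd; have := (Nat.prime_dvd_prime_iff_eq hq Nat.prime_three).1 hd; omega)
    exact_mod_cast this
  have h108 : (108 : ZMod p) ≠ 0 := by
    rw [show (108 : ZMod p) = 2 ^ 2 * 3 ^ 3 by norm_num]; exact mul_ne_zero (pow_ne_zero _ h2) (pow_ne_zero _ h3)
  have h216 : (216 : ZMod p) ≠ 0 := by
    rw [show (216 : ZMod p) = 2 ^ 3 * 3 ^ 3 by norm_num]; exact mul_ne_zero (pow_ne_zero _ h2) (pow_ne_zero _ h3)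
  rw [S_eq h2 h3, ff_sum hp2 hp3 hr, neg_sq, ← clausen_mod]
  have : (1 / 216 : ZMod p) = (2 + r) / 108 * (1 - 27 * ((2 + r) / 108)) := by
    field_simp
    linear_combination 5832 * hr
  rw [this]

end chsum
end DS

namespace DS
open Finset Polynomial

section final
variable {p : ℕ} [Fact p.Prime]

theorem neg3_of (h3 : p % 3 = 1) : ∃ d : ZMod p, d ^ 2 = -3 := by
  haveI : Fact (Nat.Prime 3) := ⟨Nat.prime_three⟩
  have hc : 3 ∣ Fintype.card (ZMod p)ˣ := by
    rw [ZMod.card_units]; omega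
  obtain ⟨w, hw⟩ := exists_prime_orderOf_dvd_card 3 hc
  have h1 : w ^ 3 = 1 := by rw [← hw]; exact pow_orderOf_eq_one w
  have h2 : w ≠ 1 := by
    rintro rfl; simp at hw
  have h1' : (w : ZMod p) ^ 3 = 1 := by
    have := congrArg (Units.val) h1
    simpa using this
  have h2' : (w : ZMod p) - 1 ≠ 0 := by
    intro h; apply h2; ext; simpa [sub_eq_zero] using h
  have h3' : (w : ZMod p) ^ 2 + w + 1 = 0 := by
    apply mul_left_cancel₀ h2'
    linear_combination h1'
  exact ⟨2 * w + 1, by linear_combination 4 * h3'⟩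

theorem of_neg3 (hp2 : (2 : ZMod p) ≠ 0) (hp3 : (3 : ZMod p) ≠ 0) (d : ZMod p) (hd : d ^ 2 = -3) : p % 3 = 1 := by
  have hp := (Fact.out : p.Prime).two_le
  haveI : Fact (Nat.Prime 3) := ⟨Nat.prime_three⟩
  set w : ZMod p := (-1 + d) / 2 with hw
  have e : w ^ 2 + w + 1 = 0 := by
    rw [hw]; field_simp; linear_combination hd
  have h1 : w ^ 3 = 1 := by linear_combination (w - 1) * e
  have h2 : w ≠ 1 := by
    intro h; rw [h] at e; apply hp3; linear_combination e
  have ho := orderOf_eq_prime h1 h2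
  have h0 : w ≠ 0 := by rintro h; rw [h] at h1; norm_num at h1
  have := orderOf_dvd_of_pow_eq_one (ZMod.pow_card_sub_one_eq_one h0)
  rw [ho] at this
  omega

theorem thue (c : ZMod p) (hc : c ^ 2 = -6) : ∃ x y : ℤ, ∃ k : ℤ, 0 < k ∧ k < 7 ∧ x ^ 2 + 6 * y ^ 2 = k * p := by
  have hp := (Fact.out : p.Prime)
  set s := Nat.sqrt p with hs
  have hs1 : s * s ≤ p := Nat.sqrt_le p
  have hs2 : p < (s + 1) * (s + 1) := Nat.lt_succ_sqrt p
  have hs3 : s * s < p := by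
    rcases Nat.lt_or_eq_of_le hs1 with h | h
    · exact h
    · exfalso
      exact hp.prime.irreducible.not_isSquare ⟨s, h.symm⟩
  have hcard : (univ : Finset (ZMod p)).card < (range (s + 1) ×ˢ range (s + 1)).card := by
    rw [card_univ, ZMod.card, card_product, card_range]; exact hs2
  obtain ⟨a, ha, b, hb, hab, hE⟩ := exists_ne_map_eq_of_card_lt_of_maps_to hcard
    (f := fun q : ℕ × ℕ => (q.1 : ZMod p) - c * q.2) (by intro x _; simp)
  obtain ⟨a1, a2⟩ := a
  obtain ⟨b1, b2⟩ := b
  simp only [mem_product, mem_range] at ha hb hE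
  have hd : (p : ℤ) ∣ ((a1 : ℤ) - b1) ^ 2 + 6 * ((a2 : ℤ) - b2) ^ 2 := by
    rw [← ZMod.intCast_zmod_eq_zero_iff_dvd]
    push_cast
    have : (a1 : ZMod p) - b1 = c * (a2 - b2) := by linear_combination hE
    rw [this]
    linear_combination ((a2 : ZMod p) - b2) ^ 2 * hc
  obtain ⟨k, hk⟩ := hd
  refine ⟨a1 - b1, a2 - b2, k, ?_, ?_, by rw [hk]; ring⟩
  · have hpos : 0 < ((a1 : ℤ) - b1) ^ 2 + 6 * ((a2 : ℤ) - b2) ^ 2 := by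
      by_contra hn
      apply hab
      have e1 := sq_nonneg ((a1 : ℤ) - b1)
      have e2 := sq_nonneg ((a2 : ℤ) - b2)
      have f1 : (a1 : ℤ) - b1 = 0 := pow_eq_zero_iff (two_ne_zero) |>.1 (by linarith)
      have f2 : (a2 : ℤ) - b2 = 0 := pow_eq_zero_iff (two_ne_zero) |>.1 (by linarith)
      ext <;> simp only <;> omega
    rw [hk] at hpos
    have hp0 : (0 : ℤ) < p := by exact_mod_cast hp.pos
    exact pos_of_mul_pos_right hpos hp0.le
  · have b1' : ((a1 : ℤ) - b1) ^ 2 ≤ (s : ℤ) ^ 2 := sq_le_sq' (by omega) (by omega)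
    have b2' : ((a2 : ℤ) - b2) ^ 2 ≤ (s : ℤ) ^ 2 := sq_le_sq' (by omega) (by omega)
    have hs3' : (s : ℤ) ^ 2 < p := by rw [sq]; exact_mod_cast hs3
    have hp0 : (0 : ℤ) < p := by exact_mod_cast hp.pos
    have : (p : ℤ) * k < p * 7 := by rw [← hk]; linarith
    exact lt_of_mul_lt_mul_left this hp0.le

theorem sq_mod3 (x : ℤ) : x ^ 2 % 3 = 0 ∨ x ^ 2 % 3 = 1 := by
  rw [sq, Int.mul_emod]
  have : x % 3 = 0 ∨ x % 3 = 1 ∨ x % 3 = 2 := by omega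
  rcases this with h | h | h <;> rw [h] <;> norm_num

theorem exists_rep (h3 : p % 3 = 1) (c : ZMod p) (hc : c ^ 2 = -6) : ∃ x y : ℤ, (p : ℤ) = x ^ 2 + 6 * y ^ 2 := by
  obtain ⟨x, y, k, hk0, hk7, h⟩ := thue c hc
  have hx := sq_mod3 x
  have hy := sq_mod3 y
  have i2 : Prime (2 : ℤ) := Int.prime_two
  have i3 : Prime (3 : ℤ) := Int.prime_three
  interval_cases k
  · exact ⟨x, y, by linarith⟩
  · have : (2 : ℤ) ∣ x := i2.dvd_of_dvd_pow (n := 2) ⟨p - 3 * y ^ 2, by linarith⟩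
    obtain ⟨z, rfl⟩ := this
    have hz := sq_mod3 z
    exfalso
    ring_nf at h
    omega
  · have : (3 : ℤ) ∣ x := i3.dvd_of_dvd_pow (n := 2) ⟨p - 2 * y ^ 2, by linarith⟩
    obtain ⟨z, rfl⟩ := this
    exfalso
    ring_nf at h
    omega
  · have : (2 : ℤ) ∣ x := i2.dvd_of_dvd_pow (n := 2) ⟨2 * p - 3 * y ^ 2, by linarith⟩
    obtain ⟨z, rfl⟩ := this
    have : (2 : ℤ) ∣ y := i2.dvd_of_dvd_pow (n := 2) (by ring_nf at h; omega)
    obtain ⟨t, rfl⟩ := this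
    exact ⟨z, t, by linarith⟩
  · exfalso
    omega
  · have h1 : (2 : ℤ) ∣ x := i2.dvd_of_dvd_pow (n := 2) ⟨3 * p - 3 * y ^ 2, by linarith⟩
    have h2 : (3 : ℤ) ∣ x := i3.dvd_of_dvd_pow (n := 2) ⟨2 * p - 2 * y ^ 2, by linarith⟩
    obtain ⟨z, rfl⟩ : (6 : ℤ) ∣ x := by omega
    exact ⟨y, z, by linarith⟩

end final
theorem main6 (p : ℕ) [Fact p.Prime]
    (hp : p % 24 = 1 ∨ p % 24 = 7 ∨ p % 24 = 17 ∨ p % 24 = 23) :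
    ((p % 24 = 1 ∨ p % 24 = 7) →
      (∃ x y : ℤ, (p : ℤ) = x ^ 2 + 6 * y ^ 2) ∧
        ∀ x y : ℤ, (p : ℤ) = x ^ 2 + 6 * y ^ 2 →
          (∑ n ∈ Finset.range p, (A n : ZMod p) / (-8 : ZMod p) ^ n) = 4 * (x : ZMod p) ^ 2)
    ∧
    ((p % 24 = 17 ∨ p % 24 = 23) →
      (∑ n ∈ Finset.range p, (A n : ZMod p) / (-8 : ZMod p) ^ n) = 0) := by
  have hP : p.Prime := Fact.out
  have hp2 : p ≠ 2 := by rintro rfl; omega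
  have hp3 : p ≠ 3 := by rintro rfl; omega
  have h2 : (2 : ZMod p) ≠ 0 := by
    have := nat_ne (p := p) (a := 2) (by norm_num) (by intro q hq hd; have := (Nat.prime_dvd_prime_iff_eq hq Nat.prime_two).1 hd; omega)
    exact_mod_cast this
  have h3 : (3 : ZMod p) ≠ 0 := by
    have := nat_ne (p := p) (a := 3) (by norm_num) (by intro q hq hd; have := (Nat.prime_dvd_prime_iff_eq hq Nat.prime_three).1 hd; omega)
    exact_mod_cast this
  obtain ⟨r, hr⟩ : ∃ r : ZMod p, r ^ 2 = 2 := by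
    obtain ⟨r, hr⟩ := (ZMod.exists_sq_eq_two_iff hp2).2 (by omega)
    exact ⟨r, by rw [sq]; exact hr.symm⟩
  constructor
  · intro h
    obtain ⟨d, hd⟩ := neg3_of (p := p) (by omega)
    have hc : (r * d) ^ 2 = -6 := by
      rw [mul_pow, hr, hd]; norm_num
    refine ⟨exists_rep (by omega) _ hc, ?_⟩
    intro x y hxy
    have hA : fA r ≠ 0 := by
      intro h0
      rw [fA] at h0
      have := nat_ne (p := p) (a := 153) (by norm_num) (by
        intro q hq hd
        rw [show 153 = 3 ^ 2 * 17 by norm_num] at hd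
        rcases hq.dvd_mul.1 hd with hd | hd
        · have := (Nat.prime_dvd_prime_iff_eq hq Nat.prime_three).1 (hq.dvd_of_dvd_pow hd); omega
        · have := (Nat.prime_dvd_prime_iff_eq hq (by norm_num)).1 hd; omega)
      apply this
      push_cast
      linear_combination (-15 - 6 * r) * h0 + 36 * hr
    have hB : fB r ≠ 0 := by
      intro h0
      rw [fB] at h0
      have := nat_ne (p := p) (a := 184) (by norm_num) (by
        intro q hq hd
        rw [show 184 = 2 ^ 3 * 23 by norm_num] at hd
        rcases hq.dvd_mul.1 hd with hd | hd
        · have := (Nat.prime_dvd_prime_iff_eq hq Nat.prime_two).1 (hq.dvd_of_dvd_pow hd); omega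
        · have := (Nat.prime_dvd_prime_iff_eq hq (by norm_num)).1 hd; omega)
      apply this
      push_cast
      linear_combination (24 + 14 * r) * h0 + 196 * hr
    have hp7 : 7 ≤ p := by have := hP.two_le; omega
    have hm := main17 hp7 hr hc hA hB x y hxy
    have hm' := congrArg (Int.cast : ℤ → ZMod p) hm
    push_cast at hm'
    rw [S_final hp2 hp3 hr, ← hm']
    simp only [pow_half _ hp2]
  · intro h
    rw [S_final hp2 hp3 hr, main1723 hp2 hp3 hr, zero_pow two_ne_zero]
    rw [← pow_half _ hp2]
    have : quadraticChar (ZMod p) (-6) = -1 := by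
      rw [quadraticChar_neg_one_iff_not_isSquare]
      rintro ⟨c, hc⟩
      have hr0 : r ≠ 0 := by rintro rfl; apply h2; rw [← hr]; norm_num
      have := of_neg3 h2 h3 (c / r) (by
        rw [div_pow, hr, sq, ← hc]; field_simp; norm_num)
      omega
    rw [this]; simp

end DS

theorem stmt_6 (p : ℕ) [Fact p.Prime]
    (hp : p % 24 = 1 ∨ p % 24 = 7 ∨ p % 24 = 17 ∨ p % 24 = 23) :
    ((p % 24 = 1 ∨ p % 24 = 7) →
      (∃ x y : ℤ, (p : ℤ) = x ^ 2 + 6 * y ^ 2) ∧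
        ∀ x y : ℤ, (p : ℤ) = x ^ 2 + 6 * y ^ 2 →
          (∑ n ∈ Finset.range p, (A n : ZMod p) / (-8 : ZMod p) ^ n) = 4 * (x : ZMod p) ^ 2)
    ∧
    ((p % 24 = 17 ∨ p % 24 = 23) →
      (∑ n ∈ Finset.range p, (A n : ZMod p) / (-8 : ZMod p) ^ n) = 0) := by
  exact DS.main6 p hp
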